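/- arXiv:2012.15357 — 4 statements merged into one kernel-verified Lean document; each statement's English description precedes it below -/
import Mathlib

section
/- Let q be a prime power, t ≥ 1, and let f(x) = Σ_{j=0}^{k} a_j x^{q^j} ∈ F_{q^n}[x] be an F_q-linearized polynomial of q-degree k < n with a_t = 0 and a_0 ≠ 0. Set d = max{k, t}. If f is r-fat of index t with r > 0, then r > (q^n + 1)/q^{d²} − (2(d−1)·q^{d²}/(q^d − 1))·√(q^n) − 1. -/
section st_helpers
open Polynomial

section weights
variable {L : Type*} [Field L]

/-- weight at most `m` -/
def StWt (w m : ℕ) (g : L[X][X]) : Prop := ∀ i a, (g.coeff i).coeff a ≠ 0 → a + w * i ≤ m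

noncomputable def stHom (w : ℕ) : L[X][X] →ₐ[L] L[X][X][X] :=
  Polynomial.aevalAeval (C (C X) * X : L[X][X][X]) (C X * X ^ w)

lemma stHom_mono (w i a : ℕ) (c : L) :
    stHom w (monomial i (monomial a c)) = monomial (a + w * i) (monomial i (monomial a c)) := by
  have h1 : (monomial i (monomial a c) : L[X][X]) = C (C c) * (C X) ^ a * X ^ i := by
    rw [← C_mul_X_pow_eq_monomial, ← C_mul_X_pow_eq_monomial]
    simp
  have h2 : stHom w (C (C c) : L[X][X]) = C (C (C c)) := by
    have := (stHom w).commutes c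
    simpa [Polynomial.algebraMap_apply] using this
  have h3 : stHom w (C X : L[X][X]) = C (C X) * X := by
    simp [stHom]
  have h4 : stHom w (X : L[X][X]) = C X * X ^ w := by
    simp [stHom]
  have h5 : (monomial (a + w * i) (monomial i (monomial a c)) : L[X][X][X])
      = C (monomial i (monomial a c)) * X ^ (a + w * i) := by
    rw [C_mul_X_pow_eq_monomial]
  rw [h5, h1, map_mul, map_mul, map_pow, map_pow, h2, h3, h4]
  simp only [map_mul, map_pow]
  ring

lemma stHom_coeff (w : ℕ) (g : L[X][X]) (e i a : ℕ) :
    (((stHom w g).coeff e).coeff i).coeff a = if a + w * i = e then (g.coeff i).coeff a else 0 := by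
  induction g using Polynomial.induction_on' with
  | add p q hp hq =>
    simp only [map_add, coeff_add, hp, hq]
    split_ifs <;> simp
  | monomial n f =>
    induction f using Polynomial.induction_on' with
    | add p q hp hq =>
      simp only [map_add, coeff_add, hp, hq]
      split_ifs <;> simp
    | monomial b c =>
      rw [stHom_mono]
      simp only [coeff_monomial]
      by_cases h1 : n = i
      · subst h1
        by_cases h2 : b = a
        · subst h2
          split_ifs <;> simp_all
        · split_ifs <;> simp [coeff_monomial, h2]
      · split_ifs <;> simp [coeff_monomial, h1]

lemma stWt_iff (w m : ℕ) (g : L[X][X]) : StWt w m g ↔ (stHom w g).natDegree ≤ m := by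
  rw [Polynomial.natDegree_le_iff_coeff_eq_zero]
  constructor
  · intro h e he
    ext i a
    rw [stHom_coeff]
    split_ifs with h1
    · by_contra h2
      have := h i a (by simpa using h2)
      omega
    · simp
  · intro h i a h1
    by_contra h2
    have := h (a + w * i) (by omega)
    have h3 := stHom_coeff w g (a + w * i) i a
    rw [this] at h3
    simp at h3
    exact h1 h3.symm

lemma StWt.mul {w m n : ℕ} {g h : L[X][X]} (hg : StWt w m g) (hh : StWt w n h) :
    StWt w (m + n) (g * h) := by
  rw [stWt_iff] at *
  rw [map_mul]
  exact natDegree_mul_le.trans (by omega)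

lemma StWt.mono {w m n : ℕ} {g : L[X][X]} (hg : StWt w m g) (h : m ≤ n) : StWt w n g :=
  fun i a hia => (hg i a hia).trans h

lemma StWt.zero {w m : ℕ} : StWt w m (0 : L[X][X]) := by
  intro i a h; simp at h

lemma StWt.add {w m : ℕ} {g h : L[X][X]} (hg : StWt w m g) (hh : StWt w m h) :
    StWt w m (g + h) := by
  intro i a hia
  by_cases h1 : (g.coeff i).coeff a = 0
  · apply hh i a
    intro h2
    simp [h1, h2] at hia
  · exact hg i a h1

lemma StWt.neg {w m : ℕ} {g : L[X][X]} (hg : StWt w m g) :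
    StWt w m (-g) := by
  intro i a hia
  exact hg i a (by simpa using hia)

lemma StWt.sub {w m : ℕ} {g h : L[X][X]} (hg : StWt w m g) (hh : StWt w m h) :
    StWt w m (g - h) := by
  rw [sub_eq_add_neg]; exact hg.add hh.neg

lemma StWt.sum {ι : Type*} {w m : ℕ} (s : Finset ι) (g : ι → L[X][X])
    (h : ∀ i ∈ s, StWt w m (g i)) : StWt w m (∑ i ∈ s, g i) := by
  classical
  induction s using Finset.induction_on with
  | empty => simpa using StWt.zero
  | insert a s ha ih =>
    rw [Finset.sum_insert ha]
    exact (h a (by simp)).add (ih fun i hi => h i (by simp [hi]))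

lemma StWt.smul {w m : ℕ} {g : L[X][X]} (c : L) (hg : StWt w m g) : StWt w m (c • g) := by
  intro i a hia
  apply hg i a
  intro h
  simp [h] at hia

lemma stWt_monomial {w m i a : ℕ} (c : L) (h : a + w * i ≤ m) :
    StWt w m (monomial i (monomial a c) : L[X][X]) := by
  intro j b hjb
  by_cases h1 : i = j
  · subst h1
    by_cases h2 : a = b
    · subst h2; exact h
    · simp [coeff_monomial, h2] at hjb
  · simp [coeff_monomial, h1] at hjb

lemma stWt_mono' {w m i a : ℕ} (c : L) (h : a + w * i ≤ m) :
    StWt w m (C (C c * X ^ a) * X ^ i : L[X][X]) := by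
  rw [C_mul_X_pow_eq_monomial, C_mul_X_pow_eq_monomial]
  exact stWt_monomial c h

/-- every polynomial has some weight -/
lemma stWt_exists (w : ℕ) (g : L[X][X]) : ∃ m, StWt w m g :=
  ⟨(stHom w g).natDegree, (stWt_iff _ _ _).2 le_rfl⟩

lemma StWt.of_dvd {w : ℕ} {M R : L[X][X]} (hM : M.Monic) (hR : R.Monic)
    (h : StWt w (w * (M * R).natDegree) (M * R)) : StWt w (w * M.natDegree) M := by
  have key : ∀ g : L[X][X], g.Monic → w * g.natDegree ≤ (stHom w g).natDegree := by
    intro g hg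
    apply le_natDegree_of_ne_zero
    intro h0
    have := stHom_coeff w g (w * g.natDegree) g.natDegree 0
    rw [h0] at this
    simp [hg] at this
  rw [stWt_iff] at *
  have h1 := key R hR
  have h2 := key M hM
  have hne : ∀ g : L[X][X], g.Monic → stHom w g ≠ 0 := by
    intro g hg h0
    have := stHom_coeff w g (w * g.natDegree) g.natDegree 0
    rw [h0] at this
    simp [hg] at this
  rw [map_mul, natDegree_mul (hne M hM) (hne R hR), hM.natDegree_mul hR, mul_add] at h
  omega

lemma StWt.modByMonic {w m : ℕ} {M : L[X][X]} (hM : M.Monic) (hMw : StWt w (w * M.natDegree) M)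
    (g : L[X][X]) (hg : StWt w m g) : StWt w m (g %ₘ M) := by
  have key : ∀ N : ℕ, ∀ g : L[X][X], g.natDegree < N → StWt w m g →
      ∃ h, StWt w m h ∧ h.degree < M.degree ∧ M ∣ g - h := by
    intro N
    induction N with
    | zero => intro g hg; omega
    | succ N ih =>
      intro g hgN hg
      by_cases hlt : g.degree < M.degree
      · exact ⟨g, hg, hlt, by simp⟩
      push Not at hlt
      by_cases hg0 : g = 0
      · subst hg0; exact ⟨0, StWt.zero, by simpa [bot_lt_iff_ne_bot] using hM.ne_zero, by simp⟩
      have hle : M.natDegree ≤ g.natDegree := natDegree_le_natDegree hlt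
      set q : L[X][X] := C g.leadingCoeff * X ^ (g.natDegree - M.natDegree) with hq
      have hsub := Polynomial.div_wf_lemma ⟨hlt, hg0⟩ hM
      have hqw : StWt w m (M * q) := by
        by_cases hwle : w * M.natDegree ≤ m
        · have : StWt w (m - w * M.natDegree) q := by
            intro i a hia
            rw [hq, coeff_C_mul_X_pow] at hia
            split_ifs at hia with h1
            · have := hg g.natDegree a hia
              subst h1
              have h3 : w * (g.natDegree - M.natDegree) = w * g.natDegree - w * M.natDegree := Nat.mul_sub _ _ _
              have h4 : w * M.natDegree ≤ w * g.natDegree := Nat.mul_le_mul_left _ hle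
              omega
            · simp at hia
          exact (hMw.mul this).mono (by omega)
        · exfalso
          have : g.leadingCoeff ≠ 0 := leadingCoeff_ne_zero.2 hg0
          obtain ⟨a, ha⟩ : ∃ a, g.leadingCoeff.coeff a ≠ 0 := by
            by_contra hcon
            push Not at hcon
            exact this (by ext a; simpa using hcon a)
          have h1 := hg g.natDegree a ha
          have h4 : w * M.natDegree ≤ w * g.natDegree := Nat.mul_le_mul_left _ hle
          omega
      by_cases hz : g - M * q = 0
      · exact ⟨0, StWt.zero, by simpa [bot_lt_iff_ne_bot] using hM.ne_zero, ⟨q, by rw [sub_zero]; exact sub_eq_zero.1 hz⟩⟩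
      obtain ⟨h, hh1, hh2, hh3⟩ := ih (g - M * q) (by
        have := natDegree_lt_natDegree hz hsub
        omega) (hg.sub hqw)
      refine ⟨h, hh1, hh2, ?_⟩
      have : g - h = (g - M * q - h) + M * q := by ring
      rw [this]
      exact dvd_add hh3 (dvd_mul_right _ _)
  obtain ⟨h, hh1, hh2, hh3⟩ := key (g.natDegree + 1) g (by omega) hg
  have h1 : g %ₘ M = h := by
    have h2 : (g - h) %ₘ M = 0 := (modByMonic_eq_zero_iff_dvd hM).2 hh3
    rw [sub_modByMonic, (modByMonic_eq_self_iff hM).2 hh2] at h2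
    exact sub_eq_zero.1 h2
  rw [h1]; exact hh1

end weights


section vspace
variable {L : Type*} [Field L]

/-- polynomials of `Y`-degree `< D` and weight at most `m` -/
def stV (L : Type*) [Field L] (D w m : ℕ) : Submodule L L[X][X] where
  carrier := {g | StWt w m g ∧ ∀ i, D ≤ i → g.coeff i = 0}
  zero_mem' := ⟨StWt.zero, by simp⟩
  add_mem' := fun ha hb => ⟨ha.1.add hb.1, fun i hi => by simp [ha.2 i hi, hb.2 i hi]⟩
  smul_mem' := fun c _ ha => ⟨ha.1.smul c, fun i hi => by simp [ha.2 i hi]⟩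

lemma mem_stV {D w m : ℕ} {g : L[X][X]} :
    g ∈ stV L D w m ↔ StWt w m g ∧ ∀ i, D ≤ i → g.coeff i = 0 := Iff.rfl

abbrev stI (D w m : ℕ) : Type := Σ i : Fin D, Fin (m + 1 - w * i)

noncomputable def stPoly (D w m : ℕ) (c : stI D w m → L) : L[X][X] :=
  ∑ x : stI D w m, monomial x.1.1 (monomial x.2.1 (c x))

lemma stPoly_coeff (D w m : ℕ) (c : stI D w m → L) (x : stI D w m) :
    ((stPoly D w m c).coeff x.1.1).coeff x.2.1 = c x := by
  classical
  rw [stPoly, finsetSum_coeff, finsetSum_coeff, Finset.sum_eq_single x]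
  · simp
  · rintro ⟨i, a⟩ _ hne
    obtain ⟨j, b⟩ := x
    simp only [coeff_monomial]
    split_ifs with h
    · have : i = j := Fin.ext h
      subst this
      rw [coeff_monomial, if_neg]
      intro h2
      exact hne (by rw [Fin.ext h2])
    · simp
  · simp

lemma stPoly_mem (D w m : ℕ) (c : stI D w m → L) : stPoly D w m c ∈ stV L D w m := by
  refine Submodule.sum_mem _ ?_
  rintro ⟨i, a⟩ _
  refine ⟨stWt_monomial _ (by have := a.2; omega), fun j hj => ?_⟩
  rw [coeff_monomial, if_neg]
  have := i.2
  simp only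
  omega

noncomputable def stEquiv (L : Type*) [Field L] (D w m : ℕ) : stV L D w m ≃ₗ[L] (stI D w m → L) where
  toFun g := fun x => (g.1.coeff x.1.1).coeff x.2.1
  map_add' := by intro g h; ext x; simp
  map_smul' := by intro g h; ext x; simp
  invFun c := ⟨stPoly D w m c, stPoly_mem D w m c⟩
  left_inv := by
    intro g
    apply Subtype.ext
    ext i a
    by_cases h : i < D ∧ a + w * i ≤ m
    · have := stPoly_coeff D w m (fun x => (g.1.coeff x.1.1).coeff x.2.1) ⟨⟨i, h.1⟩, ⟨a, by simp only; omega⟩⟩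
      simpa using this
    · have key : ∀ g ∈ stV L D w m, (g.coeff i).coeff a = 0 := by
        intro g hg
        by_contra hne
        have h1 := hg.1 i a hne
        apply h
        refine ⟨?_, h1⟩
        by_contra h2
        exact hne (by rw [hg.2 i (by omega)]; simp)
      rw [key _ g.2]
      exact key _ (stPoly_mem _ _ _ _)
  right_inv := by
    intro c; ext x
    exact stPoly_coeff D w m c x

instance (D w m : ℕ) : FiniteDimensional L (stV L D w m) :=
  LinearEquiv.finiteDimensional (stEquiv L D w m).symm

lemma stV_finrank (D w m : ℕ) :
    Module.finrank L (stV L D w m) = ∑ i : Fin D, (m + 1 - w * i) := by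
  rw [(stEquiv L D w m).finrank_eq]
  simp [stI]

lemma stV_finrank_le (D w m : ℕ) : Module.finrank L (stV L D w m) ≤ D * (m + 1) := by
  rw [stV_finrank]
  calc _ ≤ ∑ i : Fin D, (m + 1) := Finset.sum_le_sum fun i _ => by omega
    _ = _ := by simp

lemma stV_finrank_add (D w m κ : ℕ) :
    Module.finrank L (stV L D w (m + κ)) ≤ Module.finrank L (stV L D w m) + D * κ := by
  rw [stV_finrank, stV_finrank]
  calc _ ≤ ∑ i : Fin D, ((m + 1 - w * i) + κ) := Finset.sum_le_sum fun i _ => by omega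
    _ = _ := by rw [Finset.sum_add_distrib]; simp

lemma stV_mod {w m : ℕ} {M : L[X][X]} (hM : M.Monic) (hMw : StWt w (w * M.natDegree) M)
    (g : L[X][X]) (hg : StWt w m g) : g %ₘ M ∈ stV L M.natDegree w m := by
  refine ⟨StWt.modByMonic hM hMw g hg, fun i hi => ?_⟩
  apply coeff_eq_zero_of_degree_lt
  refine (degree_modByMonic_lt g hM).trans_le ?_
  rw [degree_eq_natDegree hM.ne_zero]
  exact_mod_cast hi

lemma stV_mono {D w m n : ℕ} (h : m ≤ n) : stV L D w m ≤ stV L D w n :=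
  fun _ hg => ⟨hg.1.mono h, hg.2⟩

/-- the Bezout-type bound -/
lemma st_bezout {W : Type*} [AddCommGroup W] [Module L W] [FiniteDimensional L W]
    {w κ : ℕ} {M Φ : L[X][X]} (hM : M.Monic) (hMw : StWt w (w * M.natDegree) M)
    (hΦ : StWt w κ Φ) {N : L[X]} (hN : N ≠ 0) {a b : L[X][X]} (hab : a * M + b * Φ = C N)
    (π : L[X][X] →ₗ[L] W) (hπ : Function.Surjective π) (hπM : ∀ h, π (h * M) = 0)
    (hπΦ : ∀ h, π (h * Φ) = 0) : Module.finrank L W ≤ M.natDegree * κ := by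
  classical
  set D := M.natDegree with hD
  have hmod : ∀ g, π (g %ₘ M) = π g := by
    intro g
    have := modByMonic_add_div g M
    conv_rhs => rw [← this]
    rw [map_add, mul_comm, hπM, add_zero]
  -- find m
  obtain ⟨m, hm⟩ : ∃ m, ∀ x : W, ∃ g ∈ stV L D w m, π g = x := by
    let B := Module.finBasis L W
    choose g hg using fun i => hπ (B i)
    choose n hn using fun i => stWt_exists w (g i)
    refine ⟨Finset.univ.sup n, fun x => ?_⟩
    refine ⟨∑ i, B.repr x i • (g i %ₘ M), ?_, ?_⟩
    · refine Submodule.sum_mem _ fun i _ => Submodule.smul_mem _ _ ?_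
      exact stV_mod hM hMw _ ((hn i).mono (Finset.le_sup (f := n) (Finset.mem_univ i)))
    · rw [map_sum]
      simp only [map_smul, hmod, hg]
      exact B.sum_repr x
  -- multiplication map
  have hTmem : ∀ g ∈ stV L D w m, (g * Φ) %ₘ M ∈ stV L D w (m + κ) := fun g hg =>
    stV_mod hM hMw _ (hg.1.mul hΦ)
  let T : stV L D w m →ₗ[L] stV L D w (m + κ) :=
    { toFun := fun g => ⟨(g.1 * Φ) %ₘ M, hTmem g.1 g.2⟩
      map_add' := by
        intro g h; apply Subtype.ext; simp [add_mul, add_modByMonic]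
      map_smul' := by
        intro c g; apply Subtype.ext
        have : c • g.1 * Φ = (C c) • (g.1 * Φ) := by
          rw [smul_mul_assoc]
          ext i j; simp
        simp only [Submodule.coe_smul, RingHom.id_apply]
        rw [this, smul_modByMonic]
        ext i j; simp }
  have hTinj : Function.Injective T := by
    rw [injective_iff_map_eq_zero]
    intro g hg
    have h1 : (g.1 * Φ) %ₘ M = 0 := congrArg Subtype.val hg
    rw [modByMonic_eq_zero_iff_dvd hM] at h1
    have h2 : M ∣ g.1 * C N := by
      rw [← hab, mul_add]
      refine dvd_add (by rw [← mul_assoc]; exact dvd_mul_left _ _) ?_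
      have : g.1 * (b * Φ) = b * (g.1 * Φ) := by ring
      rw [this]; exact h1.mul_left b
    have h3 : g.1 * C N = 0 := by
      by_contra hne
      apply hM.not_dvd_of_degree_lt hne _ h2
      rw [degree_eq_natDegree hM.ne_zero, degree_lt_iff_coeff_zero]
      intro i hi
      rw [coeff_mul_C, g.2.2 i hi, zero_mul]
    apply Subtype.ext
    rcases mul_eq_zero.1 h3 with h | h
    · exact h
    · exact absurd (by simpa using h) hN
  let π' : stV L D w (m + κ) →ₗ[L] W := π.comp (stV L D w (m + κ)).subtype
  have hπ' : Function.Surjective π' := by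
    intro x
    obtain ⟨g, hg, hgx⟩ := hm x
    exact ⟨⟨g, stV_mono (by omega) hg⟩, hgx⟩
  have hle : LinearMap.range T ≤ LinearMap.ker π' := by
    rintro _ ⟨g, rfl⟩
    show π ((g.1 * Φ) %ₘ M) = 0
    rw [hmod, hπΦ]
  have e1 := LinearMap.finrank_range_add_finrank_ker (K := L) (V := stV L D w (m + κ)) (V₂ := W) π'
  have : Module.Finite L (LinearMap.ker π') :=
    FiniteDimensional.finiteDimensional_submodule (K := L) (V := stV L D w (m + κ)) _
  have e2 := Submodule.finrank_mono hle
  rw [LinearMap.finrank_range_of_inj hTinj] at e2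
  rw [LinearMap.range_eq_top.2 hπ', finrank_top] at e1
  have e3 := stV_finrank_add (L := L) D w m κ
  omega

end vspace


section claimA
variable {K : Type*} [Field K]

lemma st_coprime {M Φ : K[X][X]} (hM : M.Monic) (hirr : Irreducible M) (h : ¬ M ∣ Φ) :
    ∃ N : K[X], N ≠ 0 ∧ ∃ a b : K[X][X], a * M + b * Φ = C N := by
  have hprime : Prime M := hirr.prime
  have : IsDomain (AdjoinRoot M) := AdjoinRoot.isDomain_of_prime hprime
  have hne : AdjoinRoot.mk M Φ ≠ 0 := by
    rwa [Ne, AdjoinRoot.mk_eq_zero]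
  have : Module.Finite K[X] (AdjoinRoot M) := hM.finite_adjoinRoot
  have hint : IsIntegral K[X] (AdjoinRoot.mk M Φ) := Algebra.IsIntegral.isIntegral _
  have h1 := Ideal.comap_ne_bot_of_integral_mem (R := K[X]) hne
    (Ideal.mem_span_singleton_self (AdjoinRoot.mk M Φ)) hint
  obtain ⟨N, hN, hN0⟩ := Submodule.exists_mem_ne_zero_of_ne_bot h1
  refine ⟨N, hN0, ?_⟩
  rw [Ideal.mem_comap, Ideal.mem_span_singleton'] at hN
  obtain ⟨c, hc⟩ := hN
  obtain ⟨b, rfl⟩ := AdjoinRoot.mk_surjective c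
  rw [AdjoinRoot.algebraMap_eq, ← AdjoinRoot.mk_C, ← map_mul, AdjoinRoot.mk_eq_mk] at hc
  obtain ⟨a, ha⟩ := hc
  refine ⟨-a, b, ?_⟩
  linear_combination ha

noncomputable def stEv (s0 : K) (η : PowerSeries K) : K[X][X] →ₐ[K] PowerSeries K :=
  Polynomial.aevalAeval (PowerSeries.C s0 + PowerSeries.X) η

lemma stEv_mono (s0 : K) (η : PowerSeries K) (c : K) (a i : ℕ) :
    stEv s0 η (C (C c * X ^ a) * X ^ i)
      = PowerSeries.C c * (PowerSeries.C s0 + PowerSeries.X) ^ a * η ^ i := by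
  have h1 : stEv s0 η (C (C c)) = PowerSeries.C c := by
    have := (stEv s0 η).commutes c
    simpa [Polynomial.algebraMap_apply] using this
  have h3 : stEv s0 η (C X : K[X][X]) = PowerSeries.C s0 + PowerSeries.X := by
    simp [stEv]
  have h4 : stEv s0 η (X : K[X][X]) = η := by
    simp [stEv]
  rw [map_mul, C_mul, map_mul, C_pow, map_pow, map_pow, h1, h3, h4]

lemma st_hensel (M : K[X][X]) (hM : M.Monic) (s0 y0 : K) (h0 : M.evalEval s0 y0 = 0)
    (h1 : (derivative M).evalEval s0 y0 ≠ 0) : ∃ η : PowerSeries K, stEv s0 η M = 0 := by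
  let φ : K[X] →ₐ[K] PowerSeries K := aeval (PowerSeries.C s0 + PowerSeries.X)
  have hφ : ∀ g : K[X], PowerSeries.constantCoeff (φ g) = g.eval s0 := by
    intro g
    have : (PowerSeries.constantCoeff (R := K)).comp (φ : K[X] →+* PowerSeries K) = evalRingHom s0 := by
      ext
      · simp [φ]
      · simp [φ]
    exact congrArg (fun f => f g) this
  have hev : ∀ g : K[X][X], PowerSeries.constantCoeff
      ((g.map (φ : K[X] →+* PowerSeries K)).eval (PowerSeries.C y0)) = g.evalEval s0 y0 := by
    intro g
    rw [eval_map, hom_eval₂]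
    have : (PowerSeries.constantCoeff (R := K)).comp (φ : K[X] →+* PowerSeries K) = evalRingHom s0 := by
      ext
      · simp [φ]
      · simp [φ]
    rw [this, eval₂_evalRingHom]
    simp
  obtain ⟨η, hη, -⟩ := HenselianRing.is_henselian (R := PowerSeries K)
    (I := Ideal.span {PowerSeries.X}) (M.map (φ : K[X] →+* PowerSeries K)) (hM.map _)
    (PowerSeries.C y0) (by
      rw [Ideal.mem_span_singleton, PowerSeries.X_dvd_iff, hev, h0]) (by
      apply IsUnit.map
      rw [PowerSeries.isUnit_iff_constantCoeff, derivative_map, hev]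
      exact isUnit_iff_ne_zero.2 h1)
  refine ⟨η, ?_⟩
  rw [IsRoot, eval_map] at hη
  rw [← hη]
  have hh : (stEv s0 η : K[X][X] →+* PowerSeries K) = eval₂RingHom (φ : K[X] →+* PowerSeries K) η := by
    ext
    · simp [stEv, φ]
    · simp [stEv, φ]
    · simp [stEv]
  exact congrArg (fun f => f M) hh

lemma st_order {w κ o : ℕ} {M : K[X][X]} (hM : M.Monic) (hirr : Irreducible M)
    (hMw : StWt w (w * M.natDegree) M) (s0 : K) (η : PowerSeries K) (hη : stEv s0 η M = 0)
    (g : K[X][X]) (hg : g ∈ stV K M.natDegree w κ) (hg0 : g ≠ 0)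
    (ho : PowerSeries.X ^ o ∣ stEv s0 η g) : o ≤ M.natDegree * κ := by
  have hnd : ¬ M ∣ g := by
    apply hM.not_dvd_of_degree_lt hg0
    rw [degree_eq_natDegree hM.ne_zero, degree_lt_iff_coeff_zero]
    exact hg.2
  obtain ⟨N, hN, a, b, hab⟩ := st_coprime hM hirr hnd
  let π : K[X][X] →ₗ[K] (Fin o → K) :=
    LinearMap.pi fun i => (PowerSeries.coeff (R := K) i.1).comp (stEv s0 η).toLinearMap
  have hπ : ∀ g i, π g i = PowerSeries.coeff (R := K) i.1 (stEv s0 η g) := fun _ _ => rfl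
  have := st_bezout (W := Fin o → K) hM hMw hg.1 hN hab π ?_ ?_ ?_
  · simpa using this
  · rw [← LinearMap.range_eq_top, eq_top_iff, ← (Pi.basisFun K (Fin o)).span_eq, Submodule.span_le]
    rintro _ ⟨i, rfl⟩
    refine ⟨(C (X - C s0)) ^ i.1, ?_⟩
    ext j
    rw [hπ, map_pow]
    have : stEv s0 η (C (X - C s0)) = PowerSeries.X := by
      simp [stEv]
    rw [this, PowerSeries.coeff_X_pow]
    simp [Pi.single_apply, Fin.ext_iff]
  · intro h
    ext i
    rw [hπ, map_mul, hη]; simp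
  · intro h
    ext i
    rw [hπ, map_mul]
    have : PowerSeries.X ^ o ∣ stEv s0 η h * stEv s0 η g := ho.mul_left _
    rw [PowerSeries.X_pow_dvd_iff] at this
    simpa using this i.1 i.2

end claimA


section claimB
variable {K : Type*} [Field K]

noncomputable def stG (D A : ℕ) (c : Fin D × Fin (A + 1) → K) : K[X][X] :=
  ∑ x, C (C (c x) * X ^ (x.2 : ℕ)) * X ^ (x.1 : ℕ)

lemma stG_coeff (D A : ℕ) (c : Fin D × Fin (A + 1) → K) (x : Fin D × Fin (A + 1)) :
    ((stG D A c).coeff x.1).coeff x.2 = c x := by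
  classical
  rw [stG, finsetSum_coeff, finsetSum_coeff, Finset.sum_eq_single x]
  · rw [C_mul_X_pow_eq_monomial, C_mul_X_pow_eq_monomial]; simp
  · rintro ⟨i, a⟩ _ hne
    obtain ⟨j, b⟩ := x
    rw [C_mul_X_pow_eq_monomial, C_mul_X_pow_eq_monomial]
    simp only [coeff_monomial]
    split_ifs with h
    · rw [coeff_monomial, if_neg]
      intro h2
      exact hne (by rw [Fin.ext h, Fin.ext h2])
    · simp
  · simp

lemma stG_ne (D A : ℕ) (c : Fin D × Fin (A + 1) → K) (hc : c ≠ 0) : stG D A c ≠ 0 := by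
  intro h
  apply hc
  ext x
  rw [← stG_coeff D A c x, h]; simp

lemma stG_mem {D A w κ : ℕ} (hκ : A + w * (D - 1) ≤ κ) (c : Fin D × Fin (A + 1) → K) :
    stG D A c ∈ stV K D w κ := by
  refine Submodule.sum_mem _ ?_
  rintro ⟨i, a⟩ _
  refine ⟨stWt_mono' _ ?_, fun j hj => ?_⟩
  · have := a.2
    have h2 := i.2
    have : w * i ≤ w * (D - 1) := Nat.mul_le_mul_left _ (by omega)
    simp only
    omega
  · rw [C_mul_X_pow_eq_monomial, coeff_monomial, if_neg]
    have := i.2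
    simp only
    omega

abbrev stJ (D A L : ℕ) : Type := (Fin D × Fin (A + 1)) × (Fin D × Fin (L + 1))

noncomputable def stPhi (D A L R : ℕ) (γ : stJ D A L → K) : K[X][X] :=
  ∑ x : stJ D A L, C (C (γ x ^ R) * X ^ ((x.1.2 : ℕ) + R * (x.2.2 : ℕ))) *
    X ^ ((x.1.1 : ℕ) + R * (x.2.1 : ℕ))

lemma stPhi_wt {D A L R w : ℕ} (γ : stJ D A L → K) :
    StWt w (A + w * (D - 1) + R * (L + w * (D - 1))) (stPhi D A L R γ) := by
  apply StWt.sum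
  rintro ⟨⟨i, a⟩, ⟨j, l⟩⟩ _
  apply stWt_mono'
  simp only
  have h1 : w * i ≤ w * (D - 1) := Nat.mul_le_mul_left _ (by omega)
  have h2 : w * j ≤ w * (D - 1) := Nat.mul_le_mul_left _ (by omega)
  have h3 : R * (l + w * j) ≤ R * (L + w * (D - 1)) := Nat.mul_le_mul_left _ (by omega)
  have h4 : R * (l + w * j) = R * l + w * (R * j) := by ring
  rw [Nat.mul_add w]
  omega

lemma stEv_phi (p v : ℕ) [Fact p.Prime] [CharP K p] {D A L : ℕ} (γ : stJ D A L → K) (s0 : K)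
    (η : PowerSeries K) : stEv s0 η (stPhi D A L (p ^ v) γ) =
      ∑ x : Fin D × Fin (A + 1), (PowerSeries.C s0 + PowerSeries.X) ^ (x.2 : ℕ) * η ^ (x.1 : ℕ) *
        (stEv s0 η (stG D L fun y => γ (x, y))) ^ p ^ v := by
  have : ExpChar (PowerSeries K) p := by
    have : CharP (PowerSeries K) p := charP_of_injective_algebraMap (algebraMap K _).injective p
    exact ExpChar.prime (Fact.out)
  rw [stPhi, map_sum, Fintype.sum_prod_type]
  refine Finset.sum_congr rfl fun x _ => ?_
  rw [stG, map_sum, sum_pow_char_pow, Finset.mul_sum]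
  refine Finset.sum_congr rfl fun y _ => ?_
  rw [stEv_mono, stEv_mono, map_pow]
  ring

lemma st_notdvd (p v : ℕ) [Fact p.Prime] [CharP K p] {w κ D A L : ℕ} {M : K[X][X]} (hM : M.Monic)
    (hirr : Irreducible M) (hD : M.natDegree = D)
    (hMw : StWt w (w * M.natDegree) M) (s0 : K) (η : PowerSeries K) (hη : stEv s0 η M = 0)
    (hκ : A + w * (D - 1) ≤ κ) (hv : D * κ < p ^ v)
    (γ : stJ D A L → K) (hγ : γ ≠ 0) : ¬ M ∣ stPhi D A L (p ^ v) γ := by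
  intro hdvd
  have h0 : stEv s0 η (stPhi D A L (p ^ v) γ) = 0 := by
    obtain ⟨c, hc⟩ := hdvd
    rw [hc, map_mul, hη, zero_mul]
  rw [stEv_phi] at h0
  set θ : Fin D × Fin (A + 1) → PowerSeries K := fun x => stEv s0 η (stG D L fun y => γ (x, y)) with hθ
  have hex : ∃ k, ∃ x, ¬ PowerSeries.X ^ k ∣ θ x := by
    by_contra hno
    push Not at hno
    apply hγ
    ext ⟨x, y⟩
    by_contra hne
    have := st_order hM hirr hMw s0 η hη (stG D L fun y => γ (x, y)) (by rw [hD]; exact stG_mem le_rfl _)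
      (stG_ne _ _ _ (fun h => hne (congrFun h y))) (hno (D * (L + w * (D - 1)) + 1) x)
    rw [hD] at this
    omega
  classical
  obtain ⟨x0, hx0⟩ := Nat.find_spec hex
  have hmin := fun m hm => Nat.find_min (m := m) hex hm
  set k := Nat.find hex with hk
  obtain ⟨k', hk'⟩ : ∃ k', k = k' + 1 := by
    cases hkk : k with
    | zero => rw [hkk] at hx0; simp at hx0
    | succ n => exact ⟨n, rfl⟩
  have hall := hmin k' (by omega)
  push Not at hall
  choose τ hτ using hall
  have hτ0 : PowerSeries.constantCoeff (τ x0) ≠ 0 := by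
    intro h
    rw [← PowerSeries.X_dvd_iff] at h
    apply hx0
    rw [hτ x0, hk', pow_succ]
    exact mul_dvd_mul_left _ h
  have h1 : ∑ x : Fin D × Fin (A + 1), (PowerSeries.C s0 + PowerSeries.X) ^ (x.2 : ℕ) * η ^ (x.1 : ℕ) *
        (τ x) ^ p ^ v = 0 := by
    have : (PowerSeries.X ^ k') ^ p ^ v * ∑ x : Fin D × Fin (A + 1), (PowerSeries.C s0 + PowerSeries.X) ^ (x.2 : ℕ) * η ^ (x.1 : ℕ) *
        (τ x) ^ p ^ v = 0 := by
      rw [← h0, Finset.mul_sum]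
      refine Finset.sum_congr rfl fun x _ => ?_
      change _ = _ * θ x ^ p ^ v
      rw [hτ x, mul_pow]; ring
    rcases mul_eq_zero.1 this with h | h
    · exact absurd h (pow_ne_zero _ (pow_ne_zero _ PowerSeries.X_ne_zero))
    · exact h
  have hch : ExpChar (PowerSeries K) p := by
    have : CharP (PowerSeries K) p := charP_of_injective_algebraMap (algebraMap K _).injective p
    exact ExpChar.prime (Fact.out)
  set c : Fin D × Fin (A + 1) → K := fun x => (PowerSeries.constantCoeff (τ x)) ^ p ^ v with hc
  have h2 : PowerSeries.X ^ p ^ v ∣ stEv s0 η (stG D A c) := by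
    rw [← dvd_neg, ← zero_sub, ← h1, stG, map_sum, ← Finset.sum_sub_distrib]
    refine Finset.dvd_sum fun x _ => ?_
    rw [stEv_mono, hc, map_pow]
    have : PowerSeries.X ^ p ^ v ∣ (τ x - PowerSeries.C (PowerSeries.constantCoeff (τ x))) ^ p ^ v := by
      apply pow_dvd_pow_of_dvd
      rw [PowerSeries.X_dvd_iff]; simp
    rw [sub_pow_expChar_pow] at this
    have h3 := this.mul_left ((PowerSeries.C s0 + PowerSeries.X) ^ (x.2 : ℕ) * η ^ (x.1 : ℕ))
    convert h3 using 1
    ring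
  have := st_order hM hirr hMw s0 η hη (stG D A c) (by rw [hD]; exact stG_mem hκ _) (stG_ne _ _ _ (fun h => by
    have := congrFun h x0
    simp only [hc, Pi.zero_apply] at this
    exact hτ0 (pow_eq_zero_iff (pow_ne_zero _ (Fact.out : p.Prime).ne_zero) |>.1 this))) h2
  rw [hD] at this
  omega

/-- iterated quotients -/
noncomputable def stE (M : K[X][X]) (j : ℕ) : K[X][X] := divX^[j] M

lemma stE_coeff (M : K[X][X]) (j i : ℕ) : (stE M j).coeff i = M.coeff (i + j) := by
  induction j generalizing i with
  | zero => simp [stE]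
  | succ j ih =>
    rw [stE, Function.iterate_succ_apply', coeff_divX]
    change (stE M j).coeff (i + 1) = _
    rw [ih]; congr 1; ring

lemma stE_zero (M : K[X][X]) : stE M 0 = M := rfl

lemma stE_succ (M : K[X][X]) (j : ℕ) : stE M j = X * stE M (j + 1) + C (M.coeff j) := by
  ext1 i
  rw [stE_coeff]
  cases i with
  | zero => simp
  | succ i => simp [stE_coeff]; congr 1; ring

lemma stE_last (M : K[X][X]) (hM : M.Monic) : stE M M.natDegree = 1 := by
  ext1 i
  rw [stE_coeff, coeff_one]
  split_ifs with h
  · subst h; rw [zero_add]; exact hM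
  · exact coeff_eq_zero_of_natDegree_lt (by omega)

lemma stE_wt {w m : ℕ} {M : K[X][X]} (hMw : StWt w m M) (j : ℕ) :
    StWt w (m - w * j) (stE M j) := by
  intro i a h
  rw [stE_coeff] at h
  have := hMw _ _ h
  rw [mul_add] at this
  omega

lemma stE_sum {F : Type*} [CommRing F] (φ : K[X][X] →+* F) (M : K[X][X]) (y' : F) (D : ℕ) :
    (y' - φ X) * ∑ j ∈ Finset.range D, φ (stE M (j + 1)) * y' ^ j
      = φ (stE M D) * y' ^ D + ∑ j ∈ Finset.range D, φ (C (M.coeff j)) * y' ^ j - φ M := by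
  induction D with
  | zero => simp [stE_zero]
  | succ D ih =>
    rw [Finset.sum_range_succ, mul_add, ih, Finset.sum_range_succ]
    have := congrArg φ (stE_succ M D)
    rw [map_add, map_mul] at this
    rw [this]; ring

lemma stV_pi_finrank (N D w m : ℕ) :
    Module.finrank K (Fin N → stV K D w m) ≤ N * (D * (m + 1)) := by
  have e := (LinearEquiv.piCongrRight (R := K) fun _ : Fin N => stEquiv K D w m).finrank_eq
  rw [e]
  have h := stV_finrank_le (L := K) D w m
  rw [(stEquiv K D w m).finrank_eq, Module.finrank_fintype_fun_eq_card] at h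
  rw [Module.finrank_pi_fintype]
  simp only [Module.finrank_fintype_fun_eq_card, Finset.sum_const, Finset.card_univ,
    Fintype.card_fin, smul_eq_mul]
  exact Nat.mul_le_mul_left _ h

lemma st_exists_ker {ι : Type*} [Fintype ι] {N D w m : ℕ}
    (T : (ι → K) →ₗ[K] (Fin N → stV K D w m)) (h : N * (D * (m + 1)) < Fintype.card ι) :
    ∃ γ, γ ≠ 0 ∧ T γ = 0 := by
  by_contra hno
  push Not at hno
  have hinj : Function.Injective T := by
    rw [injective_iff_map_eq_zero]
    intro γ hγ
    by_contra h1
    exact hno γ h1 hγ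
  have hf : Module.Finite K (Fin N → stV K D w m) :=
    Module.Finite.equiv (LinearEquiv.piCongrRight (R := K) fun _ : Fin N => stEquiv K D w m).symm
  have h1 := LinearMap.finrank_le_finrank_of_injective hinj
  rw [Module.finrank_fintype_fun_eq_card] at h1
  have := stV_pi_finrank (K := K) N D w m
  omega

set_option maxHeartbeats 1000000 in
lemma st_lin {w D A L P m : ℕ} {M : K[X][X]} (hM : M.Monic) (hD : M.natDegree = D)
    (hMw : StWt w (w * D) M) (hm : P * (A + w * (D - 1)) + L + w * (D - 1) ≤ m) 
    (hdim : (D - 1) * (D * (m + 1)) < D * (A + 1) * (D * (L + 1))) :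
    ∃ (γ : stJ D A L → K) (G : ℕ → K[X][X]), γ ≠ 0 ∧
      (∀ j : Fin D, G j = ∑ x : Fin D × Fin (A + 1), ∑ l : Fin (L + 1),
        C (C (γ (x, (j, l))) * X ^ (P * x.2 + l)) * X ^ (P * x.1)) ∧
      ∀ j, j < D → M ∣ G j - G (D - 1) * stE M (j + 1) := by
  classical
  let g : (stJ D A L → K) → ℕ → K[X][X] := fun γ j => if h : j < D then
    ∑ x : Fin D × Fin (A + 1), ∑ l : Fin (L + 1),
        C (C (γ (x, (⟨j, h⟩, l))) * X ^ (P * x.2 + l)) * X ^ (P * x.1) else 0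
  have gadd : ∀ γ γ' j, g (γ + γ') j = g γ j + g γ' j := by
    intro γ γ' j
    simp only [g]
    split_ifs with h
    · simp only [← Finset.sum_add_distrib, Pi.add_apply, C_add, add_mul]
    · simp
  have gsmul : ∀ (c : K) γ j, g (c • γ) j = C (C c) * g γ j := by
    intro c γ j
    simp only [g]
    split_ifs with h
    · simp only [Finset.mul_sum, Pi.smul_apply, smul_eq_mul, C_mul, mul_assoc]
    · simp
  have gwt : ∀ γ j, StWt w (P * (A + w * (D - 1)) + L) (g γ j) := by
    intro γ j
    simp only [g]
    split_ifs with h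
    · apply StWt.sum
      rintro ⟨i, a⟩ _
      apply StWt.sum
      intro l _
      apply stWt_mono'
      simp only
      have h1 : w * i ≤ w * (D - 1) := Nat.mul_le_mul_left _ (by omega)
      have h3 : P * (a + w * i) ≤ P * (A + w * (D - 1)) := Nat.mul_le_mul_left _ (by omega)
      have h4 : P * (a + w * i) = P * a + w * (P * i) := by ring
      omega
    · exact StWt.zero
  have gdef : ∀ γ (j : Fin D), g γ j = ∑ x : Fin D × Fin (A + 1), ∑ l : Fin (L + 1),
        C (C (γ (x, (j, l))) * X ^ (P * x.2 + l)) * X ^ (P * x.1) := by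
    intro γ j
    simp only [g, j.2, dite_true]
  clear_value g
  have hwt : ∀ γ j, StWt w m (g γ j - g γ (D - 1) * stE M (j + 1)) := by
    intro γ j
    refine StWt.sub ((gwt γ j).mono (by omega)) (((gwt γ (D - 1)).mul (stE_wt hMw (j + 1))).mono ?_)
    have : w * D - w * (j + 1) ≤ w * (D - 1) := by
      rw [← Nat.mul_sub]; exact Nat.mul_le_mul_left _ (by omega)
    omega
  obtain ⟨T, hT⟩ : ∃ T : (stJ D A L → K) →ₗ[K] (Fin (D - 1) → stV K D w m), ∀ γ j,
      (T γ j).1 = (g γ j - g γ (D - 1) * stE M (j + 1)) %ₘ M := by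
    refine ⟨LinearMap.mk (AddHom.mk (fun γ j => ⟨(g γ j - g γ (D - 1) * stE M (j + 1)) %ₘ M, by
        have := stV_mod hM (by rw [hD]; exact hMw) _ (hwt γ j)
        rwa [hD] at this⟩) ?_) ?_, fun _ _ => rfl⟩
    · intro γ γ'
      ext1 j
      apply Subtype.ext
      simp only [gadd, Pi.add_apply, Submodule.coe_add]
      rw [← add_modByMonic]
      congr 1; ring
    · intro c γ
      ext1 j
      apply Subtype.ext
      simp only [gsmul, Pi.smul_apply, Submodule.coe_smul, RingHom.id_apply]
      have : C (C c) * g γ j - C (C c) * g γ (D - 1) * stE M (j + 1) =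
          (C c) • (g γ j - g γ (D - 1) * stE M (j + 1)) := by
        rw [smul_eq_C_mul]; ring
      rw [this, smul_modByMonic]
      ext i j; simp
  obtain ⟨γ, hγ0, hγ⟩ := st_exists_ker T (by simpa using hdim)
  refine ⟨γ, g γ, hγ0, gdef γ, fun j hj => ?_⟩
  by_cases hj' : j < D - 1
  · have h1 := congrArg Subtype.val (congrFun (hγ) ⟨j, hj'⟩)
    rw [hT] at h1
    exact (modByMonic_eq_zero_iff_dvd hM).1 h1
  · have : j = D - 1 := by omega
    subst this
    have h2 : D - 1 + 1 = M.natDegree := by omega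
    rw [h2, stE_last _ hM]; simp

end claimB


section count
variable {K : Type*} [Field K]

lemma st_interp {F : Type*} [Field F] [DecidableEq F] (B : Finset (F × F)) :
    ∃ π : F[X][X] →ₗ[F] (B → F), (∀ g b, π g b = g.evalEval b.1.1 b.1.2) ∧ Function.Surjective π := by
  let π : F[X][X] →ₗ[F] (B → F) := LinearMap.pi fun b =>
    (Polynomial.aevalAeval (R := F) b.1.1 b.1.2).toLinearMap
  have hπ : ∀ g b, π g b = g.evalEval b.1.1 b.1.2 := by
    intro g b
    have : ((Polynomial.aevalAeval (R := F) b.1.1 b.1.2 : F[X][X] →ₐ[F] F) : F[X][X] →+* F)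
        = evalEvalRingHom b.1.1 b.1.2 := by
      ext
      · simp
      · simp
      · simp
    exact congrArg (fun f => f g) this
  refine ⟨π, hπ, ?_⟩
  rw [← LinearMap.range_eq_top, eq_top_iff, ← (Pi.basisFun F B).span_eq, Submodule.span_le]
  rintro _ ⟨b, rfl⟩
  let l : B → F[X][X] := fun b' => if b.1.1 = b'.1.1 then X - C (C b'.1.2) else C (X - C b'.1.1)
  have hl : ∀ b' c : B, (l b').evalEval c.1.1 c.1.2 =
      if b.1.1 = b'.1.1 then c.1.2 - b'.1.2 else c.1.1 - b'.1.1 := by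
    intro b' c
    simp only [l]
    split_ifs <;> simp [evalEval]
  set h : F[X][X] := ∏ b' ∈ Finset.univ.erase b, l b' with hh
  have hev : ∀ c : B, h.evalEval c.1.1 c.1.2 = ∏ b' ∈ Finset.univ.erase b,
      (if b.1.1 = b'.1.1 then c.1.2 - b'.1.2 else c.1.1 - b'.1.1) := by
    intro c
    have := map_prod (evalEvalRingHom c.1.1 c.1.2) l (Finset.univ.erase b)
    simp only [coe_evalEvalRingHom, hl] at this
    exact this
  have hb : h.evalEval b.1.1 b.1.2 ≠ 0 := by
    rw [hev, Finset.prod_ne_zero_iff]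
    intro b' hb'
    have hne : b' ≠ b := (Finset.mem_erase.1 hb').1
    split_ifs with h1
    · intro h2
      exact hne (Subtype.ext (Prod.ext h1.symm (sub_eq_zero.1 h2).symm))
    · exact sub_ne_zero.2 h1
  refine ⟨(h.evalEval b.1.1 b.1.2)⁻¹ • h, ?_⟩
  ext c
  rw [map_smul, Pi.smul_apply, hπ, Pi.basisFun_apply, Pi.single_apply]
  split_ifs with h1
  · subst h1; simp [hb]
  · have : h.evalEval c.1.1 c.1.2 = 0 := by
      rw [hev]
      apply Finset.prod_eq_zero (Finset.mem_erase.2 ⟨h1, Finset.mem_univ c⟩)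
      split_ifs <;> simp
    simp [this]

/-- number of common zeros -/
lemma st_common {F : Type*} [Field F] [Algebra K F] [DecidableEq F] {w κ : ℕ} {M Φ : K[X][X]}
    (hM : M.Monic) (hirr : Irreducible M)
    (hMw : StWt w (w * M.natDegree) M) (hΦ : StWt w κ Φ) (hnd : ¬ M ∣ Φ) (B : Finset (F × F))
    (hBM : ∀ b ∈ B, (aevalAeval b.1 b.2 : K[X][X] →ₐ[K] F) M = 0)
    (hBΦ : ∀ b ∈ B, (aevalAeval b.1 b.2 : K[X][X] →ₐ[K] F) Φ = 0) : B.card ≤ M.natDegree * κ := by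
  obtain ⟨N, hN, a, b, hab⟩ := st_coprime hM hirr hnd
  obtain ⟨π, hπ, hsurj⟩ := st_interp B
  let ψ : K[X][X] →+* F[X][X] := mapRingHom (mapRingHom (algebraMap K F))
  have hwt : ∀ m (g : K[X][X]), StWt w m g → StWt w m (ψ g) := by
    intro m g hg i a h
    apply hg i a
    intro h0
    apply h
    simp [ψ, h0]
  have hev : ∀ (s y : F) (g : K[X][X]), (ψ g).evalEval s y = (aevalAeval s y : K[X][X] →ₐ[K] F) g := by
    intro s y g
    have : (evalEvalRingHom s y).comp ψ = ((aevalAeval s y : K[X][X] →ₐ[K] F) : K[X][X] →+* F) := by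
      ext
      · simp [ψ]
      · simp [ψ]
      · simp [ψ]
    exact congrArg (fun f => f g) this
  have hdeg : (ψ M).natDegree = M.natDegree := hM.natDegree_map _
  have := st_bezout (M := ψ M) (Φ := ψ Φ) (w := w) (κ := κ) (hM.map _)
    (by rw [hdeg]; exact hwt _ _ hMw) (hwt _ _ hΦ) (N := N.map (algebraMap K F))
    ((Polynomial.map_ne_zero_iff (algebraMap K F).injective).2 hN) (a := ψ a) (b := ψ b) (by
      rw [← map_mul, ← map_mul, ← map_add, hab]; simp [ψ]) π hsurj
    (by
      intro h; ext c
      rw [hπ, evalEval_mul, hev, hBM _ c.2]; simp)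
    (by
      intro h; ext c
      rw [hπ, evalEval_mul, hev, hBΦ _ c.2]; simp)
  rw [hdeg] at this
  simpa using this

variable [Fintype K]

lemma st_vanish (p u v : ℕ) [Fact p.Prime] [CharP K p] (hQ : Fintype.card K = p ^ u * p ^ v)
    {F : Type*} [Field F] [Algebra K F] {D A L : ℕ} {M : K[X][X]} (hM : M.Monic) (hD : M.natDegree = D)
    (γ : stJ D A L → K) (G : ℕ → K[X][X])
    (hG : ∀ j : Fin D, G j = ∑ x : Fin D × Fin (A + 1), ∑ l : Fin (L + 1),
        C (C (γ (x, (j, l))) * X ^ (p ^ u * x.2 + l)) * X ^ (p ^ u * x.1))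
    (hdvd : ∀ j, j < D → M ∣ G j - G (D - 1) * stE M (j + 1))
    (s : K) (y : F) (hy : (aevalAeval (algebraMap K F s) y : K[X][X] →ₐ[K] F) M = 0)
    (hne : y ^ Fintype.card K ≠ y) :
    (aevalAeval (algebraMap K F s) y : K[X][X] →ₐ[K] F) (stPhi D A L (p ^ v) γ) = 0 := by
  set φ := (aevalAeval (algebraMap K F s) y : K[X][X] →ₐ[K] F) with hφ
  have hmono : ∀ (c : K) (a i : ℕ), φ (C (C c * X ^ a) * X ^ i)
      = algebraMap K F c * (algebraMap K F s) ^ a * y ^ i := by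
    intro c a i
    have h1 : φ (C (C c)) = algebraMap K F c := by
      have := φ.commutes c
      simpa [Polynomial.algebraMap_apply] using this
    have h3 : φ (C X : K[X][X]) = algebraMap K F s := by
      simp [φ]
    have h4 : φ (X : K[X][X]) = y := by
      simp [φ]
    rw [map_mul, C_mul, map_mul, C_pow, map_pow, map_pow, h1, h3, h4]
  have hX : φ X = y := by simp [φ]
  have hch : ExpChar F p := by
    have : CharP F p := charP_of_injective_algebraMap (algebraMap K _).injective p
    exact ExpChar.prime (Fact.out)
  have hC : ∀ g : K[X], φ (C g) = algebraMap K F (g.eval s) := by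
    intro g
    simp [φ, aeval_algebraMap_apply, coe_aeval_eq_eval]
  set Q := Fintype.card K with hQdef
  have hK : ∀ c : K, c ^ Q = c := fun c => FiniteField.pow_card c
  have hFK : ∀ c : K, (algebraMap K F c) ^ Q = algebraMap K F c := fun c => by rw [← map_pow, hK]
  have hchQ : ∃ N, Q = p ^ N := ⟨u + v, by rw [hQ, pow_add]⟩
  -- the conjugate root
  have hconj : (aevalAeval (algebraMap K F s) (y ^ Q) : K[X][X] →ₐ[K] F) M = 0 := by
    have hexp : ∀ (z : F) (g : K[X][X]), (aevalAeval (algebraMap K F s) z : K[X][X] →ₐ[K] F) g =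
        ∑ j ∈ Finset.range (g.natDegree + 1), algebraMap K F ((g.coeff j).eval s) * z ^ j := by
      intro z g
      conv_lhs => rw [g.as_sum_range_C_mul_X_pow]
      rw [map_sum]
      refine Finset.sum_congr rfl fun j _ => ?_
      rw [map_mul, map_pow]
      simp [aeval_algebraMap_apply, coe_aeval_eq_eval]
    obtain ⟨N, hN⟩ := hchQ
    rw [hφ, hexp] at hy
    have := congrArg (· ^ Q) hy
    rw [hN, sum_pow_char_pow, ← hN] at this
    rw [hexp]
    rw [zero_pow (by rw [hN]; exact pow_ne_zero _ (Fact.out : p.Prime).ne_zero)] at this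
    rw [← this]
    refine Finset.sum_congr rfl fun j _ => ?_
    rw [mul_pow, hFK]; ring
  have hGj : ∀ j, j < D → φ (G j) = φ (G (D - 1)) * φ (stE M (j + 1)) := by
    intro j hj
    obtain ⟨c, hc⟩ := hdvd j hj
    have := congrArg φ hc
    rw [map_sub, map_mul, map_mul, hy, zero_mul] at this
    exact sub_eq_zero.1 this
  have hEsum : ∑ j ∈ Finset.range D, φ (stE M (j + 1)) * (y ^ Q) ^ j = 0 := by
    have h1 := stE_sum (φ : K[X][X] →+* F) M (y ^ Q) D
    have h2 : φ (stE M D) * (y ^ Q) ^ D + ∑ j ∈ Finset.range D, φ (C (M.coeff j)) * (y ^ Q) ^ j = 0 := by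
      rw [← hconj]
      conv_rhs => rw [M.as_sum_range_C_mul_X_pow, hD, map_sum, Finset.sum_range_succ]
      have h3 : stE M D = 1 := by rw [← hD]; exact stE_last M hM
      have h4 : M.coeff D = 1 := by rw [← hD]; exact hM
      rw [h3, h4]
      simp only [map_mul, map_pow, map_one]
      rw [add_comm]
      congr 1
      · refine Finset.sum_congr rfl fun j _ => ?_
        rw [hC]
        simp [aeval_algebraMap_apply, coe_aeval_eq_eval]
      · simp
    simp only [RingHom.coe_coe] at h1
    rw [h2, hy, hX, sub_zero] at h1
    rcases mul_eq_zero.1 h1 with h | h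
    · exact absurd (sub_eq_zero.1 h) hne
    · exact h
  have hsum : φ (stPhi D A L (p ^ v) γ) ^ p ^ u = ∑ j ∈ Finset.range D, φ (G j) * (y ^ Q) ^ j := by
    rw [Finset.sum_range, stPhi, map_sum, sum_pow_char_pow, Fintype.sum_prod_type]
    simp only [hG, map_sum, hmono, Fintype.sum_prod_type, Finset.sum_mul]
    have e1 : ∀ (i : Fin D) (a : Fin (A + 1)) (j : Fin D) (l : Fin (L + 1)),
        ((algebraMap K F) (γ ((i, a), j, l) ^ p ^ v) * (algebraMap K F) s ^ (↑a + p ^ v * (l : ℕ)) * y ^ (↑i + p ^ v * (j : ℕ))) ^ p ^ u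
        = (algebraMap K F) (γ ((i, a), j, l)) * (algebraMap K F) s ^ (p ^ u * (a : ℕ) + l) * y ^ (p ^ u * (i : ℕ)) * (y ^ Q) ^ (j : ℕ) := by
      intro i a j l
      have h1 : ((algebraMap K F) (γ ((i, a), j, l)) ^ p ^ v) ^ p ^ u = (algebraMap K F) (γ ((i, a), j, l)) := by
        rw [← pow_mul, mul_comm, ← hQ, hFK]
      have h2 : ((algebraMap K F) s ^ (p ^ v * (l : ℕ))) ^ p ^ u = (algebraMap K F) s ^ (l : ℕ) := by
        rw [← pow_mul]
        have : p ^ v * (l : ℕ) * p ^ u = Q * l := by rw [hQ]; ring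
        rw [this, pow_mul, hFK]
      have h3 : (y ^ (p ^ v * (j : ℕ))) ^ p ^ u = (y ^ Q) ^ (j : ℕ) := by
        rw [← pow_mul, ← pow_mul]
        congr 1; rw [hQ]; ring
      rw [map_pow, mul_pow, mul_pow, h1, pow_add, mul_pow, h2, pow_add y, mul_pow, h3, pow_add ((algebraMap K F) s),
        pow_mul' _ _ (a : ℕ), pow_mul' _ _ (i : ℕ)]
      ring
    simp only [e1]
    have e2 : ∀ (i : Fin D), ∑ a : Fin (A + 1), ∑ j : Fin D, ∑ l : Fin (L + 1), (algebraMap K F) (γ ((i, a), j, l)) * (algebraMap K F) s ^ (p ^ u * (a : ℕ) + l) * y ^ (p ^ u * (i : ℕ)) * (y ^ Q) ^ (j : ℕ) = ∑ j : Fin D, ∑ a : Fin (A + 1), ∑ l : Fin (L + 1), (algebraMap K F) (γ ((i, a), j, l)) * (algebraMap K F) s ^ (p ^ u * (a : ℕ) + l) * y ^ (p ^ u * (i : ℕ)) * (y ^ Q) ^ (j : ℕ) := fun i => Finset.sum_comm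
    simp only [e2]
    rw [Finset.sum_comm]
  have : φ (stPhi D A L (p ^ v) γ) ^ p ^ u = 0 := by
    rw [hsum]
    calc _ = ∑ j ∈ Finset.range D, φ (G (D - 1)) * (φ (stE M (j + 1)) * (y ^ Q) ^ j) := by
          refine Finset.sum_congr rfl fun j hj => ?_
          rw [hGj j (Finset.mem_range.1 hj)]; ring
      _ = 0 := by rw [← Finset.mul_sum, hEsum, mul_zero]
  exact pow_eq_zero_iff (pow_ne_zero _ (Fact.out : p.Prime).ne_zero) |>.1 this

theorem st_main (p u v : ℕ) [Fact p.Prime] [CharP K p] (hQ : Fintype.card K = p ^ u * p ^ v)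
    {w D A L : ℕ} {M : K[X][X]} (hM : M.Monic) (hirr : Irreducible M) (hD : M.natDegree = D)
    (hMw : StWt w (w * D) M) (s0 y0 : K) (h0 : M.evalEval s0 y0 = 0)
    (h1 : (derivative M).evalEval s0 y0 ≠ 0)
    (hv : D * (A + w * (D - 1)) < p ^ v)
    (hdim : (D - 1) * (D * (p ^ u * (A + w * (D - 1)) + L + w * (D - 1) + 1))
      < D * (A + 1) * (D * (L + 1)))
    (G : Finset K) (hG : ∀ s ∈ G, (M.map (evalRingHom s)).Separable)
    [DecidableEq K] :
    D * G.card ≤ (∑ s ∈ G, (Finset.univ.filter fun y : K => M.evalEval s y = 0).card)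
      + D * (A + w * (D - 1) + p ^ v * (L + w * (D - 1))) := by
  classical
  obtain ⟨η, hη⟩ := st_hensel M hM s0 y0 h0 h1
  obtain ⟨γ, g, hγ, hg, hdvd⟩ := st_lin (P := p ^ u) hM hD hMw le_rfl hdim
  have hnd := st_notdvd p v hM hirr hD (by rw [hD]; exact hMw) s0 η hη le_rfl hv γ hγ
  let F := AlgebraicClosure K
  let ro : K → Finset F := fun s => ((M.map (evalRingHom s)).map (algebraMap K F)).roots.toFinset
  have hmem : ∀ s y, y ∈ ro s ↔ (aevalAeval (algebraMap K F s) y : K[X][X] →ₐ[K] F) M = 0 := by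
    intro s y
    have hne : ((M.map (evalRingHom s)).map (algebraMap K F)) ≠ 0 := ((hM.map _).map _).ne_zero
    simp only [ro, Multiset.mem_toFinset, mem_roots hne, IsRoot]
    have : ((evalRingHom y).comp (mapRingHom (algebraMap K F))).comp (mapRingHom (evalRingHom s)) = ((aevalAeval (algebraMap K F s) y : K[X][X] →ₐ[K] F) : K[X][X] →+* F) := by
      ext
      · simp
      · simp
      · simp
    have := congrArg (fun f => f M) this
    simp only [RingHom.comp_apply, coe_mapRingHom, coe_evalRingHom, RingHom.coe_coe] at this
    rw [this]
  have hcardro : ∀ s ∈ G, (ro s).card = D := by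
    intro s hs
    have hsep := hG s hs
    have h2 : ((M.map (evalRingHom s)).map (algebraMap K F)).roots.Nodup :=
      nodup_roots hsep.map
    rw [Multiset.toFinset_card_of_nodup h2, 
      ← (IsAlgClosed.splits _).natDegree_eq_card_roots, (hM.map _).natDegree_map, hM.natDegree_map, hD]
  let bad : K → Finset F := fun s => (ro s).filter fun y => y ^ Fintype.card K ≠ y
  have hsplit : ∀ s ∈ G, D ≤ (Finset.univ.filter fun y : K => M.evalEval s y = 0).card + (bad s).card := by
    intro s hs
    rw [← hcardro s hs, ← Finset.card_filter_add_card_filter_not (s := ro s) (fun y => y ^ Fintype.card K = y)]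
    refine Nat.add_le_add ?_ le_rfl
    refine (Finset.card_le_card ?_).trans (Finset.card_image_le (f := algebraMap K F))
    intro y hy
    rw [Finset.mem_filter] at hy
    obtain ⟨hy1, hy2⟩ := hy
    have hyK : y ∈ Set.range (algebraMap K F) := by
      have hpoly : ∀ c : F, c ∈ (X ^ Fintype.card K - X : F[X]).roots ↔ c ^ Fintype.card K = c := by
        intro c
        rw [mem_roots (FiniteField.X_pow_card_sub_X_ne_zero F Fintype.one_lt_card)]
        simp [sub_eq_zero]
      have hle : (Finset.univ.image (algebraMap K F)) ⊆ (X ^ Fintype.card K - X : F[X]).roots.toFinset := by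
        intro c hc
        obtain ⟨c', -, rfl⟩ := Finset.mem_image.1 hc
        rw [Multiset.mem_toFinset, hpoly, ← map_pow, FiniteField.pow_card]
      have heq := Finset.eq_of_subset_of_card_le hle (by
        rw [Finset.card_image_of_injective _ (algebraMap K F).injective, Finset.card_univ]
        refine (Multiset.toFinset_card_le _).trans ((card_roots' _).trans ?_)
        rw [FiniteField.X_pow_card_sub_X_natDegree_eq F Fintype.one_lt_card])
      have : y ∈ (Finset.univ.image (algebraMap K F)) := by
        rw [heq, Multiset.mem_toFinset, hpoly]; exact hy2
      obtain ⟨c', -, h⟩ := Finset.mem_image.1 this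
      exact ⟨c', h⟩
    obtain ⟨c, rfl⟩ := hyK
    refine Finset.mem_image.2 ⟨c, ?_, rfl⟩
    rw [Finset.mem_filter]
    refine ⟨Finset.mem_univ _, ?_⟩
    rw [hmem] at hy1
    have : ((aevalAeval (algebraMap K F s) (algebraMap K F c) : K[X][X] →ₐ[K] F) : K[X][X] →+* F)
      = (algebraMap K F).comp (evalEvalRingHom s c) := by
      ext
      · simp
      · simp
      · simp
    have := congrArg (fun f => f M) this
    simp only [RingHom.comp_apply, coe_evalEvalRingHom, RingHom.coe_coe] at this
    rw [this] at hy1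
    exact (map_eq_zero _).1 hy1
  let B : Finset (F × F) := G.biUnion fun s => (bad s).image fun y => (algebraMap K F s, y)
  have hBcard : B.card = ∑ s ∈ G, (bad s).card := by
    rw [Finset.card_biUnion]
    · refine Finset.sum_congr rfl fun s _ => Finset.card_image_of_injective _ ?_
      intro y y' h
      exact (Prod.ext_iff.1 h).2
    · intro s _ s' _ hne
      rw [Function.onFun, Finset.disjoint_left]
      intro b hb hb'
      obtain ⟨y, -, rfl⟩ := Finset.mem_image.1 hb
      obtain ⟨y', -, h⟩ := Finset.mem_image.1 hb'
      exact hne ((algebraMap K F).injective (Prod.ext_iff.1 h).1.symm)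
  have hBprop : ∀ b ∈ B, ∃ s : K, b.1 = algebraMap K F s ∧ b.2 ∈ ro s ∧ b.2 ^ Fintype.card K ≠ b.2 := by
    intro b hb
    obtain ⟨s, -, hb⟩ := Finset.mem_biUnion.1 hb
    obtain ⟨y, hy, rfl⟩ := Finset.mem_image.1 hb
    have := Finset.mem_filter.1 hy
    exact ⟨s, rfl, this.1, this.2⟩
  have hB := st_common (F := F) (w := w) hM hirr (by rw [hD]; exact hMw) (stPhi_wt γ) hnd B (by
      intro b hb
      obtain ⟨s, hs, hy, -⟩ := hBprop b hb
      rw [hs]; exact (hmem _ _).1 hy) (by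
      intro b hb
      obtain ⟨s, hs, hy, hne⟩ := hBprop b hb
      rw [hs]
      exact st_vanish p u v hQ hM hD γ g hg hdvd s b.2 ((hmem _ _).1 hy) hne)
  rw [hD, hBcard] at hB
  calc D * G.card = ∑ s ∈ G, D := by simp [mul_comm]
    _ ≤ ∑ s ∈ G, ((Finset.univ.filter fun y : K => M.evalEval s y = 0).card + (bad s).card) :=
        Finset.sum_le_sum hsplit
    _ ≤ _ := by rw [Finset.sum_add_distrib]; omega

end count


section fatlem
variable {K : Type} [Field K] [Fintype K]

lemma fq_card {q n : ℕ} (hq : 2 ≤ q) (hn : 1 ≤ n) (hcard : Fintype.card K = q ^ n) [DecidableEq K] :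
    (Finset.univ.filter fun α : K => α ^ q = α).card = q := by
  have hz : ∀ m, 2 ≤ m → ∀ x : K, x ∈ (X ^ m - X : K[X]).roots ↔ x ^ m = x := by
    intro m hm x
    rw [mem_roots (FiniteField.X_pow_card_sub_X_ne_zero K (by omega))]
    simp [sub_eq_zero]
  have hle : (Finset.univ.filter fun α : K => α ^ q = α).card ≤ q := by
    calc _ ≤ (X ^ q - X : K[X]).roots.toFinset.card := by
          apply Finset.card_le_card
          intro x hx
          rw [Multiset.mem_toFinset, hz q hq]
          simpa using hx
      _ ≤ q := by
          refine (Multiset.toFinset_card_le _).trans ((card_roots' _).trans ?_)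
          rw [FiniteField.X_pow_card_sub_X_natDegree_eq K (by omega)]
  have hpow : ∀ i, (X ^ q - X : K[X]) ∣ X ^ q ^ i - X := by
    intro i
    induction i with
    | zero => simp
    | succ i ih =>
      have h1 : (X ^ q ^ i - X : K[X]) ∣ (X ^ q ^ i) ^ q - X ^ q := sub_dvd_pow_sub_pow _ _ _
      have h2 := dvd_add (ih.trans h1) (dvd_refl (X ^ q - X : K[X]))
      rwa [← pow_mul, ← pow_succ, sub_add_sub_cancel] at h2
  obtain ⟨h, hh⟩ := hpow n
  have hqn : 2 ≤ q ^ n := by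
    calc 2 ≤ q := hq
      _ = q ^ 1 := (pow_one q).symm
      _ ≤ q ^ n := Nat.pow_le_pow_right (by omega) hn
  have hne : (X ^ q ^ n - X : K[X]) ≠ 0 := FiniteField.X_pow_card_sub_X_ne_zero K (by omega)
  have hh0 : h ≠ 0 := by
    rintro rfl
    rw [mul_zero] at hh; exact hne hh
  have hdeg : q ^ n = q + h.natDegree := by
    have := congrArg natDegree hh
    rwa [natDegree_mul (FiniteField.X_pow_card_sub_X_ne_zero K (by omega)) hh0,
      FiniteField.X_pow_card_sub_X_natDegree_eq K (by omega),
      FiniteField.X_pow_card_sub_X_natDegree_eq K (by omega)] at this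
  have hcov : (Finset.univ : Finset K) ⊆ (Finset.univ.filter fun α : K => α ^ q = α) ∪ h.roots.toFinset := by
    intro x _
    have h1 : (X ^ q ^ n - X : K[X]).eval x = 0 := by
      have := FiniteField.pow_card x
      rw [hcard] at this
      simp [this]
    rw [hh, eval_mul, mul_eq_zero] at h1
    rcases h1 with h1 | h1
    · apply Finset.mem_union_left
      simp only [Finset.mem_filter, Finset.mem_univ, true_and]
      simpa [sub_eq_zero] using h1
    · apply Finset.mem_union_right
      rw [Multiset.mem_toFinset, mem_roots hh0]; exact h1
  have h3 := Finset.card_le_card hcov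
  rw [Finset.card_univ, hcard] at h3
  have h4 := h3.trans (Finset.card_union_le _ _)
  have h5 : h.roots.toFinset.card ≤ h.natDegree :=
    (Multiset.toFinset_card_le _).trans (card_roots' _)
  omega

variable {p e q n k t : ℕ}

lemma fat_of_u [Fact p.Prime] [CharP K p] (hq : q = p ^ e) (hq2 : 2 ≤ q) (hn : 1 ≤ n)
    (hcard : Fintype.card K = q ^ n) (a : ℕ → K) (f : K → K)
    (hf : f = fun x => ∑ j ∈ Finset.range (k + 1), a j * x ^ q ^ j) (x u : K) (hx : x ≠ 0)
    (hu : u ^ q ≠ u) (h : f (u * x) = u ^ q ^ t * f x) :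
    1 < Nat.log q (Nat.card {z : K // f z = (f x / x ^ q ^ t) * z ^ q ^ t}) := by
  classical
  have hadd : ∀ (i : ℕ) (x y : K), (x + y) ^ q ^ i = x ^ q ^ i + y ^ q ^ i := by
    intro i x y
    have : ExpChar K p := ExpChar.prime Fact.out
    rw [hq, ← pow_mul, add_pow_expChar_pow]
  have hfix : ∀ (i : ℕ) (α : K), α ^ q = α → α ^ q ^ i = α := by
    intro i α hα
    induction i with
    | zero => simp
    | succ i ih => rw [pow_succ, pow_mul, ih, hα]
  have hfadd : ∀ x y, f (x + y) = f x + f y := by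
    intro x y
    simp only [hf, hadd, mul_add, Finset.sum_add_distrib]
  have hfsm : ∀ α x, α ^ q = α → f (α * x) = α * f x := by
    intro α x hα
    simp only [hf, mul_pow, hfix _ α hα, Finset.mul_sum]
    exact Finset.sum_congr rfl fun j _ => by ring
  let Z := {α : K // α ^ q = α}
  have hZ : Nat.card Z = q := by
    rw [Nat.card_eq_fintype_card, Fintype.card_subtype]
    exact fq_card hq2 hn hcard
  let φ : Z × Z → {z : K // f z = (f x / x ^ q ^ t) * z ^ q ^ t} := fun ab =>
    ⟨ab.1.1 * x + ab.2.1 * (u * x), by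
      rw [hfadd, hfsm _ _ ab.1.2, hfsm _ _ ab.2.2, h, hadd, mul_pow, mul_pow, mul_pow,
        hfix _ _ ab.1.2, hfix _ _ ab.2.2]
      have : x ^ q ^ t ≠ 0 := pow_ne_zero _ hx
      field_simp⟩
  have hinj : Function.Injective φ := by
    rintro ⟨⟨α, hα⟩, ⟨β, hβ⟩⟩ ⟨⟨α', hα'⟩, ⟨β', hβ'⟩⟩ heq
    have h1 : α * x + β * (u * x) = α' * x + β' * (u * x) := congrArg Subtype.val heq
    have h2 : (β - β') * u = α' - α := by
      apply mul_right_cancel₀ hx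
      linear_combination h1
    have hsub : ∀ x y : K, (x - y) ^ q = x ^ q - y ^ q := by
      intro x y
      have : ExpChar K p := ExpChar.prime Fact.out
      rw [hq, sub_pow_expChar_pow]
    have hb : β = β' := by
      by_contra hne
      have hne' : β - β' ≠ 0 := sub_ne_zero.2 hne
      apply hu
      have h3 := congrArg (· ^ q) h2
      simp only [mul_pow, hsub, hα, hα', hβ, hβ'] at h3
      rw [← h2] at h3
      exact mul_left_cancel₀ hne' h3
    subst hb
    have ha : α = α' := by
      rw [sub_self, zero_mul] at h2
      exact (sub_eq_zero.1 h2.symm).symm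
    subst ha
    rfl
  have hle := Nat.card_le_card_of_injective φ hinj
  rw [Nat.card_prod, hZ, ← sq] at hle
  exact Nat.le_log_of_pow_le (by omega) hle

lemma u_of_fat (hq2 : 2 ≤ q) (hn : 1 ≤ n)
    (hcard : Fintype.card K = q ^ n) (f : K → K) (m : K)
    (h : 1 < Nat.log q (Nat.card {z : K // f z = m * z ^ q ^ t})) :
    ∃ x u : K, x ≠ 0 ∧ u ≠ 0 ∧ u ^ q ≠ u ∧ f (u * x) = u ^ q ^ t * f x := by
  classical
  have hc : q ^ 2 ≤ (Finset.univ.filter fun z : K => f z = m * z ^ q ^ t).card := by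
    rw [Nat.card_eq_fintype_card, Fintype.card_subtype] at h
    refine Nat.pow_le_of_le_log ?_ h
    intro h0
    rw [h0] at h; simp at h
  set Ke := Finset.univ.filter fun z : K => f z = m * z ^ q ^ t with hKe
  have h4 : q < q ^ 2 := by nlinarith
  obtain ⟨x, hx, hx0⟩ : ∃ x ∈ Ke, x ≠ 0 := by
    by_contra hno
    push Not at hno
    have : Ke ⊆ {0} := fun x hx => Finset.mem_singleton.2 (hno x hx)
    have := Finset.card_le_card this
    simp at this
    omega
  obtain ⟨y, hy, hy0⟩ : ∃ y ∈ Ke, y ∉ (Finset.univ.filter fun α : K => α ^ q = α).image (· * x) := by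
    by_contra hno
    push Not at hno
    have h1 := (Finset.card_le_card (show Ke ⊆ _ from hno)).trans Finset.card_image_le
    rw [fq_card hq2 hn hcard] at h1
    omega
  have hu : (y / x) ^ q ≠ y / x := by
    intro h
    apply hy0
    exact Finset.mem_image.2 ⟨y / x, by simpa using h, div_mul_cancel₀ _ hx0⟩
  refine ⟨x, y / x, hx0, ?_, hu, ?_⟩
  · rintro h0
    rw [h0] at hu
    exact hu (zero_pow (by omega))
  · rw [div_mul_cancel₀ _ hx0]
    simp only [hKe, Finset.mem_filter, Finset.mem_univ, true_and] at hx hy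
    rw [hx, hy, div_pow]
    have : x ^ q ^ t ≠ 0 := pow_ne_zero _ hx0
    field_simp

/-- the set of relevant x is small when r is small -/
lemma card_H [DecidableEq K] [Fact p.Prime] [CharP K p] (hq : q = p ^ e) (hq2 : 2 ≤ q) (hn : 1 ≤ n)
    (ht : 1 ≤ t) {d r : ℕ} (hd : d = max k t)
    (hcard : Fintype.card K = q ^ n) (a : ℕ → K) (ha0 : a 0 ≠ 0) (f : K → K)
    (hf : f = fun x => ∑ j ∈ Finset.range (k + 1), a j * x ^ q ^ j)
    (hr : r = Nat.card {m : K // 1 < Nat.log q (Nat.card {x : K // f x = m * x ^ q ^ t})})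
    (H : Finset K) (hH : ∀ x ∈ H, x ≠ 0 ∧ ∃ u, u ^ q ≠ u ∧ f (u * x) = u ^ q ^ t * f x) :
    H.card ≤ (q ^ d - 1) * r := by
  classical
  have h1 := Finset.card_le_mul_card_image (f := fun x => f x / x ^ q ^ t) H (q ^ d - 1) (by
    intro m _
    set g : K[X] := ∑ j ∈ Finset.range (k + 1), C (a j) * X ^ q ^ j - C m * X ^ q ^ t with hg
    have hg0 : g ≠ 0 := by
      intro h0
      have h1 := congrArg (fun g => coeff g 1) h0
      simp only [hg, coeff_sub, finsetSum_coeff, coeff_C_mul, coeff_X_pow, coeff_zero] at h1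
      rw [if_neg (by
        have : q ^ 1 ≤ q ^ t := Nat.pow_le_pow_right (by omega) ht
        rw [pow_one] at this
        omega), Finset.sum_eq_single 0] at h1
      · simp at h1; exact ha0 h1
      · intro j _ hj
        rw [if_neg, mul_zero]
        have : q ^ 1 ≤ q ^ j := Nat.pow_le_pow_right (by omega) (by omega)
        rw [pow_one] at this
        omega
      · simp
    have hgd : g.natDegree ≤ q ^ d := by
      refine (natDegree_sub_le _ _).trans (max_le ?_ ?_)
      · refine natDegree_sum_le_of_forall_le _ _ fun j hj => ?_
        refine (natDegree_C_mul_X_pow_le _ _).trans (Nat.pow_le_pow_right (by omega) ?_)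
        have := Finset.mem_range.1 hj
        omega
      · exact (natDegree_C_mul_X_pow_le _ _).trans (Nat.pow_le_pow_right (by omega) (by omega))
    have hge : ∀ x, g.eval x = f x - m * x ^ q ^ t := by
      intro x
      simp [hg, hf, eval_finsetSum]
    have hsub : insert 0 {x ∈ H | f x / x ^ q ^ t = m} ⊆ g.roots.toFinset := by
      intro x hx
      rw [Multiset.mem_toFinset, mem_roots hg0, IsRoot, hge]
      rcases Finset.mem_insert.1 hx with rfl | hx
      · simp only [hf]
        rw [Finset.sum_eq_zero, zero_pow (pow_ne_zero _ (by omega))]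
        · simp
        · intro j _
          rw [zero_pow (pow_ne_zero _ (by omega))]; simp
      · rw [Finset.mem_filter] at hx
        have : x ^ q ^ t ≠ 0 := pow_ne_zero _ (hH x hx.1).1
        rw [← hx.2]; field_simp; simp
    have h2 := (Finset.card_le_card hsub).trans ((Multiset.toFinset_card_le _).trans ((card_roots' _).trans hgd))
    rw [Finset.card_insert_of_notMem (by
      intro h
      exact (hH 0 (Finset.mem_filter.1 h).1).1 rfl)] at h2
    omega)
  refine h1.trans (Nat.mul_le_mul_left _ ?_)
  rw [hr, Nat.card_eq_fintype_card, Fintype.card_subtype]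
  apply Finset.card_le_card
  intro m hm
  obtain ⟨x, hx, rfl⟩ := Finset.mem_image.1 hm
  obtain ⟨hx0, u, hu, hfu⟩ := hH x hx
  simp only [Finset.mem_filter, Finset.mem_univ, true_and]
  exact fat_of_u hq hq2 hn hcard a f hf x u hx0 hu hfu

end fatlem

section extract
variable {K : Type} [Field K]

lemma st_extract {w : ℕ} {R Tv R1 : K[X][X]} (hR : R.Monic) (hTv : Tv.Monic) (hmul : R = Tv * R1)
    (hRw : StWt w (w * R.natDegree) R) (s0 y0 : K) (h0 : R.evalEval s0 y0 = 0)
    (hT0 : Tv.evalEval s0 y0 ≠ 0) (h1 : (derivative R).evalEval s0 y0 ≠ 0) :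
    ∃ M : K[X][X], M.Monic ∧ Irreducible M ∧ M.evalEval s0 y0 = 0 ∧
      (derivative M).evalEval s0 y0 ≠ 0 ∧ StWt w (w * M.natDegree) M ∧
      M.natDegree + Tv.natDegree ≤ R.natDegree ∧
      ∀ s, (R.map (evalRingHom s)).Separable → (M.map (evalRingHom s)).Separable ∧
        ∀ y, M.evalEval s y = 0 → R.evalEval s y = 0 ∧ Tv.evalEval s y ≠ 0 := by
  have hR1 : R1.Monic := by
    rw [hmul] at hR
    exact hTv.of_mul_monic_left hR
  have hR10 : R1.evalEval s0 y0 = 0 := by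
    rw [hmul, evalEval_mul] at h0
    exact (mul_eq_zero.1 h0).resolve_left hT0
  obtain ⟨fs, hfs, u, hu⟩ := UniqueFactorizationMonoid.exists_prime_factors R1 hR1.ne_zero
  have hpr : (RingHom.ker (evalEvalRingHom s0 y0)).IsPrime := RingHom.ker_isPrime _
  have hmem : fs.prod ∈ RingHom.ker (evalEvalRingHom s0 y0) := by
    rw [RingHom.mem_ker, coe_evalEvalRingHom]
    rw [← hu, evalEval_mul] at hR10
    refine (mul_eq_zero.1 hR10).resolve_right ?_
    have := (u.isUnit.map (evalEvalRingHom s0 y0)).ne_zero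
    simpa using this
  obtain ⟨M0, hM0, hM0e⟩ := (hpr.multiset_prod_mem_iff_exists_mem fs).1 hmem
  have hM0d : M0 ∣ R1 := (Multiset.dvd_prod hM0).trans ⟨u, hu.symm⟩
  have hM0i := (hfs M0 hM0).irreducible
  have hunit : IsUnit M0.leadingCoeff := by
    obtain ⟨c, hc⟩ := hM0d
    have := congrArg leadingCoeff hc
    rw [hR1.leadingCoeff, leadingCoeff_mul] at this
    exact IsUnit.of_mul_eq_one _ this.symm
  obtain ⟨ℓ, hℓ⟩ := hunit
  set M : K[X][X] := C (↑ℓ⁻¹ : K[X]) * M0 with hM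
  have hMmon : M.Monic := by
    rw [Monic, hM, leadingCoeff_mul, leadingCoeff_C, ← hℓ]; simp
  have hass : Associated M M0 := by
    refine ⟨Units.map C.toMonoidHom ℓ, ?_⟩
    rw [hM]
    have : (C (↑ℓ⁻¹ : K[X]) : K[X][X]) * C (ℓ : K[X]) = 1 := by rw [← C_mul]; simp
    simp only [Units.coe_map, RingHom.toMonoidHom_eq_coe, MonoidHom.coe_coe]
    linear_combination M0 * this
  have hMi : Irreducible M := hass.irreducible_iff.2 hM0i
  obtain ⟨R2, hR2⟩ : M ∣ R1 := hass.dvd.trans hM0d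
  have hMe : M.evalEval s0 y0 = 0 := by
    rw [hM, evalEval_mul]
    rw [RingHom.mem_ker, coe_evalEvalRingHom] at hM0e
    rw [hM0e, mul_zero]
  have hRM : R = M * (Tv * R2) := by rw [hmul, hR2]; ring
  have hR2m : (Tv * R2).Monic := by
    apply hMmon.of_mul_monic_left
    rw [← hRM]; exact hR
  have hR2m' : R2.Monic := hTv.of_mul_monic_left hR2m
  refine ⟨M, hMmon, hMi, hMe, ?_, ?_, ?_, ?_⟩
  · intro h
    apply h1
    rw [hRM, derivative_mul]; simp only [evalEval_add, evalEval_mul, h, hMe]; simp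
  · apply StWt.of_dvd hMmon hR2m
    rw [← hRM]; exact hRw
  · rw [hRM, hMmon.natDegree_mul hR2m, hTv.natDegree_mul hR2m']; omega
  · intro s hs
    refine ⟨hs.of_dvd (Polynomial.map_dvd _ ⟨_, hRM⟩), fun y hy => ⟨?_, fun hT => ?_⟩⟩
    · rw [hRM, evalEval_mul, hy, zero_mul]
    · have hev : ∀ g : K[X][X], (g.map (evalRingHom s)).eval y = g.evalEval s y := by
        intro g
        rw [eval_map, eval₂_evalRingHom]
      have e1 := hs.aeval_derivative_ne_zero (S := K) (x := y) (by
        rw [coe_aeval_eq_eval, hev, hRM, evalEval_mul, hy, zero_mul])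
      apply e1
      rw [coe_aeval_eq_eval, derivative_map, hev, hRM, derivative_mul]
      simp only [evalEval_add, evalEval_mul, hT, hy]
      simp

end extract


section geom
variable {K : Type} [Field K] [Fintype K] {p e q n k t : ℕ}

lemma st_countH [DecidableEq K] [Fact p.Prime] [CharP K p] (hq : q = p ^ e) (hq2 : 2 ≤ q) (hn : 1 ≤ n)
    (ht : 1 ≤ t) {d r : ℕ} (hd : d = max k t)
    (hcard : Fintype.card K = q ^ n) (a : ℕ → K) (ha0 : a 0 ≠ 0) (f : K → K)
    (hf : f = fun x => ∑ j ∈ Finset.range (k + 1), a j * x ^ q ^ j)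
    (hr : r = Nat.card {m : K // 1 < Nat.log q (Nat.card {x : K // f x = m * x ^ q ^ t})})
    (M : K[X][X]) (hM : M.Monic) (G : Finset K) (ι : K → K) (hι : Function.Injective ι)
    (hG : ∀ s ∈ G, ∀ y, M.evalEval s y = 0 →
      ι s ≠ 0 ∧ ∃ u, u ^ q ≠ u ∧ f (u * ι s) = u ^ q ^ t * f (ι s)) :
    (∑ s ∈ G, (Finset.univ.filter fun y : K => M.evalEval s y = 0).card)
      ≤ (q ^ d - 1) * r * M.natDegree := by
  classical
  set G' := G.filter fun s => ∃ y, M.evalEval s y = 0 with hG'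
  have hH := card_H hq hq2 hn ht hd hcard a ha0 f hf hr (G'.image ι) (by
    intro x hx
    obtain ⟨s, hs, rfl⟩ := Finset.mem_image.1 hx
    obtain ⟨hs1, y, hy⟩ := Finset.mem_filter.1 hs
    exact hG s hs1 y hy)
  rw [Finset.card_image_of_injective _ hι] at hH
  have hle : ∀ s, (Finset.univ.filter fun y : K => M.evalEval s y = 0).card ≤ M.natDegree := by
    intro s
    have hev : ∀ y, (M.map (evalRingHom s)).eval y = M.evalEval s y := by
      intro y
      rw [eval_map, eval₂_evalRingHom]
    rw [← hM.natDegree_map (evalRingHom s)]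
    refine le_trans (Finset.card_le_card ?_) ((Multiset.toFinset_card_le _).trans (card_roots' (M.map (evalRingHom s))))
    intro y hy
    rw [Multiset.mem_toFinset, mem_roots (hM.map _).ne_zero, IsRoot, hev]
    simpa using hy
  have : (∑ s ∈ G, (Finset.univ.filter fun y : K => M.evalEval s y = 0).card)
      = ∑ s ∈ G', (Finset.univ.filter fun y : K => M.evalEval s y = 0).card := by
    rw [hG', Finset.sum_filter]
    refine Finset.sum_congr rfl fun s _ => ?_
    split_ifs with h
    · rfl
    · rw [Finset.card_eq_zero, Finset.filter_eq_empty_iff]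
      intro y _ hy
      exact h ⟨y, hy⟩
  rw [this]
  calc _ ≤ ∑ s ∈ G', M.natDegree := Finset.sum_le_sum fun s _ => hle s
    _ = G'.card * M.natDegree := by simp
    _ ≤ _ := Nat.mul_le_mul_right _ hH

lemma deriv_pow_q [Fact p.Prime] [CharP K p] {R : Type*} [CommRing R] [CharP R p]
    (hq : q = p ^ e) (he : 1 ≤ e) (i : ℕ) (hi : 1 ≤ i) :
    derivative (X ^ q ^ i : R[X]) = 0 := by
  rw [derivative_X_pow]
  have : ((q ^ i : ℕ) : R) = 0 := by
    rw [CharP.cast_eq_zero_iff R p, hq]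
    exact dvd_pow (dvd_pow_self p (by omega)) (by omega)
  rw [this]; simp

lemma Xq_dvd {R : Type*} [CommRing R] (q i : ℕ) : (X ^ q - X : R[X]) ∣ X ^ q ^ i - X := by
  induction i with
  | zero => simp
  | succ i ih =>
    have h1 : (X ^ q ^ i - X : R[X]) ∣ (X ^ q ^ i) ^ q - X ^ q := sub_dvd_pow_sub_pow _ _ _
    have h2 := dvd_add (ih.trans h1) (dvd_refl (X ^ q - X : R[X]))
    rwa [← pow_mul, ← pow_succ, sub_add_sub_cancel] at h2

lemma XqX_monic {R : Type*} [CommRing R] [Nontrivial R] (hq2 : 2 ≤ q) : (X ^ q - X : R[X]).Monic := by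
  apply monic_X_pow_sub
  rw [degree_X]
  exact_mod_cast (by omega : 1 < q)

lemma XqX_natDegree {R : Type*} [CommRing R] [Nontrivial R] (hq2 : 2 ≤ q) :
    (X ^ q - X : R[X]).natDegree = q := by
  rw [natDegree_sub_eq_left_of_natDegree_lt, natDegree_X_pow]
  rw [natDegree_X, natDegree_X_pow]
  omega

lemma isCoprime_C {F : Type*} [Field F] (g : F[X]) {c : F} (hc : c ≠ 0) : IsCoprime g (C c) :=
  ⟨0, C c⁻¹, by rw [← C_mul, inv_mul_cancel₀ hc]; simp⟩

lemma isCoprime_Xpow {F : Type*} [Field F] (g : F[X]) (hc : g.eval 0 ≠ 0) (m : ℕ) :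
    IsCoprime g (X ^ m) := by
  apply IsCoprime.pow_right
  refine ⟨C (g.eval 0)⁻¹, -C (g.eval 0)⁻¹ * g.divX, ?_⟩
  have h := divX_mul_X_add g
  have h2 : (C (g.eval 0)⁻¹ : F[X]) * C (g.coeff 0) = 1 := by
    rw [coeff_zero_eq_eval_zero, ← C_mul, inv_mul_cancel₀ hc]; simp
  linear_combination (-C (g.eval 0)⁻¹) * h + h2

lemma st_geom1 [DecidableEq K] [Fact p.Prime] [CharP K p] (hq : q = p ^ e) (he : 1 ≤ e) (hq2 : 2 ≤ q) (hn : 1 ≤ n)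
    (ht : 1 ≤ t) {d r : ℕ} (hd : d = max k t) (hkt : t < k)
    (hcard : Fintype.card K = q ^ n) (a : ℕ → K) (ha0 : a 0 ≠ 0) (hak : a k ≠ 0) (f : K → K)
    (hf : f = fun x => ∑ j ∈ Finset.range (k + 1), a j * x ^ q ^ j)
    (hr : r = Nat.card {m : K // 1 < Nat.log q (Nat.card {x : K // f x = m * x ^ q ^ t})})
    (x0 u0 : K) (hx0 : x0 ≠ 0) (hu0 : u0 ^ q ≠ u0) (hxu : f (u0 * x0) = u0 ^ q ^ t * f x0) :
    ∃ (M : K[X][X]) (s0 y0 : K) (G : Finset K), M.Monic ∧ Irreducible M ∧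
      StWt 2 (2 * M.natDegree) M ∧ M.evalEval s0 y0 = 0 ∧ (derivative M).evalEval s0 y0 ≠ 0 ∧
      M.natDegree + q ≤ q ^ d ∧ (∀ s ∈ G, (M.map (evalRingHom s)).Separable) ∧
      q ^ n ≤ G.card + q ^ d ∧
      (∑ s ∈ G, (Finset.univ.filter fun y : K => M.evalEval s y = 0).card)
        ≤ (q ^ d - 1) * r * M.natDegree := by
  have hdk : d = k := by omega
  have hq0 : 0 < q := by omega
  set R : K[X][X] := ∑ j ∈ Finset.range (k + 1),
    C (C (-(a j) / a k) * X ^ (q ^ k - q ^ j)) * (X ^ q ^ t - X ^ q ^ j) with hRdef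
  have hmon : ∀ {i j : ℕ}, i ≤ j → q ^ i ≤ q ^ j := fun h => Nat.pow_le_pow_right hq0 h
  have hslt : ∀ {i j : ℕ}, i < j → 2 * q ^ i ≤ q ^ j := by
    intro i j h
    calc 2 * q ^ i ≤ q * q ^ i := Nat.mul_le_mul_right _ hq2
      _ = q ^ (i + 1) := by ring
      _ ≤ q ^ j := hmon h
  have hpos : ∀ i, 0 < q ^ i := fun i => pow_pos hq0 i
  -- monic
  have hR' : R = X ^ q ^ k + (-X ^ q ^ t + ∑ j ∈ Finset.range k,
    C (C (-(a j) / a k) * X ^ (q ^ k - q ^ j)) * (X ^ q ^ t - X ^ q ^ j)) := by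
    rw [hRdef, Finset.sum_range_succ, neg_div, div_self hak]
    simp
    ring
  have hlow : (-X ^ q ^ t + ∑ j ∈ Finset.range k,
    C (C (-(a j) / a k) * X ^ (q ^ k - q ^ j)) * (X ^ q ^ t - X ^ q ^ j) : K[X][X]).degree < (q ^ k : ℕ) := by
    have hX : ∀ i, i < k → (X ^ q ^ i : K[X][X]).degree < (q ^ k : ℕ) := by
      intro i hi
      rw [degree_X_pow]
      have := hslt hi
      have := hpos i
      exact_mod_cast (by omega : q ^ i < q ^ k)
    refine (degree_add_le _ _).trans_lt (max_lt (by rw [degree_neg]; exact hX t hkt) ?_)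
    refine (degree_sum_le _ _).trans_lt ?_
    rw [Finset.sup_lt_iff (by exact WithBot.bot_lt_coe _)]
    intro j hj
    have hj := Finset.mem_range.1 hj
    rw [← smul_eq_C_mul]
    refine (degree_smul_le _ _).trans_lt ?_
    exact (degree_sub_le _ _).trans_lt (max_lt (hX t hkt) (hX j hj))
  have hRm : R.Monic := by
    rw [hR']; exact monic_X_pow_add hlow
  have hRd : R.natDegree = q ^ k := by
    rw [hR']
    rw [natDegree_add_eq_left_of_degree_lt (by rw [degree_X_pow]; exact hlow), natDegree_X_pow]
  -- weight
  have hRw : StWt 2 (2 * R.natDegree) R := by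
    rw [hRd, hRdef]
    apply StWt.sum
    intro j hj
    have hj := Finset.mem_range.1 hj
    rw [mul_sub]
    have h1 := hslt hkt
    have h2 := hmon (show j ≤ k by omega)
    exact StWt.sub (stWt_mono' _ (by omega)) (stWt_mono' _ (by omega))
  -- factor
  have hdvd : (X ^ q - X : K[X][X]) ∣ R := by
    refine Finset.dvd_sum fun j _ => Dvd.dvd.mul_left ?_ _
    have := dvd_sub (Xq_dvd (R := K[X]) q t) (Xq_dvd (R := K[X]) q j)
    rwa [sub_sub_sub_cancel_right] at this
  obtain ⟨R1, hR1⟩ := hdvd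
  -- evaluation
  have hev : ∀ s y : K, s ≠ 0 → R.evalEval s y =
      -(s ^ q ^ k / a k) * (y ^ q ^ t * f s⁻¹ - f (y * s⁻¹)) := by
    intro s y hs
    have h1 : R.evalEval s y = ∑ j ∈ Finset.range (k + 1),
        (-(a j) / a k * s ^ (q ^ k - q ^ j)) * (y ^ q ^ t - y ^ q ^ j) := by
      rw [hRdef]
      have := map_sum (evalEvalRingHom s y) (fun j => C (C (-(a j) / a k) * X ^ (q ^ k - q ^ j)) * (X ^ q ^ t - X ^ q ^ j) : ℕ → K[X][X]) (Finset.range (k + 1))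
      simp only [coe_evalEvalRingHom] at this
      rw [this]
      refine Finset.sum_congr rfl fun j _ => ?_
      simp [evalEval]
    rw [h1, hf]
    simp only
    rw [Finset.mul_sum, ← Finset.sum_sub_distrib, Finset.mul_sum]
    refine Finset.sum_congr rfl fun j hj => ?_
    have hj := Finset.mem_range.1 hj
    rw [pow_sub₀ s hs (hmon (show j ≤ k by omega)), mul_pow, inv_pow]
    ring
  -- derivative
  have hder : derivative R = C (C (a 0 / a k) * X ^ (q ^ k - 1)) := by
    have hch : CharP K[X] p := inferInstance
    rw [hRdef, derivative_sum, Finset.sum_eq_single 0]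
    · rw [derivative_C_mul, derivative_sub, deriv_pow_q (K := K) hq he t ht]
      simp [neg_div]
      try ring
    · intro j _ hj
      rw [derivative_C_mul, derivative_sub, deriv_pow_q (K := K) hq he t ht, deriv_pow_q (K := K) hq he j (by omega)]
      simp
    · simp
  have hsep : ∀ s : K, s ≠ 0 → (R.map (evalRingHom s)).Separable := by
    intro s hs
    have : derivative (R.map (evalRingHom s)) = C (a 0 / a k * s ^ (q ^ k - 1)) := by
      rw [derivative_map, hder]; simp
    rw [Separable, this]
    exact isCoprime_C _ (mul_ne_zero (div_ne_zero ha0 hak) (pow_ne_zero _ hs))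
  obtain ⟨M, hM, hMi, hM0, hM1, hMw, hMd, hMs⟩ := st_extract hRm (Tv := X ^ q - X) (XqX_monic hq2) hR1 hRw x0⁻¹ u0 (by
        rw [hev _ _ (inv_ne_zero hx0), inv_inv, hxu]; ring) (by
        simpa [evalEval, sub_eq_zero] using hu0) (by
        rw [hder]; simp [evalEval, ha0, hak, hx0])
  have hTd : (X ^ q - X : K[X][X]).natDegree = q := XqX_natDegree hq2
  refine ⟨M, x0⁻¹, u0, Finset.univ.erase 0, hM, hMi, hMw, hM0, hM1, ?_, ?_, ?_, ?_⟩
  · rw [hTd, hRd] at hMd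
    rw [hdk]; exact hMd
  · intro s hs
    exact (hMs s (hsep s (Finset.mem_erase.1 hs).1)).1
  · rw [Finset.card_erase_of_mem (Finset.mem_univ _), Finset.card_univ, hcard]
    have := hpos d
    omega
  · refine st_countH hq hq2 hn ht hd hcard a ha0 f hf hr M hM _ (fun s => s⁻¹) inv_injective ?_
    intro s hs y hy
    have hs0 := (Finset.mem_erase.1 hs).1
    obtain ⟨h1, h2⟩ := (hMs s (hsep s hs0)).2 y hy
    refine ⟨inv_ne_zero hs0, y, ?_, ?_⟩
    · simpa [evalEval, sub_eq_zero] using h2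
    · rw [hev s y hs0] at h1
      rcases mul_eq_zero.1 h1 with h | h
      · rw [neg_eq_zero, div_eq_zero_iff] at h
        rcases h with h | h
        · exact absurd h (pow_ne_zero _ hs0)
        · exact absurd h hak
      · exact (sub_eq_zero.1 h).symm

lemma st_geom2 [DecidableEq K] [Fact p.Prime] [CharP K p] (hq : q = p ^ e) (he : 1 ≤ e) (hq2 : 2 ≤ q) (hn : 1 ≤ n)
    (ht : 1 ≤ t) {d r : ℕ} (hd : d = max k t) (hkt : k < t)
    (hcard : Fintype.card K = q ^ n) (a : ℕ → K) (ha0 : a 0 ≠ 0) (f : K → K)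
    (hf : f = fun x => ∑ j ∈ Finset.range (k + 1), a j * x ^ q ^ j)
    (hr : r = Nat.card {m : K // 1 < Nat.log q (Nat.card {x : K // f x = m * x ^ q ^ t})})
    (x0 u0 : K) (hx0 : x0 ≠ 0) (hu00 : u0 ≠ 0) (hu0 : u0 ^ q ≠ u0) (hxu : f (u0 * x0) = u0 ^ q ^ t * f x0) :
    ∃ (M : K[X][X]) (s0 y0 : K) (G : Finset K), M.Monic ∧ Irreducible M ∧
      StWt 2 (2 * M.natDegree) M ∧ M.evalEval s0 y0 = 0 ∧ (derivative M).evalEval s0 y0 ≠ 0 ∧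
      M.natDegree + q ≤ q ^ d ∧ (∀ s ∈ G, (M.map (evalRingHom s)).Separable) ∧
      q ^ n ≤ G.card + q ^ d ∧
      (∑ s ∈ G, (Finset.univ.filter fun y : K => M.evalEval s y = 0).card)
        ≤ (q ^ d - 1) * r * M.natDegree := by
  have hdk : d = t := by omega
  have hq0 : 0 < q := by omega
  set R : K[X][X] := ∑ j ∈ Finset.range (k + 1),
    C (C (a j / a 0) * X ^ (q ^ j - 1)) * (X ^ (q ^ t - q ^ j) - 1) with hRdef
  have hmon : ∀ {i j : ℕ}, i ≤ j → q ^ i ≤ q ^ j := fun h => Nat.pow_le_pow_right hq0 h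
  have hslt : ∀ {i j : ℕ}, i < j → 2 * q ^ i ≤ q ^ j := by
    intro i j h
    calc 2 * q ^ i ≤ q * q ^ i := Nat.mul_le_mul_right _ hq2
      _ = q ^ (i + 1) := by ring
      _ ≤ q ^ j := hmon h
  have hpos : ∀ i, 0 < q ^ i := fun i => pow_pos hq0 i
  have hqt : 2 ≤ q ^ t := by have := hslt ht; simpa using this
  -- monic
  have hR' : R = X ^ (q ^ t - 1) + (-1 + ∑ j ∈ Finset.range k,
    C (C (a (j + 1) / a 0) * X ^ (q ^ (j + 1) - 1)) * (X ^ (q ^ t - q ^ (j + 1)) - 1)) := by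
    rw [hRdef, Finset.sum_range_succ', div_self ha0]
    simp
    ring
  have hlow : (-1 + ∑ j ∈ Finset.range k,
    C (C (a (j + 1) / a 0) * X ^ (q ^ (j + 1) - 1)) * (X ^ (q ^ t - q ^ (j + 1)) - 1) : K[X][X]).degree
      < (q ^ t - 1 : ℕ) := by
    have h1 : (1 : K[X][X]).degree < (q ^ t - 1 : ℕ) := by
      rw [degree_one]
      exact_mod_cast (by omega : 0 < q ^ t - 1)
    refine (degree_add_le _ _).trans_lt (max_lt (by rw [degree_neg]; exact h1) ?_)
    refine (degree_sum_le _ _).trans_lt ?_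
    rw [Finset.sup_lt_iff (by exact WithBot.bot_lt_coe _)]
    intro j hj
    have hj := Finset.mem_range.1 hj
    rw [← smul_eq_C_mul]
    refine (degree_smul_le _ _).trans_lt ?_
    refine (degree_sub_le _ _).trans_lt (max_lt ?_ h1)
    rw [degree_X_pow]
    have h2 := hslt (show 0 < j + 1 by omega)
    rw [pow_zero] at h2
    exact_mod_cast (by omega : q ^ t - q ^ (j + 1) < q ^ t - 1)
  have hRm : R.Monic := by
    rw [hR']; exact monic_X_pow_add hlow
  have hRd : R.natDegree = q ^ t - 1 := by
    rw [hR']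
    rw [natDegree_add_eq_left_of_degree_lt (by rw [degree_X_pow]; exact hlow), natDegree_X_pow]
  -- weight
  have hRw : StWt 2 (2 * R.natDegree) R := by
    rw [hRd, hRdef]
    apply StWt.sum
    intro j hj
    have hj := Finset.mem_range.1 hj
    have h2 := hmon (show j ≤ t by omega)
    have h3 := hpos j
    have h4 : (1 : K[X][X]) = X ^ 0 := by simp
    rw [mul_sub, h4]
    exact StWt.sub (stWt_mono' _ (by omega)) (stWt_mono' _ (by omega))
  -- factor
  have hdvd : (X ^ (q - 1) - C 1 : K[X][X]) ∣ R := by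
    refine Finset.dvd_sum fun j hj => Dvd.dvd.mul_left ?_ _
    have hj := Finset.mem_range.1 hj
    obtain ⟨c, hc⟩ : q - 1 ∣ q ^ t - q ^ j := by
      have h1 : q ^ t - q ^ j = q ^ j * (q ^ (t - j) - 1) := by
        rw [Nat.mul_sub, ← pow_add, mul_one]
        congr 2; omega
      rw [h1]
      have := Nat.sub_dvd_pow_sub_pow q 1 (t - j)
      rw [one_pow] at this
      exact this.mul_left _
    rw [hc, pow_mul]
    have := sub_dvd_pow_sub_pow (X ^ (q - 1) : K[X][X]) 1 c
    rw [one_pow] at this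
    simpa using this
  obtain ⟨R1, hR1⟩ := hdvd
  -- evaluation
  have hev1 : ∀ s y : K, R.evalEval s y = ∑ j ∈ Finset.range (k + 1),
        (a j / a 0 * s ^ (q ^ j - 1)) * (y ^ (q ^ t - q ^ j) - 1) := by
    intro s y
    rw [hRdef]
    have := map_sum (evalEvalRingHom s y) (fun j => C (C (a j / a 0) * X ^ (q ^ j - 1)) * (X ^ (q ^ t - q ^ j) - 1) : ℕ → K[X][X]) (Finset.range (k + 1))
    simp only [coe_evalEvalRingHom] at this
    rw [this]
    refine Finset.sum_congr rfl fun j _ => ?_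
    simp [evalEval]
  have hev : ∀ s y : K, s ≠ 0 → y ≠ 0 → R.evalEval s y =
      (a 0 * s)⁻¹ * (y ^ q ^ t * f (y⁻¹ * s) - f s) := by
    intro s y hs hy
    rw [hev1, hf]
    simp only
    rw [Finset.mul_sum, ← Finset.sum_sub_distrib, Finset.mul_sum]
    refine Finset.sum_congr rfl fun j hj => ?_
    have hj := Finset.mem_range.1 hj
    rw [pow_sub₀ y hy (hmon (show j ≤ t by omega)), pow_sub₀ s hs (hpos j), mul_pow, inv_pow]
    field_simp
    rw [show Nat.succ 0 = 1 from rfl, pow_one]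
    ring
  have hev0 : ∀ s : K, s ≠ 0 → R.evalEval s 0 = -((a 0 * s)⁻¹ * f s) := by
    intro s hs
    rw [hev1, hf]
    simp only
    rw [Finset.mul_sum, ← Finset.sum_neg_distrib]
    refine Finset.sum_congr rfl fun j hj => ?_
    have hj := Finset.mem_range.1 hj
    have h2 := hslt (show j < t by omega)
    have h3 := hpos j
    rw [zero_pow (by omega), pow_sub₀ s hs (hpos j)]
    field_simp
    ring
  -- derivative
  have hder : derivative R = -X ^ (q ^ t - 2) := by
    have hch : CharP K[X] p := inferInstance
    have hc0 : ∀ i, 1 ≤ i → ((q ^ i : ℕ) : K[X]) = 0 := by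
      intro i hi
      rw [CharP.cast_eq_zero_iff K[X] p, hq]
      exact dvd_pow (dvd_pow_self p (by omega)) (by omega)
    rw [hRdef, derivative_sum, Finset.sum_eq_single 0]
    · rw [derivative_C_mul, derivative_sub, derivative_X_pow, Nat.cast_sub (hmon (Nat.zero_le t)), hc0 t ht,
        div_self ha0, Nat.sub_sub]
      simp
    · intro j hj hj0
      have hj := Finset.mem_range.1 hj
      rw [derivative_C_mul, derivative_sub, derivative_X_pow, Nat.cast_sub (hmon (show j ≤ t by omega)),
        hc0 t ht, hc0 j (by omega)]
      simp
    · simp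
  have hf0 : f 0 = 0 := by
    rw [hf]
    simp only
    apply Finset.sum_eq_zero
    intro j _
    rw [zero_pow (hpos j).ne', mul_zero]
  have hs0 : ∀ s, f s ≠ 0 → s ≠ 0 := by
    rintro s hs rfl
    exact hs hf0
  have hR0 : ∀ s, f s ≠ 0 → R.evalEval s 0 ≠ 0 := by
    intro s hs
    rw [hev0 s (hs0 s hs), neg_ne_zero]
    exact mul_ne_zero (inv_ne_zero (mul_ne_zero ha0 (hs0 s hs))) hs
  have hsep : ∀ s : K, f s ≠ 0 → (R.map (evalRingHom s)).Separable := by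
    intro s hs
    have : derivative (R.map (evalRingHom s)) = -X ^ (q ^ t - 2) := by
      rw [derivative_map, hder]; simp
    rw [Separable, this]
    apply IsCoprime.neg_right
    apply isCoprime_Xpow
    rw [eval_map, eval₂_evalRingHom]
    exact hR0 s hs
  have hpw : ∀ u : K, u ≠ 0 → (u⁻¹ ^ (q - 1) = 1 ↔ u ^ q = u) := by
    intro u hu
    rw [inv_pow, inv_eq_one]
    have : u ^ q = u ^ (q - 1) * u := by rw [← pow_succ]; congr 1; omega
    rw [this]
    constructor
    · intro h; rw [h, one_mul]
    · intro h
      exact mul_right_cancel₀ hu (by rw [h, one_mul])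
  obtain ⟨M, hM, hMi, hM0, hM1, hMw, hMd, hMs⟩ := st_extract hRm (Tv := X ^ (q - 1) - C 1)
      (monic_X_pow_sub_C _ (by omega)) hR1 hRw x0 u0⁻¹ (by
        rw [hev _ _ hx0 (inv_ne_zero hu00), inv_inv, hxu, inv_pow,
          inv_mul_cancel_left₀ (pow_ne_zero _ hu00)]; simp) (by
        have : u0⁻¹ ^ (q - 1) ≠ 1 := fun h => hu0 ((hpw u0 hu00).1 h)
        simpa [evalEval, sub_eq_zero] using this) (by
        rw [hder]; simp [evalEval, hu00])
  have hTd : (X ^ (q - 1) - C 1 : K[X][X]).natDegree = q - 1 := natDegree_X_pow_sub_C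
  refine ⟨M, x0, u0⁻¹, Finset.univ.filter fun s => f s ≠ 0, hM, hMi, hMw, hM0, hM1, ?_, ?_, ?_, ?_⟩
  · rw [hTd, hRd] at hMd
    rw [hdk]; omega
  · intro s hs
    exact (hMs s (hsep s (Finset.mem_filter.1 hs).2)).1
  · set g : K[X] := ∑ j ∈ Finset.range (k + 1), C (a j) * X ^ q ^ j with hg
    have hg0 : g ≠ 0 := by
      intro h0
      have h1 := congrArg (fun g => coeff g 1) h0
      simp only [hg, finsetSum_coeff, coeff_C_mul, coeff_X_pow, coeff_zero] at h1
      rw [Finset.sum_eq_single 0] at h1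
      · simp at h1; exact ha0 h1
      · intro j _ hj
        rw [if_neg, mul_zero]
        have := hslt (show 0 < j by omega)
        rw [pow_zero] at this
        omega
      · simp
    have hgd : g.natDegree ≤ q ^ d := by
      refine natDegree_sum_le_of_forall_le _ _ fun j hj => ?_
      refine (natDegree_C_mul_X_pow_le _ _).trans (hmon ?_)
      have := Finset.mem_range.1 hj
      omega
    have hz : (Finset.univ.filter fun s => f s = 0).card ≤ q ^ d := by
      refine (Finset.card_le_card ?_).trans ((Multiset.toFinset_card_le _).trans ((card_roots' g).trans hgd))
      intro s hs
      rw [Multiset.mem_toFinset, mem_roots hg0, IsRoot]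
      have : f s = 0 := by simpa using hs
      rw [← this, hf, hg]
      simp [eval_finsetSum]
    have h1 := Finset.card_filter_add_card_filter_not (s := (Finset.univ : Finset K)) (fun s => f s = 0)
    rw [Finset.card_univ, hcard] at h1
    simp only [ne_eq]
    omega
  · refine st_countH hq hq2 hn ht hd hcard a ha0 f hf hr M hM _ (fun s => s) (fun _ _ h => h) ?_
    intro s hs y hy
    have hfs := (Finset.mem_filter.1 hs).2
    have hs0' := hs0 s hfs
    obtain ⟨h1, h2⟩ := (hMs s (hsep s hfs)).2 y hy
    have hy0 : y ≠ 0 := by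
      rintro rfl
      exact hR0 s hfs h1
    refine ⟨hs0', y⁻¹, ?_, ?_⟩
    · intro h
      have h3 := (hpw y⁻¹ (inv_ne_zero hy0)).2 h
      apply h2
      rw [inv_inv] at h3
      simp [evalEval, h3]
    · rw [hev s y hs0' hy0] at h1
      rcases mul_eq_zero.1 h1 with h | h
      · exact absurd h (inv_ne_zero (mul_ne_zero ha0 hs0'))
      · rw [← sub_eq_zero.1 h, inv_pow, inv_mul_cancel_left₀ (pow_ne_zero _ hy0)]

end geom


lemma num_le_of_sq {a b : ℝ} (hb : 0 ≤ b) (h : a * a ≤ b * b) : a ≤ b := by nlinarith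

set_option maxHeartbeats 1000000 in
lemma num_final (D T q κ L P P' Q E S r A : ℝ) (hT : 4 ≤ T) (hD : 1 ≤ D) (hq : 2 ≤ q)
    (hDq : D + q ≤ T) (hE : T ^ 2 ≤ E) (hQ : Q = P * P') (hP0 : 0 < P) (hPS : P ≤ S) (hSP : S ≤ P')
    (hPq : P' ≤ q * S) (hS : 2 * T ^ 3 ≤ S) (hκ0 : 0 ≤ κ) (hκ : D * κ ≤ P')
    (hY : P' - 2 * D ^ 2 ≤ D * A + 1) (hκA : κ = A + 2 * (D - 1))
    (hL : L * (D * A + 1) ≤ (D - 1) * (κ * P + 2 * (D - 1)))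
    (h1 : Q - T ≤ (T - 1) * r + κ + P' * (L + 2 * (D - 1)))
    (h2 : (T - 1) * r ≤ (Q + 1) * (T - 1) / E - 2 * E * S - (T - 1)) : False := by
  have hS0 : 0 < S := hP0.trans_le hPS
  have hP'0 : 0 < P' := hS0.trans_le hSP
  have hQ0 : 0 < Q := by rw [hQ]; positivity
  have hE0 : 0 < E := by nlinarith
  have hDT : D ≤ T := by linarith
  have hD2 : D ^ 2 ≤ T ^ 2 := by nlinarith
  have hT3 : 4 * T ^ 2 ≤ T ^ 3 := by nlinarith [sq_nonneg T]
  set Y := D * A + 1 with hYd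
  have hY1 : 3 / 2 * T ^ 3 ≤ Y := by linarith
  have hY0 : 0 < Y := by nlinarith [sq_nonneg T]
  -- bound for P' L
  have hDκ : D * κ ≤ Y + 2 * D * (D - 1) := by rw [hκA, hYd]; nlinarith
  have hPL : P' * L ≤ Q * (1 - 1 / D) + 2 * (D - 1) ^ 2 * (P + 1) * (P' / Y) := by
    have e1 : L ≤ (D - 1) * (κ * P + 2 * (D - 1)) / Y := by
      rw [le_div_iff₀ hY0]; exact hL
    have e2 : κ ≤ (Y + 2 * D * (D - 1)) / D := by
      rw [le_div_iff₀ (by linarith)]; linarith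
    have e3 : (D - 1) * (κ * P + 2 * (D - 1)) / Y ≤
        (D - 1) * ((Y + 2 * D * (D - 1)) / D * P + 2 * (D - 1)) / Y := by
      have : 0 ≤ D - 1 := by linarith
      gcongr
    have e4 : P' * ((D - 1) * ((Y + 2 * D * (D - 1)) / D * P + 2 * (D - 1)) / Y) =
        Q * (1 - 1 / D) + 2 * (D - 1) ^ 2 * (P + 1) * (P' / Y) := by
      rw [hQ]
      have : D ≠ 0 := by linarith
      field_simp
      ring
    rw [← e4]
    exact mul_le_mul_of_nonneg_left (e1.trans e3) hP'0.le
  have hPY : P' / Y ≤ 1 + 2 * D ^ 2 / Y := by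
    rw [div_le_iff₀ hY0, add_mul, div_mul_cancel₀ _ hY0.ne']
    linarith
  have hX1 : 2 * (D - 1) ^ 2 * (P + 1) * (P' / Y) ≤ 2 * (D - 1) ^ 2 * (S + 1) + 8 / 3 * T * (S + 1) := by
    have g1 : 2 * (D - 1) ^ 2 * (P + 1) * (P' / Y) ≤ 2 * (D - 1) ^ 2 * (S + 1) * (1 + 2 * D ^ 2 / Y) := by
      gcongr
    have g2 : 2 * (D - 1) ^ 2 * (2 * D ^ 2 / Y) ≤ 8 / 3 * T := by
      rw [← mul_div_assoc, div_le_iff₀ hY0]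
      have g3 : (D - 1) ^ 2 ≤ T ^ 2 := by nlinarith
      have g4 : (D - 1) ^ 2 * D ^ 2 ≤ T ^ 2 * T ^ 2 := by gcongr
      have g5 : 8 / 3 * T * (3 / 2 * T ^ 3) ≤ 8 / 3 * T * Y := by gcongr
      nlinarith
    have g6 : 2 * (D - 1) ^ 2 * (2 * D ^ 2 / Y) * (S + 1) ≤ 8 / 3 * T * (S + 1) := by gcongr
    have g7 : 2 * (D - 1) ^ 2 * (S + 1) * (1 + 2 * D ^ 2 / Y) = 2 * (D - 1) ^ 2 * (S + 1) +
      2 * (D - 1) ^ 2 * (2 * D ^ 2 / Y) * (S + 1) := by ring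
    linarith
  have hκS : κ ≤ q * S := by nlinarith
  have hP2 : 2 * (D - 1) * P' ≤ 2 * (D - 1) * (q * S) := by
    have : 0 ≤ D - 1 := by linarith
    gcongr
  have hDD : (D - 1) * (D - 1 + q) ≤ (T - 3) * (T - 1) := by
    apply mul_le_mul <;> linarith
  have hDS : (D - 1) * (D - 1 + q) * S ≤ (T - 3) * (T - 1) * S := by gcongr
  have hQD : Q * (1 / D) ≤ (T - 1) * r + κ + 2 * (D - 1) * P' + T + 2 * (D - 1) ^ 2 * (P + 1) * (P' / Y) := by
    linarith
  have hED : (T - 1) / E ≤ 1 / D := by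
    rw [div_le_div_iff₀ hE0 (by linarith)]
    nlinarith
  have hQE : Q * ((T - 1) / E) ≤ Q * (1 / D) := by gcongr
  have h3 : (Q + 1) * (T - 1) / E = Q * ((T - 1) / E) + (T - 1) / E := by ring
  have h4 : (T - 1) / E ≤ 1 := by
    rw [div_le_one hE0]; nlinarith
  have h5 : T ^ 2 * S ≤ E * S := by gcongr
  have h6 : (D - 1) ^ 2 ≤ T ^ 2 := by nlinarith
  have h7 : q * S ≤ T * S := by gcongr; linarith
  have h8 : 2 * T ^ 3 * T ≤ S * T := by gcongr
  have h9 : 4 * T ^ 3 ≤ T ^ 3 * T := by nlinarith [sq_nonneg T]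
  have h10 : 4 * S ≤ T * S := by gcongr
  have i1 : 2 * (D - 1) ^ 2 * (S + 1) + 2 * (D - 1) * (q * S) =
    2 * ((D - 1) * (D - 1 + q) * S) + 2 * (D - 1) ^ 2 := by ring
  have i2 : (T - 3) * (T - 1) * S = T ^ 2 * S - 4 * (T * S) + 3 * S := by ring
  have i3 : 8 / 3 * T * (S + 1) = 8 / 3 * (T * S) + 8 / 3 * T := by ring
  have i4 : 2 * T ^ 3 * T = 2 * (T ^ 3 * T) := by ring
  have i5 : 4 * T ≤ T ^ 2 := by nlinarith
  have i6 : S * T = T * S := mul_comm _ _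
  have i7 : 2 * E * S = 2 * (E * S) := by ring
  linarith

set_option maxHeartbeats 2000000 in
/-- Choice of the auxiliary parameters. -/
lemma num_core {K : Type} [Field K] [Fintype K] [DecidableEq K] (p e q n d r : ℕ) [Fact p.Prime] [CharP K p]
    (hq : q = p ^ e) (hq2 : 2 ≤ q) (hcard : Fintype.card K = q ^ n) (hd2 : 2 ≤ d) (hr1 : 1 ≤ r)
    (M : K[X][X]) (s0 y0 : K) (G : Finset K) (hM : M.Monic) (hirr : Irreducible M)
    (hw : StWt 2 (2 * M.natDegree) M) (h0 : M.evalEval s0 y0 = 0)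
    (h1 : (derivative M).evalEval s0 y0 ≠ 0) (hDq : M.natDegree + q ≤ q ^ d)
    (hG : ∀ s ∈ G, (M.map (evalRingHom s)).Separable) (hGc : q ^ n ≤ G.card + q ^ d)
    (hsum : (∑ s ∈ G, (Finset.univ.filter fun y : K => M.evalEval s y = 0).card) ≤ (q ^ d - 1) * r * M.natDegree) :
    (r : ℝ) > ((q : ℝ) ^ n + 1) / (q : ℝ) ^ (d ^ 2)
      - (2 * ((d : ℝ) - 1) * (q : ℝ) ^ (d ^ 2) / ((q : ℝ) ^ d - 1)) * Real.sqrt ((q : ℝ) ^ n) - 1 := by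
  by_contra hcon
  push Not at hcon
  obtain ⟨D, hD⟩ : ∃ D, M.natDegree = D := ⟨_, rfl⟩
  rw [hD] at hw hDq hsum
  have hD1 : 1 ≤ D := by
    rcases Nat.eq_zero_or_pos D with h | h
    · exfalso
      rw [h] at hD
      rw [eq_C_of_natDegree_eq_zero hD] at h1
      simp at h1
    · exact h
  have hT4 : 4 ≤ q ^ d := by
    calc 4 = 2 ^ 2 := by norm_num
      _ ≤ q ^ 2 := Nat.pow_le_pow_left hq2 2
      _ ≤ q ^ d := Nat.pow_le_pow_right (by omega) hd2
  have hTE : (q ^ d) ^ 2 ≤ q ^ (d ^ 2) := by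
    rw [← pow_mul]
    exact Nat.pow_le_pow_right (by omega) (by nlinarith)
  -- real versions
  obtain ⟨T, hT⟩ : ∃ T, q ^ d = T := ⟨_, rfl⟩
  obtain ⟨E, hE⟩ : ∃ E, q ^ (d ^ 2) = E := ⟨_, rfl⟩
  have hTR : (q : ℝ) ^ d = (T : ℝ) := by rw [← hT]; push_cast; rfl
  have hER : (q : ℝ) ^ (d ^ 2) = (E : ℝ) := by rw [← hE]; push_cast; rfl
  rw [hTR, hER] at hcon
  rw [hT] at hT4 hTE hDq hGc hsum
  rw [hE] at hTE
  have hT4R : (4 : ℝ) ≤ T := by exact_mod_cast hT4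
  have hTER : (T : ℝ) ^ 2 ≤ E := by exact_mod_cast hTE
  have hE0 : (0 : ℝ) < E := by nlinarith
  obtain ⟨S, hSd⟩ : ∃ S, Real.sqrt ((q : ℝ) ^ n) = S := ⟨_, rfl⟩
  have hS2 : S ^ 2 = (q : ℝ) ^ n := by
    rw [← hSd]; exact Real.sq_sqrt (by positivity)
  have hS0 : 0 ≤ S := by rw [← hSd]; positivity
  rw [hSd] at hcon
  have hS1 : 1 ≤ S := by
    have : (1 : ℝ) ≤ (q : ℝ) ^ n := one_le_pow₀ (by exact_mod_cast (by omega : 1 ≤ q))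
    nlinarith
  have hd1 : (1 : ℝ) ≤ (d : ℝ) - 1 := by
    have : (2 : ℝ) ≤ d := by exact_mod_cast hd2
    linarith
  have hrR : (1 : ℝ) ≤ r := by exact_mod_cast hr1
  have hT1 : (0 : ℝ) < (T : ℝ) - 1 := by linarith
  have hcon2 : (r : ℝ) ≤ (S ^ 2 + 1) / E - (2 * E / ((T : ℝ) - 1)) * S - 1 := by
    rw [← hS2] at hcon
    refine hcon.trans ?_
    have : (2 * (E : ℝ) / ((T : ℝ) - 1)) * S ≤ (2 * ((d : ℝ) - 1) * E / ((T : ℝ) - 1)) * S := by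
      gcongr
      nlinarith
    linarith
  have hfin : ((T : ℝ) - 1) * r ≤ (S ^ 2 + 1) * ((T : ℝ) - 1) / E - 2 * E * S - ((T : ℝ) - 1) := by
    have := mul_le_mul_of_nonneg_left hcon2 hT1.le
    refine this.trans (le_of_eq ?_)
    field_simp
  have hSbig : 2 * (T : ℝ) ^ 3 ≤ S := by
    have g1 : (2 * (E : ℝ) / ((T : ℝ) - 1)) * S ≤ S ^ 2 / E := by
      have : (S ^ 2 + 1) / (E : ℝ) = S ^ 2 / E + 1 / E := by ring
      have h1E : 1 / (E : ℝ) ≤ 1 := by rw [div_le_one hE0]; nlinarith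
      linarith
    have g2 : 2 * (E : ℝ) / ((T : ℝ) - 1) ≤ S / E := by
      have : S ^ 2 / (E : ℝ) = S / E * S := by ring
      rw [this] at g1
      exact le_of_mul_le_mul_right g1 (by linarith)
    rw [div_le_div_iff₀ hT1 hE0] at g2
    have g3 : (T : ℝ) ^ 2 * T ^ 2 ≤ E * E := by gcongr
    have g4 : 2 * (T : ℝ) ^ 3 * T ≤ S * T := by nlinarith
    exact le_of_mul_le_mul_right g4 (by linarith)
  -- P and P'
  obtain ⟨P, hP⟩ : ∃ P, P = q ^ (n / 2) := ⟨_, rfl⟩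
  obtain ⟨P', hP'⟩ : ∃ P', P' = q ^ (n - n / 2) := ⟨_, rfl⟩
  have hPu : p ^ (e * (n / 2)) = P := by rw [hP, hq, pow_mul]
  have hPv : p ^ (e * (n - n / 2)) = P' := by rw [hP', hq, pow_mul]
  have hPP : q ^ n = P * P' := by
    rw [hP, hP', ← pow_add]; congr 1; omega
  have hPle : P ≤ P' := by
    rw [hP, hP']; exact Nat.pow_le_pow_right (by omega) (by omega)
  have hPle' : P' ≤ q * P := by
    rw [hP, hP', ← pow_succ']; exact Nat.pow_le_pow_right (by omega) (by omega)
  have hP1 : 1 ≤ P := by rw [hP]; exact Nat.one_le_pow _ _ (by omega)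
  have hPR : (P : ℝ) ≤ P' := by exact_mod_cast hPle
  have hPR' : (P' : ℝ) ≤ q * P := by exact_mod_cast hPle'
  have hP1R : (1 : ℝ) ≤ P := by exact_mod_cast hP1
  have hQR : S ^ 2 = (P : ℝ) * P' := by rw [hS2]; exact_mod_cast hPP
  have hPS : (P : ℝ) ≤ S := num_le_of_sq hS0 (by
    rw [← sq S, hQR]; exact mul_le_mul_of_nonneg_left hPR (by linarith))
  have hSP : S ≤ P' := num_le_of_sq (by linarith) (by
    rw [← sq S, hQR]; exact mul_le_mul_of_nonneg_right hPR (by linarith))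
  have hqR : (2 : ℝ) ≤ q := by exact_mod_cast hq2
  have hPqS : (P' : ℝ) ≤ q * S := hPR'.trans (mul_le_mul_of_nonneg_left hPS (by linarith))
  have hDR : (1 : ℝ) ≤ D := by exact_mod_cast hD1
  have hDqR : (D : ℝ) + q ≤ T := by exact_mod_cast hDq
  -- κ, A, L
  obtain ⟨κ, hκ⟩ : ∃ κ, κ = (P' - 1) / D := ⟨_, rfl⟩
  have hκ1 : D * κ ≤ P' - 1 := by rw [hκ]; exact Nat.mul_div_le _ _
  have hκ2 : P' - 1 < D * κ + D := by
    rw [hκ]; have := Nat.lt_mul_div_succ (P' - 1) hD1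
    linarith
  have hP'1 : 1 ≤ P' := hP1.trans hPle
  have hP'big : 2 * T ^ 3 ≤ P' := by
    have : 2 * (T : ℝ) ^ 3 ≤ P' := hSbig.trans hSP
    exact_mod_cast this
  have hDT : D ≤ T := by omega
  have hκbig : 2 * (D - 1) ≤ κ := by
    by_contra hh
    push Not at hh
    have h3 : D * κ ≤ D * (2 * D) := Nat.mul_le_mul_left _ (by omega)
    have h4 : D * D ≤ T * T := Nat.mul_le_mul hDT hDT
    have h5 : 4 * (T * T) ≤ T ^ 3 := by
      rw [pow_succ, sq, mul_comm]; exact Nat.mul_le_mul_left _ hT4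
    have h6 : D * 1 ≤ T * T := Nat.mul_le_mul hDT (by omega)
    have h7 : D * (2 * D) = 2 * (D * D) := by ring
    omega
  obtain ⟨A, hA⟩ : ∃ A, κ = A + 2 * (D - 1) := ⟨κ - 2 * (D - 1), by omega⟩
  obtain ⟨L, hL⟩ : ∃ L, L = (D - 1) * (κ * P + 2 * (D - 1)) / (D * A + 1) := ⟨_, rfl⟩
  have hL1 : L * (D * A + 1) ≤ (D - 1) * (κ * P + 2 * (D - 1)) := by
    rw [hL]; exact Nat.div_mul_le_self _ _
  have hL2 : (D - 1) * (κ * P + 2 * (D - 1)) < (L + 1) * (D * A + 1) := by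
    rw [hL]
    have := Nat.lt_mul_div_succ ((D - 1) * (κ * P + 2 * (D - 1))) (show 0 < D * A + 1 by omega)
    linarith
  have key := st_main (K := K) p (e * (n / 2)) (e * (n - n / 2)) (by rw [hPu, hPv, hcard, hPP])
    (w := 2) (D := D) (A := A) (L := L) hM hirr hD hw s0 y0 h0 h1
    (by rw [hPv, ← hA]; omega)
    (by
      rw [hPu, ← hA]
      obtain ⟨D', rfl⟩ : ∃ D', D = D' + 1 := ⟨D - 1, by omega⟩
      simp only [Nat.add_sub_cancel] at hL2 ⊢
      have : D' * (P * κ + L + 2 * D' + 1) < (D' + 1) * (A + 1) * (L + 1) := by nlinarith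
      calc D' * ((D' + 1) * (P * κ + L + 2 * D' + 1)) = (D' + 1) * (D' * (P * κ + L + 2 * D' + 1)) := by ring
        _ < (D' + 1) * ((D' + 1) * (A + 1) * (L + 1)) := Nat.mul_lt_mul_of_pos_left this (by omega)
        _ = _ := by ring)
    G hG
  rw [← hA, hPv] at key
  have key2 : D * G.card ≤ D * ((T - 1) * r + (κ + P' * (L + 2 * (D - 1)))) := by
    have : D * ((T - 1) * r + (κ + P' * (L + 2 * (D - 1)))) =
      (T - 1) * r * D + D * (κ + P' * (L + 2 * (D - 1))) := by ring
    rw [this]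
    exact key.trans (Nat.add_le_add_right hsum _)
  have key3 := Nat.le_of_mul_le_mul_left key2 hD1
  have key4 : q ^ n ≤ (T - 1) * r + (κ + P' * (L + 2 * (D - 1))) + T := by omega
  have key5 : (S ^ 2) - T ≤ ((T : ℝ) - 1) * r + κ + P' * (L + 2 * ((D : ℝ) - 1)) := by
    have : ((q ^ n : ℕ) : ℝ) ≤ (((T - 1) * r + (κ + P' * (L + 2 * (D - 1))) + T : ℕ) : ℝ) := by
      exact_mod_cast key4
    push_cast [Nat.cast_sub hD1, Nat.cast_sub (show 1 ≤ T by omega)] at this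
    rw [hS2]
    linarith
  refine num_final D T q κ L P P' (S ^ 2) E S r A hT4R hDR hqR hDqR hTER hQR (by linarith) hPS hSP hPqS
    hSbig (Nat.cast_nonneg _) ?_ ?_ ?_ ?_ key5 hfin
  · exact_mod_cast (by omega : D * κ ≤ P')
  · have g1 : P' ≤ D * κ + D := by omega
    have g1R : (P' : ℝ) ≤ D * κ + D := by exact_mod_cast g1
    have g2 : (κ : ℝ) = A + 2 * ((D : ℝ) - 1) := by
      rw [hA]; push_cast [Nat.cast_sub hD1]; ring
    rw [g2] at g1R
    nlinarith
  · rw [hA]; push_cast [Nat.cast_sub hD1]; ring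
  · have : ((L * (D * A + 1) : ℕ) : ℝ) ≤ (((D - 1) * (κ * P + 2 * (D - 1)) : ℕ) : ℝ) := by exact_mod_cast hL1
    push_cast [Nat.cast_sub hD1] at this
    exact this


end st_helpers

/-- Corollary `rchebo`: for a `q`-polynomial of index `t ≥ 1` with
`a_t = 0` and `a_0 ≠ 0` which is `r`-fat with `r > 0`, the integer `r` is large.
`K = F_{q^n}`; the weight of `m` is `dim_{F_q} ker (f - m·x^{q^t})`, encoded as
`Nat.log q` of the kernel cardinality, and `f` is `r`-fat of index `t` when exactly
`r` elements `m` have weight `> 1`. -/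
theorem stmt_5 (p e q n k t r : ℕ) (hp : p.Prime) (he : 1 ≤ e) (hq : q = p ^ e)
    (ht : 1 ≤ t) (htn : t < n) (hkn : k < n)
    (K : Type) [Field K] [Fintype K] (hcard : Fintype.card K = q ^ n)
    (a : ℕ → K) (hak : a k ≠ 0) (hat : a t = 0) (ha0 : a 0 ≠ 0)
    (f : K → K) (hf : f = fun x => ∑ j ∈ Finset.range (k + 1), a j * x ^ q ^ j)
    (d : ℕ) (hd : d = max k t)
    (hr : r = Nat.card {m : K // 1 < Nat.log q (Nat.card {x : K // f x = m * x ^ q ^ t})})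
    (hrpos : 0 < r) :
    (r : ℝ) > ((q : ℝ) ^ n + 1) / (q : ℝ) ^ (d ^ 2)
      - (2 * ((d : ℝ) - 1) * (q : ℝ) ^ (d ^ 2) / ((q : ℝ) ^ d - 1)) *
          Real.sqrt ((q : ℝ) ^ n)
      - 1 := by
  have hfp : Fact p.Prime := ⟨hp⟩
  have hq2 : 2 ≤ q := by
    rw [hq]; exact hp.two_le.trans (Nat.le_self_pow (by omega) p)
  have hn : 1 ≤ n := by omega
  have hch : CharP K p := by
    rw [hq, ← pow_mul] at hcard
    exact charP_of_card_eq_prime_pow hcard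
  have hkt : k ≠ t := fun h => hak (h ▸ hat)
  classical
  obtain ⟨m, hm⟩ : Nonempty {m : K // 1 < Nat.log q (Nat.card {x : K // f x = m * x ^ q ^ t})} := by
    rw [hr] at hrpos
    exact (Nat.card_pos_iff.1 hrpos).1
  obtain ⟨x0, u0, hx0, hu00, hu0, hxu⟩ := u_of_fat hq2 hn hcard f m hm
  have main : ∃ (M : Polynomial (Polynomial K)) (s0 y0 : K) (G : Finset K), M.Monic ∧ Irreducible M ∧
      StWt 2 (2 * M.natDegree) M ∧ M.evalEval s0 y0 = 0 ∧
      (Polynomial.derivative M).evalEval s0 y0 ≠ 0 ∧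
      M.natDegree + q ≤ q ^ d ∧ (∀ s ∈ G, (M.map (Polynomial.evalRingHom s)).Separable) ∧
      q ^ n ≤ G.card + q ^ d ∧
      (∑ s ∈ G, (Finset.univ.filter fun y : K => M.evalEval s y = 0).card)
        ≤ (q ^ d - 1) * r * M.natDegree := by
    rcases lt_or_gt_of_ne hkt with h | h
    · exact st_geom2 hq he hq2 hn ht hd h hcard a ha0 f hf hr x0 u0 hx0 hu00 hu0 hxu
    · exact st_geom1 hq he hq2 hn ht hd h hcard a ha0 hak f hf hr x0 u0 hx0 hu0 hxu
  obtain ⟨M, s0, y0, G, h1, h2, h3, h4, h5, h6, h7, h8, h9⟩ := main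
  have hd2 : 2 ≤ d := by
    by_contra hh
    have hd1 : d = 1 := by omega
    rw [hd1, pow_one] at h6
    have hD0 : M.natDegree = 0 := by omega
    rw [Polynomial.eq_C_of_natDegree_eq_zero hD0] at h5
    simp at h5
  exact num_core p e q n d r hq hq2 hcard hd2 hrpos M s0 y0 G h1 h2 h3 h4 h5 h6 h7 h8 h9
end

section
/- Let q be a prime power and let L_U be an F_q-linear set of rank 4 in PG(1, q^4), i.e., L_U = { ⟨u⟩_{F_{q^4}} : u ∈ U \ {0} } for a 4-dimensional F_q-subspace U of F_{q^4}². If |L_U| = q³ + q² + q + 1, then every point of L_U has weight 1 and L_U is PΓL(2, q^4)-equivalent to { ⟨(x, x^q + δ x^{q³})⟩_{F_{q^4}} : x ∈ F_{q^4}^* } for some δ ∈ F_{q^4} with N_{q^4/q}(δ) ≠ 1, where N_{q^4/q} denotes the norm map from F_{q^4} to F_q. -/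
theorem fr_add {F K : Type} [Field F] [Fintype F] [Field K] [Algebra F K] {q : ℕ}
    (hF : Fintype.card F = q) (x y : K) : (x + y) ^ q = x ^ q + y ^ q := by
  subst hF
  exact map_add (FiniteField.frobeniusAlgHom F K) x y

theorem fr_sub {F K : Type} [Field F] [Fintype F] [Field K] [Algebra F K] {q : ℕ}
    (hF : Fintype.card F = q) (x y : K) : (x - y) ^ q = x ^ q - y ^ q := by
  subst hF
  exact map_sub (FiniteField.frobeniusAlgHom F K) x y

theorem fr_smul {F K : Type} [Field F] [Fintype F] [Field K] [Algebra F K] {q : ℕ}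
    (hF : Fintype.card F = q) (c : F) (y : K) : (c • y) ^ q = c • y ^ q := by
  subst hF
  exact map_smul (FiniteField.frobeniusAlgHom F K) c y

theorem fr_alg {F K : Type} [Field F] [Fintype F] [Field K] [Algebra F K] {q : ℕ}
    (hF : Fintype.card F = q) (c : F) : (algebraMap F K c) ^ q = algebraMap F K c := by
  subst hF
  exact AlgHom.commutes (FiniteField.frobeniusAlgHom F K) c

theorem fr_fix {F K : Type} [Field F] [Fintype F] [Field K] [Algebra F K] {q : ℕ}
    (hF : Fintype.card F = q) (x : K) (hx : x ^ q = x) : ∃ c : F, algebraMap F K c = x := by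
  classical
  by_contra hne
  push Not at hne
  have h1 : 1 < q := hF ▸ Fintype.one_lt_card
  have hP := FiniteField.X_pow_card_sub_X_ne_zero K h1
  have hd := FiniteField.X_pow_card_sub_X_natDegree_eq K h1
  have hle := Polynomial.card_le_degree_of_subset_roots (p := (Polynomial.X ^ q - Polynomial.X : Polynomial K))
    (Z := insert x (Finset.univ.image (algebraMap F K))) (by
      intro y hy
      rw [Polynomial.mem_roots hP, Polynomial.IsRoot.def]
      simp only [Finset.insert_val, Finset.mem_val, Multiset.mem_ndinsert, Finset.mem_image,
        Finset.mem_univ, true_and] at hy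
      simp only [Polynomial.eval_sub, Polynomial.eval_pow, Polynomial.eval_X, sub_eq_zero]
      rcases hy with rfl | ⟨c, rfl⟩
      · exact hx
      · exact fr_alg hF c)
  rw [Finset.card_insert_of_notMem (by simpa using hne),
    Finset.card_image_of_injective _ (FaithfulSMul.algebraMap_injective F K), Finset.card_univ, hF, hd] at hle
  omega

theorem exists_gen {K : Type} [Field K] [Fintype K] {q : ℕ} (hK : Fintype.card K = q ^ 4) :
    ∃ g : K, g ≠ 0 ∧ (∀ n : ℕ, g ^ n = 1 ↔ q ^ 4 - 1 ∣ n) ∧ ∀ x : K, x ≠ 0 → ∃ n : ℕ, x = g ^ n := by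
  classical
  obtain ⟨g, hg⟩ := IsCyclic.exists_generator (α := Kˣ)
  refine ⟨g, g.ne_zero, ?_, ?_⟩
  · intro n
    have ho : orderOf g = q ^ 4 - 1 := by
      rw [orderOf_eq_card_of_forall_mem_zpowers hg, Nat.card_eq_fintype_card, Fintype.card_units, hK]
    rw [← ho, orderOf_dvd_iff_pow_eq_one, ← Units.val_pow_eq_pow_val, Units.val_eq_one]
  · intro x hx
    have := hg (Units.mk0 x hx)
    rw [← mem_powers_iff_mem_zpowers] at this
    obtain ⟨n, hn⟩ := this
    refine ⟨n, ?_⟩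
    have := congrArg Units.val hn
    simpa using this.symm

theorem hilb {K : Type} [Field K] [Fintype K] {q : ℕ} (h2 : 2 ≤ q) (hK : Fintype.card K = q ^ 4)
    (δ : K) (h : δ ^ (1 + q + q ^ 2 + q ^ 3) = 1) : ∃ w : K, w ≠ 0 ∧ w ^ q = δ * w := by
  obtain ⟨g, g0, h1, hg⟩ := exists_gen hK
  have d0 : δ ≠ 0 := by
    rintro rfl
    rw [zero_pow (by positivity)] at h
    exact zero_ne_one h
  obtain ⟨n, rfl⟩ := hg δ d0
  rw [← pow_mul, h1] at h
  have e : q ^ 4 - 1 = (q - 1) * (1 + q + q ^ 2 + q ^ 3) := by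
    obtain ⟨r, rfl⟩ := Nat.exists_eq_add_of_le' h2
    simp only [show r + 2 - 1 = r + 1 by omega]
    apply Nat.sub_eq_of_eq_add
    ring
  rw [e] at h
  obtain ⟨m, rfl⟩ := Nat.dvd_of_mul_dvd_mul_right (by positivity) h
  refine ⟨g ^ m, pow_ne_zero _ g0, ?_⟩
  rw [← pow_mul, ← pow_add]
  congr 1
  obtain ⟨r, rfl⟩ := Nat.exists_eq_add_of_le' h2
  simp only [show r + 2 - 1 = r + 1 by omega]
  ring

theorem exists_y {K : Type} [Field K] [Fintype K] {q : ℕ} (h2 : 2 ≤ q) (hK : Fintype.card K = q ^ 4) :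
    ∃ y : K, y ^ q ^ 2 ≠ y := by
  obtain ⟨g, g0, h1, hg⟩ := exists_gen hK
  refine ⟨g, fun h => ?_⟩
  have hq2 : 2 ≤ q ^ 2 := by nlinarith
  have : g ^ (q ^ 2 - 1) = 1 := by
    apply mul_right_cancel₀ g0
    rw [← pow_succ, Nat.sub_add_cancel (by omega), h, one_mul]
  rw [h1] at this
  have := Nat.le_of_dvd (by omega) this
  have : q ^ 2 < q ^ 4 := Nat.pow_lt_pow_right (by omega) (by norm_num)
  omega

theorem rank4 {F K : Type} [Field F] [Fintype F] [Field K] [Fintype K] [Algebra F K] {q : ℕ}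
    (hF : Fintype.card F = q) (hK : Fintype.card K = q ^ 4) : Module.finrank F K = 4 := by
  have := Module.card_eq_pow_finrank (K := F) (V := K)
  rw [hF, hK] at this
  have h2 : 2 ≤ q := hF ▸ Fintype.one_lt_card
  exact (Nat.pow_right_injective h2 this).symm

theorem artin {F K : Type} [Field F] [Fintype F] [Field K] [Fintype K] [Algebra F K] {q : ℕ}
    (hF : Fintype.card F = q) (hK : Fintype.card K = q ^ 4) :
    ∃ τ : K →ₗ[F] F, ∀ c, τ c = 0 → ∃ t : K, t ^ q - t = c := by
  let D : K →ₗ[F] K := (FiniteField.frobeniusAlgHom F K).toLinearMap - LinearMap.id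
  have hD : ∀ t, D t = t ^ q - t := by intro t; subst hF; rfl
  have hker : LinearMap.ker D = LinearMap.range (Algebra.linearMap F K) := by
    ext x
    rw [LinearMap.mem_ker, hD, sub_eq_zero]
    constructor
    · intro h
      obtain ⟨c, hc⟩ := fr_fix hF x h
      exact ⟨c, hc⟩
    · rintro ⟨c, rfl⟩
      exact fr_alg hF c
  have hk1 : Module.finrank F (LinearMap.ker D) = 1 := by
    rw [hker, LinearMap.finrank_range_of_inj (FaithfulSMul.algebraMap_injective F K), Module.finrank_self]
  have h4 := rank4 hF hK
  have := LinearMap.finrank_range_add_finrank_ker D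
  have hlt : LinearMap.range D < ⊤ := by
    rw [lt_top_iff_ne_top]
    intro h
    rw [h, finrank_top] at this
    omega
  obtain ⟨τ, τ0, hτ⟩ := Submodule.exists_le_ker_of_lt_top _ hlt
  refine ⟨τ, fun c hc => ?_⟩
  have h3 := LinearMap.finrank_range_add_finrank_ker τ
  have hs : LinearMap.range τ = ⊤ := by
    rw [LinearMap.range_eq_top]; exact LinearMap.surjective τ0
  rw [hs, finrank_top, Module.finrank_self] at h3
  have heq := Submodule.eq_of_le_of_finrank_eq hτ (by omega)
  have : c ∈ LinearMap.range D := by rw [heq]; exact hc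
  obtain ⟨t, ht⟩ := this
  exact ⟨t, by rw [← hD, ht]⟩

theorem quad_zero {F K : Type} [Field F] [Fintype F] [Field K] [Fintype K] [Algebra F K] {q : ℕ}
    (hF : Fintype.card F = q) (hK : Fintype.card K = q ^ 4) (τ : K →ₗ[F] F) (w : K) :
    ∃ x : K, x ≠ 0 ∧ τ (w * x ^ (q + 1)) = 0 := by
  classical
  have h4 := rank4 hF hK
  let b : Module.Basis (Fin 4) F K := Module.finBasisOfFinrankEq F K h4
  let P : MvPolynomial (Fin 4) F := ∑ i, ∑ j, MvPolynomial.C (τ (w * (b i * b j ^ q))) *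
    (MvPolynomial.X i * MvPolynomial.X j)
  have hdeg : P.totalDegree < Fintype.card (Fin 4) := by
    rw [Fintype.card_fin]
    refine lt_of_le_of_lt (b := 2) ?_ (by norm_num)
    refine MvPolynomial.totalDegree_finsetSum_le fun i _ => MvPolynomial.totalDegree_finsetSum_le fun j _ => ?_
    refine (MvPolynomial.totalDegree_mul _ _).trans ?_
    rw [MvPolynomial.totalDegree_C, zero_add]
    refine (MvPolynomial.totalDegree_mul _ _).trans ?_
    simp
  have hev : ∀ c : Fin 4 → F, MvPolynomial.eval c P =
      τ (w * (∑ i, c i • b i) ^ (q + 1)) := by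
    intro c
    have hs : (∑ i, c i • b i) ^ q = ∑ i, c i • (b i) ^ q := by
      subst hF
      have := map_sum (FiniteField.frobeniusAlgHom F K) (fun i => c i • b i) Finset.univ
      simp only [map_smul] at this
      exact this
    rw [pow_succ, hs, mul_comm (∑ i, c i • b i ^ q), Finset.sum_mul_sum, Finset.mul_sum, map_sum]
    simp only [P, map_sum, Finset.mul_sum, map_mul, MvPolynomial.eval_C, MvPolynomial.eval_X]
    refine Finset.sum_congr rfl fun i _ => Finset.sum_congr rfl fun j _ => ?_
    rw [smul_mul_smul_comm, mul_smul_comm, map_smul, smul_eq_mul, mul_comm]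
  let p := ringChar F
  have : CharP F p := ringChar.charP F
  have hp : p.Prime := CharP.char_is_prime F p
  have hd := char_dvd_card_solutions p hdeg
  have h0 : MvPolynomial.eval (0 : Fin 4 → F) P = 0 := by
    rw [hev]; simp
  have h1 : 1 < Fintype.card { x : Fin 4 → F // MvPolynomial.eval x P = 0 } :=
    lt_of_lt_of_le hp.one_lt (Nat.le_of_dvd (Fintype.card_pos_iff.2 ⟨⟨0, h0⟩⟩) hd)
  obtain ⟨c, hc⟩ := Fintype.exists_ne_of_one_lt_card h1 ⟨0, h0⟩
  refine ⟨∑ i, c.1 i • b i, ?_, ?_⟩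
  · intro h
    apply hc
    ext i
    exact Fintype.linearIndependent_iff.1 b.linearIndependent c.1 h i
  · rw [← hev]; exact c.2

theorem norm_ne {F K : Type} [Field F] [Fintype F] [Field K] [Fintype K] [Algebra F K] {q : ℕ}
    (hF : Fintype.card F = q) (hK : Fintype.card K = q ^ 4) (δ : K)
    (h : δ ^ (1 + q + q ^ 2 + q ^ 3) = 1) :
    ∃ x t : K, x ≠ 0 ∧ (∀ c : F, algebraMap F K c ≠ t) ∧
      (t * x) ^ q + δ * (t * x) ^ q ^ 3 = t * (x ^ q + δ * x ^ q ^ 3) := by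
  have h2 : 2 ≤ q := hF ▸ Fintype.one_lt_card
  obtain ⟨w, w0, hw⟩ := hilb h2 hK (δ ^ q) (by rw [← pow_mul, mul_comm, pow_mul, h, one_pow])
  obtain ⟨τ, hτ⟩ := artin hF hK
  obtain ⟨y, y0, hy⟩ := quad_zero hF hK τ w
  obtain ⟨t, ht⟩ := hτ _ hy
  have k4 : ∀ z : K, z ^ q ^ 4 = z := by intro z; rw [← hK]; exact FiniteField.pow_card z
  have hw3 : w = δ * w ^ q ^ 3 := by
    rw [← sub_eq_zero]
    have : (w - δ * w ^ q ^ 3) ^ q = 0 := by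
      rw [fr_sub hF, mul_pow, ← pow_mul, ← pow_succ, k4, hw, sub_self]
    exact pow_eq_zero_iff (by omega) |>.1 this
  have fr3 : (t ^ q - t) ^ q ^ 3 = t - t ^ q ^ 3 := by
    have : (t ^ q - t) ^ q ^ 3 = (((t ^ q - t) ^ q) ^ q) ^ q := by
      rw [← pow_mul, ← pow_mul]; congr 1; ring
    rw [this, fr_sub hF, fr_sub hF, fr_sub hF]
    simp only [← pow_mul]
    congr 1
    · conv_rhs => rw [← k4 t]
      congr 1; ring
    · congr 1; ring
  have e1 : w = y⁻¹ ^ (q + 1) * (t ^ q - t) := by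
    rw [ht, inv_pow]; field_simp
  refine ⟨y⁻¹, t, inv_ne_zero y0, ?_, ?_⟩
  · rintro c rfl
    rw [fr_alg hF, sub_self] at ht
    exact mul_ne_zero w0 (pow_ne_zero _ y0) ht.symm
  · set x := y⁻¹ with hx
    have x0 : x ≠ 0 := inv_ne_zero y0
    have e2 : w ^ q ^ 3 = x ^ q ^ 3 * x * (t - t ^ q ^ 3) := by
      rw [e1, mul_pow, fr3]
      congr 1
      rw [← pow_mul, show (q + 1) * q ^ 3 = q ^ 4 + q ^ 3 by ring, pow_add, k4, mul_comm]
    rw [e2, e1] at hw3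
    apply mul_left_cancel₀ x0
    rw [mul_pow, mul_pow]
    rw [pow_succ] at hw3
    linear_combination hw3

theorem semilin {F K : Type} [Field F] [Fintype F] [Field K] [Fintype K] [Algebra F K] {q : ℕ}
    (hF : Fintype.card F = q) (hK : Fintype.card K = q ^ 4) (θ : K) (h1 : θ ^ q ≠ θ)
    (h2 : θ ^ q ^ 2 = θ) (f : K →ₗ[F] K) (hf : ∀ x, f (θ * x) = θ ^ q * f x) :
    ∃ a b : K, ∀ x, f x = a * x ^ q + b * x ^ q ^ 3 := by
  have hq2 : 2 ≤ q := hF ▸ Fintype.one_lt_card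
  obtain ⟨y, hy⟩ := exists_y hq2 hK
  have finj : ∀ x z : K, x ^ q = z ^ q → x = z := by
    intro x z h
    rw [← sub_eq_zero, ← fr_sub hF] at h
    exact sub_eq_zero.1 ((pow_eq_zero_iff (by omega)).1 h)
  have p3 : ∀ x : K, x ^ q ^ 3 = (x ^ q ^ 2) ^ q := by intro x; rw [← pow_mul, ← pow_succ]
  have p2 : ∀ x : K, x ^ q ^ 2 = (x ^ q) ^ q := by intro x; rw [← pow_mul, sq]
  have hy3 : y ^ q ^ 3 - y ^ q ≠ 0 := by
    rw [sub_ne_zero, p3]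
    intro h
    exact hy (finj _ _ h)
  obtain ⟨a, b, e1, e2⟩ : ∃ a b : K, a + b = f 1 ∧ a * y ^ q + b * y ^ q ^ 3 = f y := by
    refine ⟨f 1 - (f y - f 1 * y ^ q) / (y ^ q ^ 3 - y ^ q), (f y - f 1 * y ^ q) / (y ^ q ^ 3 - y ^ q), by ring, ?_⟩
    field_simp
    ring
  refine ⟨a, b, ?_⟩
  let h : K →ₗ[F] K :=
    { toFun := fun x => a * x ^ q + b * x ^ q ^ 3
      map_add' := by
        intro x z
        simp only [p3, p2, fr_add hF]; ring
      map_smul' := by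
        intro c x
        simp only [p3, p2, fr_smul hF, RingHom.id_apply, mul_smul_comm, smul_add] }
  have hh : ∀ x, h x = a * x ^ q + b * x ^ q ^ 3 := fun _ => rfl
  have hθ : ∀ x, h (θ * x) = θ ^ q * h x := by
    intro x
    simp only [hh, mul_pow, p3 θ, h2]; ring
  let E : Submodule F K := LinearMap.eqLocus f h
  have mE : ∀ x, x ∈ E ↔ f x = h x := fun x => Iff.rfl
  have E1 : (1 : K) ∈ E := by rw [mE, hh, one_pow, one_pow, mul_one, mul_one, e1]
  have Ey : y ∈ E := by rw [mE, hh, e2]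
  have Eθ : ∀ x ∈ E, θ * x ∈ E := by
    intro x hx
    rw [mE] at hx ⊢
    rw [hf, hθ, hx]
  have hli : LinearIndependent F ![1, θ * 1, y, θ * y] := by
    have key : ∀ c d : F, algebraMap F K c + algebraMap F K d * θ = 0 → c = 0 ∧ d = 0 := by
      intro c d hcd
      have hd : d = 0 := by
        by_contra hd
        have hd' : algebraMap F K d ≠ 0 := by
          simpa using hd
        have hq := congrArg (· ^ q) hcd
        simp only [fr_add hF, mul_pow, fr_alg hF, zero_pow (show q ≠ 0 by omega)] at hq
        apply h1
        apply mul_left_cancel₀ hd'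
        linear_combination hq - hcd
      subst hd
      simp at hcd
      exact ⟨hcd, rfl⟩
    have fix : ∀ c d : F, (algebraMap F K c + algebraMap F K d * θ) ^ q ^ 2 =
        algebraMap F K c + algebraMap F K d * θ := by
      intro c d
      rw [p2, fr_add hF, mul_pow, fr_alg hF, fr_alg hF, fr_add hF, mul_pow, fr_alg hF, fr_alg hF,
        ← p2, h2]
    rw [Fintype.linearIndependent_iff]
    intro c hc
    simp only [Fin.sum_univ_four, Algebra.smul_def] at hc
    simp at hc
    have hc' : (algebraMap F K (c 0) + algebraMap F K (c 1) * θ) +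
      (algebraMap F K (c 2) + algebraMap F K (c 3) * θ) * y = 0 := by linear_combination hc
    have hz : algebraMap F K (c 2) + algebraMap F K (c 3) * θ = 0 := by
      by_contra hz
      apply hy
      have hq := congrArg (· ^ q ^ 2) hc'
      have add2 : ∀ u v : K, (u + v) ^ q ^ 2 = u ^ q ^ 2 + v ^ q ^ 2 := by
        intro u v; simp only [p2, fr_add hF]
      rw [add2, mul_pow, fix, fix, zero_pow (show q ^ 2 ≠ 0 by positivity)] at hq
      apply mul_left_cancel₀ hz
      linear_combination hq - hc'
    rw [hz, zero_mul, add_zero] at hc'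
    obtain ⟨a0, a1⟩ := key _ _ hc'
    obtain ⟨a2, a3⟩ := key _ _ hz
    intro i
    fin_cases i <;> assumption
  have htop := hli.span_eq_top_of_card_eq_finrank (by rw [rank4 hF hK]; simp)
  have : E = ⊤ := by
    rw [eq_top_iff, ← htop, Submodule.span_le]
    rintro _ ⟨i, rfl⟩
    fin_cases i
    · exact E1
    · exact Eθ _ E1
    · exact Ey
    · exact Eθ _ Ey
  intro x
  have hx : x ∈ E := by rw [this]; trivial
  exact hx

theorem quadroot {F K : Type} [Field F] [Fintype F] [Field K] [Fintype K] [Algebra F K] {q : ℕ}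
    (hF : Fintype.card F = q) (hK : Fintype.card K = q ^ 4) (b c : F)
    (h : ∀ x : F, x ^ 2 + b * x + c ≠ 0) :
    ∃ θ : K, θ ^ 2 + algebraMap F K b * θ + algebraMap F K c = 0 := by
  let P : Polynomial F := Polynomial.X ^ 2 + Polynomial.C b * Polynomial.X + Polynomial.C c
  have hdeg : P.natDegree = 2 := by
    simp only [P]; compute_degree!
  have hmon : P.Monic := by
    simp only [P]; monicity!
  have hirr : Irreducible P := by
    rw [Polynomial.irreducible_iff_roots_eq_zero_of_degree_le_three (by omega) (by omega)]
    rw [Multiset.eq_zero_iff_forall_notMem]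
    intro x hx
    rw [Polynomial.mem_roots hmon.ne_zero] at hx
    apply h x
    simpa [P] using hx
  have : Fact (Irreducible P) := ⟨hirr⟩
  have hfr : Module.finrank F (AdjoinRoot P) = 2 := by
    rw [(AdjoinRoot.powerBasis hmon.ne_zero).finrank, AdjoinRoot.powerBasis_dim, hdeg]
  obtain ⟨i⟩ := FiniteField.nonempty_algHom_of_finrank_dvd (F := F) (K := AdjoinRoot P) (L := K)
    (by rw [hfr, rank4 hF hK]; norm_num)
  refine ⟨i (AdjoinRoot.root P), ?_⟩
  have hr : Polynomial.aeval (AdjoinRoot.root P) P = 0 := by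
    rw [AdjoinRoot.aeval_eq, AdjoinRoot.mk_self]
  have := congrArg i hr
  rw [← Polynomial.aeval_algHom_apply, map_zero] at this
  generalize i (AdjoinRoot.root P) = r at this ⊢
  simpa only [P, map_add, map_mul, map_pow, Polynomial.aeval_X, Polynomial.aeval_C] using this

theorem quadroot' {F K : Type} [Field F] [Fintype F] [Field K] [Fintype K] [Algebra F K] {q : ℕ}
    (hF : Fintype.card F = q) (b c : F) (h : ∀ x : F, x ^ 2 + b * x + c ≠ 0)
    (θ : K) (ht : θ ^ 2 + algebraMap F K b * θ + algebraMap F K c = 0) :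
    θ ^ q ≠ θ ∧ θ ^ q ^ 2 = θ ∧ (θ ^ q) ^ 2 + algebraMap F K b * θ ^ q + algebraMap F K c = 0 := by
  have hq2 : 2 ≤ q := hF ▸ Fintype.one_lt_card
  have n1 : θ ^ q ≠ θ := by
    intro hx
    obtain ⟨x, rfl⟩ := fr_fix hF θ hx
    apply h x
    apply FaithfulSMul.algebraMap_injective F K
    simpa using ht
  have st : ∀ x : K, x ^ 2 + algebraMap F K b * x + algebraMap F K c = 0 →
      (x ^ q) ^ 2 + algebraMap F K b * x ^ q + algebraMap F K c = 0 := by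
    intro x hx
    have := congrArg (· ^ q) hx
    simp only [fr_add hF, mul_pow, fr_alg hF, zero_pow (show q ≠ 0 by omega)] at this
    rw [← this]; ring
  have h1 := st _ ht
  have h2 := st _ h1
  refine ⟨n1, ?_, h1⟩
  have n2 : (θ ^ q) ^ q - θ ^ q ≠ 0 := by
    rw [← fr_sub hF]
    exact pow_ne_zero _ (sub_ne_zero.2 n1)
  rw [sq q, pow_mul, ← sub_eq_zero]
  have e1 : θ + θ ^ q + algebraMap F K b = 0 := by
    apply mul_left_cancel₀ (sub_ne_zero.2 n1)
    linear_combination h1 - ht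
  have e2 : (θ ^ q) ^ q + θ ^ q + algebraMap F K b = 0 := by
    apply mul_left_cancel₀ n2
    linear_combination h2 - h1
  linear_combination e2 - e1

theorem weights {F K : Type} [Field F] [Fintype F] [Field K] [Fintype K] [Algebra F K] {q : ℕ}
    (hF : Fintype.card F = q)
    (U : Submodule F (K × K)) (hU : Module.finrank F U = 4)
    (LU : Set (Submodule K (K × K)))
    (hLU : LU = {W | ∃ u ∈ (U : Set (K × K)), u ≠ 0 ∧ W = Submodule.span K {u}})
    (hcard : Nat.card LU = q ^ 3 + q ^ 2 + q + 1) :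
    ∀ W ∈ LU, Module.finrank F ↥(U ⊓ Submodule.restrictScalars F W) = 1 := by
  classical
  have hq2 : 2 ≤ q := hF ▸ Fintype.one_lt_card
  have cardN : ∀ V : Submodule F (K × K), (Finset.univ.filter fun u : K × K => u ∈ V ∧ u ≠ 0).card =
      q ^ Module.finrank F V - 1 := by
    intro V
    have e : (Finset.univ.filter fun u : K × K => u ∈ V ∧ u ≠ 0) =
        (Finset.univ.filter fun u : K × K => u ∈ V).erase 0 := by
      ext u; simp [and_comm]
    rw [e, Finset.card_erase_of_mem (by simp), ← hF, ← Module.card_eq_pow_finrank (K := F) (V := V),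
      Fintype.card_subtype]
  have fin : LU.Finite := Set.toFinite LU
  let L : Finset (Submodule K (K × K)) := fin.toFinset
  have hL : L.card = q ^ 3 + q ^ 2 + q + 1 := by
    rw [← hcard, Nat.card_coe_set_eq, Set.ncard_eq_toFinset_card LU fin]
  have mL : ∀ W, W ∈ L ↔ ∃ u ∈ U, u ≠ 0 ∧ W = Submodule.span K {u} := by
    intro W; simp [L, hLU]
  have hsum := Finset.card_eq_sum_card_fiberwise (f := fun u : K × K => Submodule.span K {u})
    (s := Finset.univ.filter fun u : K × K => u ∈ U ∧ u ≠ 0) (t := L) (by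
      intro u hu
      simp only [Finset.coe_filter, Finset.mem_univ, true_and, Set.mem_ofPred_eq] at hu
      exact (mL _).2 ⟨u, hu.1, hu.2, rfl⟩)
  have hfib : ∀ W ∈ L, ((Finset.univ.filter fun u : K × K => u ∈ U ∧ u ≠ 0).filter
      fun u => Submodule.span K {u} = W).card =
      q ^ Module.finrank F ↥(U ⊓ Submodule.restrictScalars F W) - 1 := by
    intro W hW
    rw [← cardN]
    congr 1
    ext u
    obtain ⟨v, hv, v0, rfl⟩ := (mL _).1 hW
    simp only [Finset.mem_filter, Finset.mem_univ, true_and, Submodule.mem_inf,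
      Submodule.restrictScalars_mem]
    constructor
    · rintro ⟨⟨h1, h2⟩, h3⟩
      exact ⟨⟨h1, h3 ▸ Submodule.mem_span_singleton_self u⟩, h2⟩
    · rintro ⟨⟨h1, h2⟩, h3⟩
      refine ⟨⟨h1, h3⟩, ?_⟩
      obtain ⟨k, rfl⟩ := Submodule.mem_span_singleton.1 h2
      have k0 : k ≠ 0 := by rintro rfl; simp at h3
      exact Submodule.span_singleton_smul_eq (IsUnit.mk0 k k0) v
  rw [cardN, hU, Finset.sum_congr rfl hfib] at hsum
  have hpos : ∀ W ∈ L, q - 1 ≤ q ^ Module.finrank F ↥(U ⊓ Submodule.restrictScalars F W) - 1 := by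
    intro W hW
    obtain ⟨v, hv, v0, rfl⟩ := (mL _).1 hW
    have : 0 < Module.finrank F ↥(U ⊓ Submodule.restrictScalars F (Submodule.span K {v})) := by
      rw [Module.finrank_pos_iff_exists_ne_zero]
      exact ⟨⟨v, hv, Submodule.mem_span_singleton_self v⟩, fun h => v0 (congrArg Subtype.val h)⟩
    exact Nat.sub_le_sub_right (Nat.le_self_pow this.ne' q) 1
  have htot : ∑ W ∈ L, (q - 1) = q ^ 4 - 1 := by
    rw [Finset.sum_const, hL, smul_eq_mul]
    obtain ⟨r, rfl⟩ := Nat.exists_eq_add_of_le' hq2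
    simp only [show r + 2 - 1 = r + 1 by omega]
    symm
    apply Nat.sub_eq_of_eq_add
    ring
  have heq := (Finset.sum_eq_sum_iff_of_le hpos).1 (htot.trans hsum)
  intro W hW
  have hWL : W ∈ L := by simpa [L] using hW
  have h1 := hpos W hWL
  have h2 := heq W hWL
  have h3 : q ^ 1 = q ^ Module.finrank F ↥(U ⊓ Submodule.restrictScalars F W) := by
    rw [pow_one]; omega
  exact (Nat.pow_right_injective hq2 h3).symm

theorem scat {F K : Type} [Field F] [Field K] [Algebra F K]
    (U : Submodule F (K × K)) 
    (LU : Set (Submodule K (K × K)))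
    (hLU : LU = {W | ∃ u ∈ (U : Set (K × K)), u ≠ 0 ∧ W = Submodule.span K {u}})
    (hw : ∀ W ∈ LU, Module.finrank F ↥(U ⊓ Submodule.restrictScalars F W) = 1)
    (u v : K × K) (hu : u ∈ U) (hv : v ∈ U) (u0 : u ≠ 0) (k : K) (hk : v = k • u) :
    ∃ c : F, v = c • u := by
  have h1 := hw (Submodule.span K {u}) (by rw [hLU]; exact ⟨u, hu, u0, rfl⟩)
  have := (finrank_eq_one_iff_of_nonzero' (K := F)
    (⟨u, hu, Submodule.mem_span_singleton_self u⟩ : ↥(U ⊓ Submodule.restrictScalars F (Submodule.span K {u})))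
    (fun h => u0 (congrArg Subtype.val h))).1 h1
      ⟨v, hv, Submodule.mem_span_singleton.2 ⟨k, hk.symm⟩⟩
  obtain ⟨c, hc⟩ := this
  exact ⟨c, (congrArg Subtype.val hc).symm⟩

def plR {A M : Type} [CommRing A] [AddCommGroup M] [Module A M] (s : Fin 6 → A) (e : Fin 4 → M) :
    Fin 4 → M :=
  ![s 0 • e 1 + s 1 • e 2 + s 2 • e 3, -(s 0 • e 0) + s 3 • e 2 + s 4 • e 3,
    -(s 1 • e 0) - s 3 • e 1 + s 5 • e 3, -(s 2 • e 0) - s 4 • e 1 - s 5 • e 2]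

def plPf {A : Type} [CommRing A] (s : Fin 6 → A) : A := s 0 * s 5 - s 1 * s 4 + s 2 * s 3

def plW {K : Type} [Field K] (u v : K × K) : K := u.1 * v.2 - u.2 * v.1

def plF {A K : Type} [CommRing A] [Field K] [Algebra A K] (s : Fin 6 → A) (e : Fin 4 → K × K) : K :=
  s 0 • plW (e 0) (e 1) + s 1 • plW (e 0) (e 2) + s 2 • plW (e 0) (e 3) + s 3 • plW (e 1) (e 2)
    + s 4 • plW (e 1) (e 3) + s 5 • plW (e 2) (e 3)

theorem plR_map {A M N : Type} [CommRing A] [AddCommGroup M] [Module A M] [AddCommGroup N] [Module A N]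
    (f : M →ₗ[A] N) (s : Fin 6 → A) (e : Fin 4 → M) (k : Fin 4) :
    f (plR s e k) = plR s (fun i => f (e i)) k := by
  fin_cases k <;> simp [plR]

theorem plR_wedge {K : Type} [Field K] (S : Fin 6 → K) (e : Fin 4 → K × K) (hf : plF S e = 0)
    (hp : plPf S = 0) (k l : Fin 4) : plW (plR S e k) (plR S e l) = 0 := by
  have hf' := hf
  have hp' := hp
  simp only [plF, plPf, plW, smul_eq_mul] at hf' hp'
  have anti : ∀ u v : K × K, plW u v = - plW v u := by intro u v; simp only [plW]; ring
  have self : ∀ u : K × K, plW u u = 0 := by intro u; simp only [plW]; ring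
  have h01 : plW (plR S e 0) (plR S e 1) = 0 := by
    simp [plW, plR]
    linear_combination S 0 * hf' - ((e 2).1 * (e 3).2 - (e 2).2 * (e 3).1) * hp'
  have h02 : plW (plR S e 0) (plR S e 2) = 0 := by
    simp [plW, plR]
    linear_combination S 1 * hf' + ((e 1).1 * (e 3).2 - (e 1).2 * (e 3).1) * hp'
  have h03 : plW (plR S e 0) (plR S e 3) = 0 := by
    simp [plW, plR]
    linear_combination S 2 * hf' - ((e 1).1 * (e 2).2 - (e 1).2 * (e 2).1) * hp'
  have h12 : plW (plR S e 1) (plR S e 2) = 0 := by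
    simp [plW, plR]
    linear_combination S 3 * hf' - ((e 0).1 * (e 3).2 - (e 0).2 * (e 3).1) * hp'
  have h13 : plW (plR S e 1) (plR S e 3) = 0 := by
    simp [plW, plR]
    linear_combination S 4 * hf' + ((e 0).1 * (e 2).2 - (e 0).2 * (e 2).1) * hp'
  have h23 : plW (plR S e 2) (plR S e 3) = 0 := by
    simp [plW, plR]
    linear_combination S 5 * hf' - ((e 0).1 * (e 1).2 - (e 0).2 * (e 1).1) * hp'
  fin_cases k <;> fin_cases l <;>
    first
    | exact self _
    | assumption
    | (rw [anti, neg_eq_zero]; assumption)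

theorem plR_alg {F K : Type} [Field F] [Field K] [Algebra F K] (s : Fin 6 → F) (e : Fin 4 → K × K)
    (k : Fin 4) : plR (fun i => algebraMap F K (s i)) e k = plR s e k := by
  fin_cases k <;> simp [plR]

theorem plR_lin {A M : Type} [CommRing A] [AddCommGroup M] [Module A M] (s t : Fin 6 → A) (c : A)
    (e : Fin 4 → M) (k : Fin 4) : plR (fun i => s i - c * t i) e k = plR s e k - c • plR t e k := by
  fin_cases k <;> simp [plR, sub_smul, mul_smul, smul_add, smul_sub] <;> abel

theorem plR_inv {A M : Type} [CommRing A] [AddCommGroup M] [Module A M] (s : Fin 6 → A)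
    (e : Fin 4 → M) (N : Submodule A M) (h : ∀ k, plR s e k ∈ N) (i : Fin 4) : plPf s • e i ∈ N := by
  have i0 : plPf s • e 0 = -(s 5 • plR s e 1) + s 4 • plR s e 2 - s 3 • plR s e 3 := by
    simp [plR, plPf]; module
  have i1 : plPf s • e 1 = s 5 • plR s e 0 - s 2 • plR s e 2 + s 1 • plR s e 3 := by
    simp [plR, plPf]; module
  have i2 : plPf s • e 2 = -(s 4 • plR s e 0) + s 2 • plR s e 1 - s 0 • plR s e 3 := by
    simp [plR, plPf]; module
  have i3 : plPf s • e 3 = s 3 • plR s e 0 - s 1 • plR s e 1 + s 0 • plR s e 2 := by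
    simp [plR, plPf]; module
  have m := fun c k => N.smul_mem c (h k)
  fin_cases i
  · exact i0 ▸ N.sub_mem (N.add_mem (N.neg_mem (m _ _)) (m _ _)) (m _ _)
  · exact i1 ▸ N.add_mem (N.sub_mem (m _ _) (m _ _)) (m _ _)
  · exact i2 ▸ N.sub_mem (N.add_mem (N.neg_mem (m _ _)) (m _ _)) (m _ _)
  · exact i3 ▸ N.add_mem (N.sub_mem (m _ _) (m _ _)) (m _ _)

theorem wedge_smul {K : Type} [Field K] (u v : K × K) (u0 : u ≠ 0) (h : plW u v = 0) :
    ∃ k : K, v = k • u := by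
  simp only [plW] at h
  by_cases h1 : u.1 = 0
  · have h2 : u.2 ≠ 0 := fun h2 => u0 (Prod.ext h1 h2)
    refine ⟨v.2 / u.2, Prod.ext ?_ ?_⟩
    · simp [h1] at h ⊢
      tauto
    · simp [h2]
  · refine ⟨v.1 / u.1, Prod.ext ?_ ?_⟩
    · simp [h1]
    · simp; field_simp; linear_combination h

theorem pf_ne {F K : Type} [Field F] [Field K] [Algebra F K] (U : Submodule F (K × K))
    (hs : ∀ u v : K × K, u ∈ U → v ∈ U → u ≠ 0 → plW u v = 0 → ∃ c : F, v = c • u)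
    (e : Module.Basis (Fin 4) F U) (s : Fin 6 → F) (s0 : s ≠ 0)
    (hf : plF s (fun i => (e i : K × K)) = 0) : plPf s ≠ 0 := by
  intro hp
  have hw : ∀ k l, plW ((plR s e k : U) : K × K) ((plR s e l : U) : K × K) = 0 := by
    intro k l
    have := plR_wedge (fun i => algebraMap F K (s i)) (fun i => (e i : K × K))
      (by rw [← hf]; simp [plF, Algebra.smul_def])
      (by simp only [plPf] at hp ⊢; rw [← map_zero (algebraMap F K), ← hp]; simp) k l
    rw [plR_alg, plR_alg] at this
    have m := plR_map U.subtype s e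
    simp only [Submodule.subtype_apply] at m
    rw [m, m]; exact this
  have hw2 : ∀ k l, plR s e k ≠ 0 → ∃ c : F, plR s e l = c • plR s e k := by
    intro k l h0
    obtain ⟨c, hc⟩ := hs ((plR s e k : U) : K × K) ((plR s e l : U) : K × K) (Subtype.mem _) (Subtype.mem _)
      (by simpa using h0) (hw k l)
    exact ⟨c, Subtype.ext hc⟩
  have hz : ∀ k l, e.coord k (plR s e k) = 0 → e.coord l (plR s e k) = 0 ∨ e.coord k (plR s e l) = 0 := by
    intro k l h
    by_cases h0 : plR s e k = 0
    · left; rw [h0, map_zero]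
    · obtain ⟨c, hc⟩ := hw2 k l h0
      right; rw [hc, map_smul, h, smul_zero]
  apply s0
  have z01 := hz 0 1
  have z02 := hz 0 2
  have z03 := hz 0 3
  have z12 := hz 1 2
  have z13 := hz 1 3
  have z23 := hz 2 3
  simp [plR] at z01 z02 z03 z12 z13 z23
  ext i
  fin_cases i <;> assumption

theorem killer {K : Type} [Field K] (v : Fin 4 → K × K) (h : ∀ k l, plW (v k) (v l) = 0) :
    ∃ w : K × K, w ≠ 0 ∧ ∀ k, plW w (v k) = 0 := by
  by_cases h0 : ∃ k, v k ≠ 0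
  · obtain ⟨k, hk⟩ := h0
    exact ⟨v k, hk, h k⟩
  · push Not at h0
    refine ⟨(1, 0), by simp, fun k => ?_⟩
    rw [h0]; simp [plW]

theorem pencil {F K : Type} [Field F] [Fintype F] [Field K] [Fintype K] [Algebra F K] {q : ℕ}
    (hF : Fintype.card F = q) (hK : Fintype.card K = q ^ 4)
    (U : Submodule F (K × K)) (hU : Module.finrank F U = 4)
    (hs : ∀ u v : K × K, u ∈ U → v ∈ U → u ≠ 0 → plW u v = 0 → ∃ c : F, v = c • u) :
    ∃ θ : K, θ ^ q ≠ θ ∧ θ ^ q ^ 2 = θ ∧ ∃ w z : K × K, plW w z ≠ 0 ∧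
      ∃ f : K →ₗ[F] K, (∀ x, f (θ * x) = θ ^ q * f x) ∧ (∀ u ∈ U, f (plW w u) = plW z u) ∧
        ∀ x, ∃ u ∈ U, plW w u = x := by
  have h4 := rank4 hF hK
  let e : Module.Basis (Fin 4) F U := Module.finBasisOfFinrankEq F U hU
  let e' : Fin 4 → K × K := fun i => (e i : K × K)
  -- the pencil
  let Λ : (Fin 6 → F) →ₗ[F] K :=
    { toFun := fun s => plF s e'
      map_add' := by intro s t; simp only [plF, Pi.add_apply, add_smul]; abel
      map_smul' := by
        intro c s
        simp only [plF, Pi.smul_apply, smul_eq_mul, mul_smul, RingHom.id_apply, smul_add] }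
  have hΛ : ∀ s, Λ s = plF s e' := fun _ => rfl
  have hrk : 1 < Module.finrank F (LinearMap.ker Λ) := by
    have h1 := LinearMap.finrank_range_add_finrank_ker Λ
    have h2 := Submodule.finrank_le (LinearMap.range Λ)
    rw [Module.finrank_fin_fun] at h1
    omega
  have : Nontrivial (LinearMap.ker Λ) := Module.nontrivial_of_finrank_pos (R := F) (by omega)
  obtain ⟨t, t0⟩ := exists_ne (0 : LinearMap.ker Λ)
  obtain ⟨s, hst⟩ := exists_linearIndependent_pair_of_one_lt_finrank hrk t0
  obtain ⟨t, ht⟩ := t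
  obtain ⟨s, hsk⟩ := s
  rw [LinearMap.mem_ker, hΛ] at ht hsk
  have t0' : t ≠ 0 := fun h => t0 (Subtype.ext h)
  have pt : plPf t ≠ 0 := pf_ne U hs e t t0' ht
  have pst : ∀ c : F, plPf (fun i => s i - c * t i) ≠ 0 := by
    intro c
    apply pf_ne U hs e
    · intro h
      have := (LinearIndependent.pair_iff.1 hst) (-c) 1 (by
        apply Subtype.ext
        ext i
        have := congrFun h i
        simp at this ⊢
        linear_combination this)
      exact one_ne_zero this.2
    · have h1 : Λ (s - c • t) = 0 := by rw [map_sub, map_smul, hΛ, hΛ, hsk, ht]; simp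
      exact h1
  let B : F := s 0 * t 5 + t 0 * s 5 - s 1 * t 4 - t 1 * s 4 + s 2 * t 3 + t 2 * s 3
  have hPf : ∀ c : F, plPf (fun i => s i - c * t i) = plPf t * (c ^ 2 + (-B / plPf t) * c + plPf s / plPf t) := by
    intro c
    have : plPf t * (c ^ 2 + (-B / plPf t) * c + plPf s / plPf t) = plPf t * c ^ 2 - B * c + plPf s := by
      field_simp; ring
    rw [this]; simp only [plPf, B]; ring
  have hnr : ∀ c : F, c ^ 2 + (-B / plPf t) * c + plPf s / plPf t ≠ 0 := by
    intro c h
    apply pst c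
    rw [hPf, h, mul_zero]
  obtain ⟨θ, hθ⟩ := quadroot (K := K) hF hK _ _ hnr
  obtain ⟨n1, n2, hθ'⟩ := quadroot' hF _ _ hnr θ hθ
  have getw : ∀ η : K, η ^ 2 + algebraMap F K (-B / plPf t) * η + algebraMap F K (plPf s / plPf t) = 0 →
      ∃ w : K × K, w ≠ 0 ∧ ∀ k, plW w (plR s e' k) = η * plW w (plR t e' k) := by
    intro η hη
    let S : Fin 6 → K := fun i => algebraMap F K (s i) - η * algebraMap F K (t i)
    have hpt : algebraMap F K (plPf t) ≠ 0 := by simpa using pt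
    have hp : plPf S = 0 := by
      have e1 : plPf S = algebraMap F K (plPf t) * η ^ 2 - algebraMap F K B * η + algebraMap F K (plPf s) := by
        simp only [plPf, B, S, map_sub, map_add, map_mul]; ring
      rw [e1, ← mul_zero (algebraMap F K (plPf t)), ← hη, map_div₀, map_div₀, map_neg]
      field_simp; ring
    have hf : plF S e' = 0 := by
      have : plF S e' = plF s e' - η * plF t e' := by
        simp only [plF, S, Algebra.smul_def, Algebra.algebraMap_self, RingHom.id_apply]; ring
      rw [this, ht, hsk]; ring
    obtain ⟨w, w0, hw⟩ := killer (plR S e') (plR_wedge S e' hf hp)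
    refine ⟨w, w0, fun k => ?_⟩
    have h1 := hw k
    have h2 : plR S e' k = plR s e' k - η • plR t e' k := by
      rw [← plR_alg s, ← plR_alg t]
      exact plR_lin _ _ _ _ _
    rw [h2] at h1
    simp only [plW, Prod.fst_sub, Prod.snd_sub, Prod.smul_fst, Prod.smul_snd, smul_eq_mul] at h1 ⊢
    linear_combination h1
  obtain ⟨w, w0, hw⟩ := getw θ hθ
  obtain ⟨z, z0, hz⟩ := getw _ hθ'
  -- functionals
  have both : ∀ w : K × K, w ≠ 0 → ∀ u ∈ U, ∀ v ∈ U, plW w u = 0 → plW w v = 0 → u ≠ 0 → ∃ c : F, v = c • u := by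
    intro w w0 u hu v hv h1 h2 u0
    apply hs u v hu hv u0
    obtain ⟨a, rfl⟩ := wedge_smul w u w0 h1
    obtain ⟨b, rfl⟩ := wedge_smul w v w0 h2
    simp only [plW, Prod.smul_fst, Prod.smul_snd, smul_eq_mul]; ring
  let ev : K × K → U →ₗ[F] K := fun w =>
    { toFun := fun u => plW w u
      map_add' := by intro u v; simp only [plW, Submodule.coe_add, Prod.fst_add, Prod.snd_add]; ring
      map_smul' := by
        intro c u
        simp only [plW, Submodule.coe_smul, Prod.smul_fst, Prod.smul_snd, RingHom.id_apply, smul_sub,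
          mul_smul_comm] }
  have hev : ∀ w (u : U), ev w u = plW w u := fun _ _ => rfl
  let T : (Fin 6 → F) → (Fin 4 → F) →ₗ[F] U := fun s => Fintype.linearCombination F (plR s e)
  have hT : ∀ s ν, T s ν = ∑ k, ν k • plR s e k := fun s ν => Fintype.linearCombination_apply F _ ν
  have Tsurj : ∀ s, plPf s ≠ 0 → Function.Surjective (T s) := by
    intro s hp
    rw [← LinearMap.range_eq_top, eq_top_iff, ← e.span_eq, Submodule.span_le]
    rintro _ ⟨i, rfl⟩
    have := plR_inv s e (LinearMap.range (T s)) (by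
      intro k
      exact ⟨Pi.single k 1, by rw [hT]; simp [Pi.single_apply]⟩) i
    exact (Submodule.smul_mem_iff _ hp).1 this
  have Tinj : ∀ s, plPf s ≠ 0 → Function.Injective (T s) := by
    intro s hp
    exact (LinearMap.injective_iff_surjective_of_finrank_eq_finrank
      (by rw [hU, Module.finrank_fin_fun])).2 (Tsurj s hp)
  have evR : ∀ (w : K × K) (s : Fin 6 → F) (k : Fin 4), ev w (plR s e k) = plW w (plR s e' k) := by
    intro w s k
    have m := plR_map U.subtype s e k
    simp only [Submodule.subtype_apply] at m
    rw [hev, m]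
  have hwT : ∀ ν, ev w (T s ν) = θ * ev w (T t ν) := by
    intro ν
    rw [hT, hT, map_sum, map_sum, Finset.mul_sum]
    refine Finset.sum_congr rfl fun k _ => ?_
    rw [map_smul, map_smul, evR, evR, hw, mul_smul_comm]
  have hzT : ∀ ν, ev z (T s ν) = θ ^ q * ev z (T t ν) := by
    intro ν
    rw [hT, hT, map_sum, map_sum, Finset.mul_sum]
    refine Finset.sum_congr rfl fun k _ => ?_
    rw [map_smul, map_smul, evR, evR, hz, mul_smul_comm]
  have winj : Function.Injective (ev w) := by
    rw [injective_iff_map_eq_zero]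
    intro u hu
    by_contra u0
    obtain ⟨ν, rfl⟩ := Tsurj t pt u
    have h1 : ev w (T s ν) = 0 := by rw [hwT, hu, mul_zero]
    obtain ⟨c, hc⟩ := both w w0 _ (T t ν).2 _ (T s ν).2 hu h1 (by simpa using u0)
    have hc' : T s ν = c • T t ν := Subtype.ext hc
    have : T (fun i => s i - c * t i) ν = 0 := by
      rw [hT]
      simp only [plR_lin, smul_sub, Finset.sum_sub_distrib]
      rw [← hT, hc', hT, Finset.smul_sum, sub_eq_zero]
      exact Finset.sum_congr rfl fun k _ => smul_comm _ _ _
    have ν0 : ν = 0 := (injective_iff_map_eq_zero _).1 (Tinj _ (pst c)) ν this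
    exact u0 (by rw [ν0, map_zero])
  have wsurj : Function.Surjective (ev w) :=
    (LinearMap.injective_iff_surjective_of_finrank_eq_finrank (by rw [hU, h4])).1 winj
  let Φ : U ≃ₗ[F] K := LinearEquiv.ofBijective (ev w) ⟨winj, wsurj⟩
  have hΦ : ∀ u, Φ u = ev w u := fun _ => rfl
  refine ⟨θ, n1, n2, w, z, ?_, (ev z).comp Φ.symm.toLinearMap, ?_, ?_, ?_⟩
  · intro h
    obtain ⟨k, rfl⟩ := wedge_smul w z w0 h
    have k0 : k ≠ 0 := by rintro rfl; simp at z0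
    have hk : ∀ u, ev (k • w) u = k * ev w u := by
      intro u; simp only [hev, plW, Prod.smul_fst, Prod.smul_snd, smul_eq_mul]; ring
    obtain ⟨u, hu⟩ := wsurj 1
    obtain ⟨ν, rfl⟩ := Tsurj t pt u
    have h1 := hzT ν
    rw [hk, hk, hwT, hu, mul_one, mul_one, mul_comm] at h1
    exact n1 (mul_right_cancel₀ k0 h1).symm
  · intro x
    obtain ⟨u, rfl⟩ := wsurj x
    obtain ⟨ν, rfl⟩ := Tsurj t pt u
    rw [← hwT, ← hΦ, ← hΦ]
    simp only [LinearMap.comp_apply, LinearEquiv.coe_coe, LinearEquiv.symm_apply_apply]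
    exact hzT ν
  · intro u hu
    have : plW w u = Φ ⟨u, hu⟩ := rfl
    rw [this]
    simp only [LinearMap.comp_apply, LinearEquiv.coe_coe, LinearEquiv.symm_apply_apply]
    rfl
  · intro x
    obtain ⟨u, rfl⟩ := wsurj x
    exact ⟨u, u.2, rfl⟩

theorem finish {F K : Type} [Field F] [Fintype F] [Field K] [Fintype K] [Algebra F K] {q : ℕ}
    (hF : Fintype.card F = q) (hK : Fintype.card K = q ^ 4)
    (U : Submodule F (K × K)) (w z : K × K) (hwz : plW w z ≠ 0)
    (hsurj : ∀ x, ∃ u ∈ U, plW w u = x)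
    (hsc : ∀ u ∈ U, u ≠ 0 → ∀ k : K, k • u ∈ U → ∃ c : F, algebraMap F K c = k)
    (a b : K) (hf : ∀ u ∈ U, plW z u = a * (plW w u) ^ q + b * (plW w u) ^ q ^ 3)
    (hab : a ≠ 0 ∨ b ≠ 0) :
    ∃ δ : K, δ ^ (1 + q + q ^ 2 + q ^ 3) ≠ 1 ∧
      ∃ σ : K ≃+* K, ∃ g : (K × K) →ₛₗ[(σ : K →+* K)] (K × K), Function.Bijective g ∧
        {W : Submodule K (K × K) | ∃ u ∈ (U : Set (K × K)), u ≠ 0 ∧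
            W = Submodule.span K {g u}}
          = {W | ∃ x : K, x ≠ 0 ∧ W = Submodule.span K {(x, x ^ q + δ * x ^ q ^ 3)}} := by
  have hq2 : 2 ≤ q := hF ▸ Fintype.one_lt_card
  have k4 : ∀ x : K, (x ^ q ^ 3) ^ q = x := by
    intro x; rw [← pow_mul, ← pow_succ, ← hK]; exact FiniteField.pow_card x
  have inj : ∀ u v, plW w u = plW w v → plW z u = plW z v → u = v := by
    intro u v h1 h2
    simp only [plW] at h1 h2 hwz
    apply Prod.ext
    · apply mul_left_cancel₀ hwz
      linear_combination z.1 * h1 - w.1 * h2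
    · apply mul_left_cancel₀ hwz
      linear_combination z.2 * h1 - w.2 * h2
  have wz0 : ∀ y : K × K, plW y 0 = 0 := by intro y; simp [plW]
  have wu0 : ∀ u ∈ U, u ≠ 0 → plW w u ≠ 0 := by
    intro u hu u0 h
    apply u0
    apply inj
    · rw [h, wz0]
    · rw [hf u hu, h, wz0, zero_pow (by omega), zero_pow (by positivity)]; ring
  by_cases ha : a = 0
  · have hb : b ≠ 0 := by tauto
    let g : (K × K) →ₛₗ[((RingEquiv.refl K : K ≃+* K) : K →+* K)] (K × K) :=
      { toFun := fun u => (plW z u / b, plW w u)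
        map_add' := by
          intro u v; simp only [plW, Prod.fst_add, Prod.snd_add, Prod.mk_add_mk]
          apply Prod.ext <;> ring
        map_smul' := by
          intro c u
          simp only [plW, Prod.smul_fst, Prod.smul_snd, smul_eq_mul, Prod.smul_mk]
          apply Prod.ext <;> simp <;> ring }
    have hg : ∀ u, g u = (plW z u / b, plW w u) := fun _ => rfl
    have gi : Function.Injective g := by
      intro u v h
      rw [hg, hg, Prod.mk.injEq, div_left_inj' hb] at h
      exact inj _ _ h.2 h.1
    have gU : ∀ u ∈ U, g u = ((plW w u) ^ q ^ 3, plW w u) := by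
      intro u hu
      rw [hg, hf u hu, ha]
      congr 1
      field_simp; ring
    refine ⟨0, by rw [zero_pow (by positivity)]; exact zero_ne_one, RingEquiv.refl K, g,
      Finite.injective_iff_bijective.1 gi, ?_⟩
    ext W
    simp only [Set.mem_ofPred_eq, zero_mul, add_zero, SetLike.mem_coe]
    constructor
    · rintro ⟨u, hu, u0, rfl⟩
      refine ⟨(plW w u) ^ q ^ 3, pow_ne_zero _ (wu0 u hu u0), ?_⟩
      rw [gU u hu, k4]
    · rintro ⟨x, x0, rfl⟩
      obtain ⟨u, hu, hx⟩ := hsurj (x ^ q)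
      refine ⟨u, hu, ?_, ?_⟩
      · rintro rfl
        rw [wz0] at hx
        exact pow_ne_zero q x0 hx.symm
      · have : (x ^ q) ^ q ^ 3 = x := by
          conv_rhs => rw [← k4 x]
          rw [← pow_mul, ← pow_mul, mul_comm]
        rw [gU u hu, hx, this]
  · let g : (K × K) →ₛₗ[((RingEquiv.refl K : K ≃+* K) : K →+* K)] (K × K) :=
      { toFun := fun u => (plW w u, plW z u / a)
        map_add' := by
          intro u v; simp only [plW, Prod.fst_add, Prod.snd_add, Prod.mk_add_mk]
          apply Prod.ext <;> ring
        map_smul' := by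
          intro c u
          simp only [plW, Prod.smul_fst, Prod.smul_snd, smul_eq_mul, Prod.smul_mk]
          apply Prod.ext <;> simp <;> ring }
    have hg : ∀ u, g u = (plW w u, plW z u / a) := fun _ => rfl
    have gi : Function.Injective g := by
      intro u v h
      rw [hg, hg, Prod.mk.injEq, div_left_inj' ha] at h
      exact inj _ _ h.1 h.2
    have gU : ∀ u ∈ U, g u = (plW w u, (plW w u) ^ q + b / a * (plW w u) ^ q ^ 3) := by
      intro u hu
      rw [hg, hf u hu]
      congr 1
      field_simp
    refine ⟨b / a, ?_, RingEquiv.refl K, g,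
      Finite.injective_iff_bijective.1 gi, ?_⟩
    · intro h
      obtain ⟨x, t, x0, ht, hxt⟩ := norm_ne hF hK _ h
      obtain ⟨u, hu, rfl⟩ := hsurj x
      obtain ⟨v, hv, hv'⟩ := hsurj (t * plW w u)
      have hsm : ∀ y : K × K, plW y (t • u) = t * plW y u := by
        intro y; simp only [plW, Prod.smul_fst, Prod.smul_snd, smul_eq_mul]; ring
      have : t • u = v := by
        apply inj
        · rw [hsm, hv']
        · rw [hsm, hf u hu, hf v hv, hv']
          field_simp at hxt
          linear_combination -hxt
      obtain ⟨c, hc⟩ := hsc u hu (by rintro rfl; exact x0 (wz0 _)) t (this ▸ hv)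
      exact ht c hc
    · ext W
      simp only [Set.mem_ofPred_eq, SetLike.mem_coe]
      constructor
      · rintro ⟨u, hu, u0, rfl⟩
        exact ⟨plW w u, wu0 u hu u0, by rw [gU u hu]⟩
      · rintro ⟨x, x0, rfl⟩
        obtain ⟨u, hu, hx⟩ := hsurj x
        refine ⟨u, hu, ?_, ?_⟩
        · rintro rfl
          rw [wz0] at hx
          exact x0 hx.symm
        · rw [gU u hu, hx]


/-- Corollary `cor:PG1q4`, case (i): an `F_q`-linear set of rank 4 in
`PG(1,q^4)` of maximal size `q^3+q^2+q+1` has all points of weight one and is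
`PΓL(2,q^4)`-equivalent to `{⟨(x, x^q + δ x^{q^3})⟩ : x ≠ 0}` for some `δ` of norm `≠ 1`.
Here `F = F_q`, `K = F_{q^4}`, points of `PG(1,q^4)` are the `K`-lines
`Submodule.span K {u}` of `K × K`, the weight of a point `W` in `L_U` is
`dim_F (U ⊓ W)`, and `PΓL`-equivalence is realised by a bijective `σ`-semilinear map of
`K × K` for a field automorphism `σ` of `K`.  The norm condition is
`δ^{1+q+q^2+q^3} ≠ 1`. -/
theorem stmt_7 (p e q : ℕ) (hp : p.Prime) (he : 1 ≤ e) (hq : q = p ^ e)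
    (F K : Type) [Field F] [Fintype F] [Field K] [Fintype K] [Algebra F K]
    (hF : Fintype.card F = q) (hK : Fintype.card K = q ^ 4)
    (U : Submodule F (K × K)) (hU : Module.finrank F U = 4)
    (LU : Set (Submodule K (K × K)))
    (hLU : LU = {W | ∃ u ∈ (U : Set (K × K)), u ≠ 0 ∧ W = Submodule.span K {u}})
    (hcard : Nat.card LU = q ^ 3 + q ^ 2 + q + 1) :
    (∀ W ∈ LU, Module.finrank F ↥(U ⊓ Submodule.restrictScalars F W) = 1) ∧
    ∃ δ : K, δ ^ (1 + q + q ^ 2 + q ^ 3) ≠ 1 ∧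
      ∃ σ : K ≃+* K, ∃ g : (K × K) →ₛₗ[(σ : K →+* K)] (K × K), Function.Bijective g ∧
        {W : Submodule K (K × K) | ∃ u ∈ (U : Set (K × K)), u ≠ 0 ∧
            W = Submodule.span K {g u}}
          = {W | ∃ x : K, x ≠ 0 ∧ W = Submodule.span K {(x, x ^ q + δ * x ^ q ^ 3)}} := by
  have hw := weights hF U hU LU hLU hcard
  refine ⟨hw, ?_⟩
  have hsc := scat U LU hLU hw
  obtain ⟨θ, n1, n2, w, z, hwz, f, hf, hfU, hsurj⟩ := pencil hF hK U hU (by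
    intro u v hu hv u0 h
    obtain ⟨k, hk⟩ := wedge_smul u v u0 h
    exact hsc u v hu hv u0 k hk)
  obtain ⟨a, b, hab⟩ := semilin hF hK θ n1 n2 f hf
  have hsc' : ∀ u ∈ U, u ≠ 0 → ∀ k : K, k • u ∈ U → ∃ c : F, algebraMap F K c = k := by
    intro u hu u0 k hk
    obtain ⟨c, hc⟩ := hsc u (k • u) hu hk u0 k rfl
    refine ⟨c, ?_⟩
    rw [← algebraMap_smul K c u, ← sub_eq_zero, ← sub_smul] at hc
    exact (sub_eq_zero.1 ((smul_eq_zero.1 hc).resolve_right u0)).symm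
  refine finish hF hK U w z hwz hsurj hsc' a b (fun u hu => by rw [← hfU u hu, hab]) ?_
  by_contra hne
  push Not at hne
  obtain ⟨rfl, rfl⟩ := hne
  have f0 : ∀ x, f x = 0 := by intro x; rw [hab]; ring
  obtain ⟨u, hu, hu1⟩ := hsurj 1
  obtain ⟨v, hv, hv1⟩ := hsurj θ
  have zu := hfU u hu
  have zv := hfU v hv
  rw [f0] at zu zv
  have hvu : v = θ • u := by
    simp only [plW] at hwz zu zv hu1 hv1
    apply Prod.ext
    · apply mul_left_cancel₀ hwz
      simp only [Prod.smul_fst, smul_eq_mul]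
      linear_combination w.1 * zv + z.1 * hv1 - θ * w.1 * zu - θ * z.1 * hu1
    · apply mul_left_cancel₀ hwz
      simp only [Prod.smul_snd, smul_eq_mul]
      linear_combination w.2 * zv + z.2 * hv1 - θ * w.2 * zu - θ * z.2 * hu1
  have u0 : u ≠ 0 := by
    rintro rfl
    simp [plW] at hu1
  obtain ⟨c, rfl⟩ := hsc' u hu u0 θ (hvu ▸ hv)
  exact n1 (fr_alg hF c)
end

section
/- Let q be a prime power. Every 3-club of rank 4 in PG(1, q^4) — that is, every F_q-linear set L_U of rank 4 in PG(1, q^4) having exactly one point of weight 3 and q³ points of weight 1 — is PΓL(2, q^4)-equivalent to { ⟨(x, Tr_{q^4/q}(x))⟩_{F_{q^4}} : x ∈ F_{q^4}^* }, where Tr_{q^4/q}(x) = x + x^q + x^{q²} + x^{q³}. -/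
theorem exists_g {K : Type} [Field K] [Finite K] (u0 u1 : K × K) (h0 : u0 ≠ 0)
    (h1 : u1 ∉ Submodule.span K {u0}) (a x : K) (ha : a ≠ 0) :
    ∃ g : (K × K) →ₛₗ[((RingEquiv.refl K : K ≃+* K) : K →+* K)] (K × K), Function.Bijective g ∧
      g u0 = (a, 0) ∧ g u1 = (x, 1) := by
  obtain ⟨a0, b0⟩ := u0
  obtain ⟨a1, b1⟩ := u1
  have hD : a0 * b1 - a1 * b0 ≠ 0 := by
    intro hD
    apply h1
    rw [Submodule.mem_span_singleton]
    by_cases hz : a0 = 0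
    · have hb : b0 ≠ 0 := by
        rintro rfl
        exact h0 (by simp [hz])
      refine ⟨b1 / b0, ?_⟩
      ext
      · have : a1 = 0 := by
          subst hz
          simpa [hb] using hD
        simp [hz, this]
      · simp [hb]
    · refine ⟨a1 / a0, ?_⟩
      ext
      · simp [hz]
      · simp only [Prod.smul_mk, smul_eq_mul]
        field_simp
        linear_combination -hD
  set D := a0 * b1 - a1 * b0 with hDd
  refine ⟨{ toFun := fun v => ((v.1 * b1 - v.2 * a1) / D * a + (a0 * v.2 - b0 * v.1) / D * x,
              (a0 * v.2 - b0 * v.1) / D)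
            map_add' := ?_
            map_smul' := ?_ }, ?_, ?_, ?_⟩
  · rintro ⟨s, t⟩ ⟨s', t'⟩
    ext <;> simp <;> ring
  · rintro c ⟨s, t⟩
    ext <;> simp <;> ring
  · apply Finite.injective_iff_bijective.mp
    rw [injective_iff_map_eq_zero]
    rintro ⟨s, t⟩ h
    simp only [LinearMap.coe_mk, AddHom.coe_mk, Prod.mk_eq_zero] at h
    obtain ⟨h2, h3⟩ := h
    rw [h3] at h2
    have h4 : s * b1 - t * a1 = 0 := by simpa [ha, hD] using h2
    have h5 : a0 * t - b0 * s = 0 := by simpa [hD] using h3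
    have hs : D * s = 0 := by rw [hDd]; linear_combination a0 * h4 + a1 * h5
    have ht : D * t = 0 := by rw [hDd]; linear_combination b0 * h4 + b1 * h5
    simp only [mul_eq_zero, hD, false_or] at hs ht
    simp [hs, ht]
  · ext
    · simp only [LinearMap.coe_mk, AddHom.coe_mk]
      field_simp
      rw [hDd]; ring
    · simp only [LinearMap.coe_mk, AddHom.coe_mk]
      rw [mul_comm b0 a0, sub_self, zero_div]
  · ext
    · simp only [LinearMap.coe_mk, AddHom.coe_mk]
      field_simp
      rw [hDd]; ring
    · simp only [LinearMap.coe_mk, AddHom.coe_mk]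
      field_simp
      rw [hDd]; ring

/-- Corollary `cor:PG1q4clubs`, first part: every 3-club of rank 4 in
`PG(1,q^4)` — an `F_q`-linear set `L_U` of rank 4 with exactly one point of weight 3 and
`q^3` points of weight 1 — is `PΓL(2,q^4)`-equivalent to
`{⟨(x, Tr_{q^4/q}(x))⟩ : x ≠ 0}` where `Tr_{q^4/q}(x) = x + x^q + x^{q^2} + x^{q^3}`.
Here `F = F_q`, `K = F_{q^4}`, points of `PG(1,q^4)` are the `K`-lines
`Submodule.span K {u}` of `K × K`, the weight of a point `W` in `L_U` is
`dim_F (U ⊓ W)`, and `PΓL`-equivalence is realised by a bijective `σ`-semilinear map of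
`K × K` for a field automorphism `σ` of `K`. -/
theorem stmt_8 (p e q : ℕ) (hp : p.Prime) (he : 1 ≤ e) (hq : q = p ^ e)
    (F K : Type) [Field F] [Fintype F] [Field K] [Fintype K] [Algebra F K]
    (hF : Fintype.card F = q) (hK : Fintype.card K = q ^ 4)
    (U : Submodule F (K × K)) (hU : Module.finrank F U = 4)
    (LU : Set (Submodule K (K × K)))
    (hLU : LU = {W | ∃ u ∈ (U : Set (K × K)), u ≠ 0 ∧ W = Submodule.span K {u}})
    (hone : Nat.card {W : Submodule K (K × K) //
        W ∈ LU ∧ Module.finrank F ↥(U ⊓ Submodule.restrictScalars F W) = 3} = 1)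
    (hmany : Nat.card {W : Submodule K (K × K) //
        W ∈ LU ∧ Module.finrank F ↥(U ⊓ Submodule.restrictScalars F W) = 1} = q ^ 3) :
    ∃ σ : K ≃+* K, ∃ g : (K × K) →ₛₗ[(σ : K →+* K)] (K × K), Function.Bijective g ∧
      {W : Submodule K (K × K) | ∃ u ∈ (U : Set (K × K)), u ≠ 0 ∧
          W = Submodule.span K {g u}}
        = {W | ∃ x : K, x ≠ 0 ∧
            W = Submodule.span K {(x, x + x ^ q + x ^ q ^ 2 + x ^ q ^ 3)}} := by
  classical
  have hq1 : 1 < q := hF ▸ Fintype.one_lt_card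
  have hfr : Module.finrank F K = 4 := by
    have h := Module.card_eq_pow_finrank (K := F) (V := K)
    rw [hF, hK] at h
    exact (Nat.pow_right_injective hq1 h).symm
  have htr : ∀ x : K, algebraMap F K (Algebra.trace F K x) =
      x + x ^ q + x ^ q ^ 2 + x ^ q ^ 3 := by
    intro x
    rw [FiniteField.algebraMap_trace_eq_sum_pow, hfr, Nat.card_eq_fintype_card, hF]
    simp [Finset.sum_range_succ]
  obtain ⟨⟨W, hW, hW3⟩⟩ : Nonempty {W : Submodule K (K × K) //
        W ∈ LU ∧ Module.finrank F ↥(U ⊓ Submodule.restrictScalars F W) = 3} :=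
    (Nat.card_eq_one_iff_unique.mp hone).2
  rw [hLU] at hW
  obtain ⟨u0, hu0, hu0n, rfl⟩ := hW
  -- second vector
  obtain ⟨u1, hu1, hu1W⟩ : ∃ u1 ∈ U, u1 ∉ Submodule.span K {u0} := by
    by_contra! hc
    have : U ⊓ Submodule.restrictScalars F (Submodule.span K {u0}) = U :=
      inf_eq_left.mpr hc
    rw [this] at hW3
    omega
  have hdec : U = (U ⊓ Submodule.restrictScalars F (Submodule.span K {u0})) ⊔
      Submodule.span F {u1} := by
    symm
    apply Submodule.eq_of_le_of_finrank_le
    · refine sup_le inf_le_left ?_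
      rw [Submodule.span_singleton_le_iff_mem]
      exact hu1
    · have : Module.finrank F ↥(U ⊓ Submodule.restrictScalars F (Submodule.span K {u0})) <
        Module.finrank F ↥((U ⊓ Submodule.restrictScalars F (Submodule.span K {u0})) ⊔
          Submodule.span F {u1}) := by
        apply Submodule.finrank_lt_finrank_of_lt
        refine lt_of_le_of_ne le_sup_left ?_
        intro h
        apply hu1W
        have h2 : u1 ∈ U ⊓ Submodule.restrictScalars F (Submodule.span K {u0}) := by
          rw [h]
          exact Submodule.mem_sup_right (Submodule.mem_span_singleton_self u1)
        exact h2.2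
      omega
  -- hyperplane
  let φ : K →ₗ[F] K × K := (LinearMap.toSpanSingleton K (K × K) u0).restrictScalars F
  have hφ : ∀ h, φ h = h • u0 := fun h => rfl
  have hHlt : U.comap φ < ⊤ := by
    rw [lt_top_iff_ne_top]
    intro htop
    let ψ : K →ₗ[F] ↥(U ⊓ Submodule.restrictScalars F (Submodule.span K {u0})) :=
      φ.codRestrict _ (fun c => ⟨by
        have : c ∈ U.comap φ := by rw [htop]; trivial
        exact this, by
        change c • u0 ∈ Submodule.span K {u0}
        exact Submodule.smul_mem _ _ (Submodule.mem_span_singleton_self u0)⟩)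
    have hψ : Function.Injective ψ := by
      intro c d hcd
      have : c • u0 = d • u0 := congrArg Subtype.val hcd
      exact smul_left_injective K hu0n this
    have := LinearMap.finrank_le_finrank_of_injective hψ
    omega
  obtain ⟨f, hf0, hf⟩ := Submodule.exists_le_ker_of_lt_top _ hHlt
  have hnd := traceForm_nondegenerate F K
  obtain ⟨a, rfl⟩ := (LinearMap.BilinForm.toDual (Algebra.traceForm F K) hnd).surjective f
  have ha : a ≠ 0 := by
    rintro rfl
    exact hf0 (map_zero _)
  have hfa : ∀ h : K, h • u0 ∈ U → Algebra.trace F K (h * a) = 0 := by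
    intro h hh
    have : h ∈ U.comap φ := hh
    have h2 := hf this
    rw [LinearMap.mem_ker, LinearMap.BilinForm.toDual_def, Algebra.traceForm_apply] at h2
    rw [mul_comm]
    exact h2
  obtain ⟨x1, hx1⟩ := Algebra.trace_surjective F K 1
  obtain ⟨g, hg, hg0, hg1⟩ := exists_g u0 u1 hu0n hu1W a x1 ha
  have hgK : ∀ (c : K) (v : K × K), g (c • v) = c • g v := fun c v => by
    rw [map_smulₛₗ]; rfl
  have hgF : ∀ (c : F) (v : K × K), g (c • v) = c • g v := fun c v => by
    rw [← algebraMap_smul K c v, hgK, algebraMap_smul]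
  have hgU : ∀ u ∈ U, (g u).2 = algebraMap F K (Algebra.trace F K (g u).1) := by
    intro u hu
    rw [hdec, Submodule.mem_sup] at hu
    obtain ⟨y, ⟨hyU, hyW⟩, z, hz, rfl⟩ := hu
    obtain ⟨c, rfl⟩ := Submodule.mem_span_singleton.mp hz
    obtain ⟨h, rfl⟩ := Submodule.mem_span_singleton.mp hyW
    have := hfa h hyU
    rw [map_add, hgK, hgF, hg0, hg1]
    have h3 : Algebra.trace F K (h * a + c • x1) = c := by
      rw [map_add, map_smul, this, hx1]
      simp
    change h * 0 + c • (1 : K) = algebraMap F K (Algebra.trace F K (h * a + c • x1))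
    rw [h3, mul_zero, zero_add, Algebra.smul_def, mul_one]
  let π : U →ₗ[F] K :=
    { toFun := fun u => (g u).1
      map_add' := fun u v => by
        rw [Submodule.coe_add, map_add]; rfl
      map_smul' := fun c u => by
        rw [Submodule.coe_smul, hgF]; rfl }
  have hπ : Function.Injective π := by
    rw [injective_iff_map_eq_zero]
    rintro ⟨u, hu⟩ h
    have h1 : (g u).1 = 0 := h
    have h2 := hgU u hu
    rw [h1, map_zero, map_zero] at h2
    have : g u = g 0 := by
      rw [map_zero]
      exact Prod.ext h1 h2
    exact Subtype.ext (hg.1 this)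
  have hπs : Function.Surjective π :=
    (LinearMap.injective_iff_surjective_of_finrank_eq_finrank (by rw [hU, hfr])).mp hπ
  refine ⟨RingEquiv.refl K, g, hg, ?_⟩
  ext V
  constructor
  · rintro ⟨u, hu, hun, rfl⟩
    refine ⟨(g u).1, ?_, ?_⟩
    · intro h
      apply hun
      exact congrArg Subtype.val (hπ (a₁ := ⟨u, hu⟩) (a₂ := 0) (by rw [map_zero]; exact h))
    · rw [← htr, ← hgU u hu]
  · rintro ⟨x, hx, rfl⟩
    obtain ⟨⟨u, hu⟩, rfl⟩ := hπs x
    refine ⟨u, hu, ?_, ?_⟩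
    · rintro rfl
      apply hx
      exact map_zero π
    · rw [← htr]
      change Submodule.span K {((g u).1, algebraMap F K (Algebra.trace F K (g u).1))} = _
      rw [← hgU u hu]
end

section
/- Let q = 2^{2s} with s ≥ 1, let w ∈ F_q satisfy w² = w + 1, and let f_w(x) = x^{q^4} + w x^{q³} + w x^q + x ∈ F_{q^5}[x]. Then dim_{F_q} ker(f_w) = 3, and for every m ∈ F_{q^5} with m ≠ 0 one has dim_{F_q} ker(f_w(x) − m·x) ≤ 1. Consequently f_w is a 1-fat polynomial over F_{q^5} of index 0 with maximum weight 3. -/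
open Polynomial in
lemma aux_card {K : Type} [Field K] [Fintype K] (P : K[X]) (hP : P ≠ 0) (d : ℕ)
    (hd : P.natDegree ≤ d) (p : K → Prop) (h : ∀ x, p x → P.eval x = 0) :
    Nat.card {x : K // p x} ≤ d := by
  classical
  rw [Nat.card_eq_fintype_card, Fintype.card_subtype]
  refine le_trans ?_ ((Polynomial.card_roots' P).trans hd)
  refine le_trans (Finset.card_le_card ?_) (Multiset.toFinset_card_le _)
  intro x hx
  simp only [Finset.mem_filter, Finset.mem_univ, true_and] at hx
  simp [hP, h x hx]

lemma aux_hom {K : Type} [Field K] [Fintype K] (F : K →+ K) (p : K → Prop)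
    (h : ∀ x, p (F x)) :
    Fintype.card K ≤ Nat.card {x : K // F x = 0} * Nat.card {y : K // p y} := by
  have h1 := AddSubgroup.card_eq_card_quotient_mul_card_addSubgroup F.ker
  rw [Nat.card_congr (QuotientAddGroup.quotientKerEquivRange F).toEquiv] at h1
  have h2 : Nat.card F.range ≤ Nat.card {y : K // p y} := by
    refine Nat.card_le_card_of_injective
      (fun y : F.range => (⟨y.1, by obtain ⟨x, hx⟩ := y.2; rw [← hx]; exact h x⟩ : {y : K // p y})) ?_
    intro a b hab
    exact Subtype.ext (Subtype.mk.inj hab)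
  rw [← Nat.card_eq_fintype_card, h1, mul_comm]
  exact Nat.mul_le_mul (le_of_eq rfl) h2

open Polynomial in

/-- Theorem `th:3club`: for `q = 2^{2s}` and `w ∈ F_q` with `w² = w + 1`,
the polynomial `f_w(x) = x^{q^4} + w x^{q^3} + w x^q + x` over `K = F_{q^5}` has
`dim_{F_q} ker f_w = 3` and `dim_{F_q} ker (f_w - m·x) ≤ 1` for every `m ≠ 0`;
consequently `f_w` is a 1-fat polynomial of index 0 with maximum weight 3.
Dimensions over `F_q` are encoded as `Nat.log q` of the kernel cardinality. -/
theorem stmt_9 (s : ℕ) (hs : 1 ≤ s) (q : ℕ) (hq : q = 2 ^ (2 * s))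
    (K : Type) [Field K] [Fintype K] (hK : Fintype.card K = q ^ 5)
    (w : K) (hw : w ^ q = w) (hw2 : w ^ 2 = w + 1)
    (f : K → K) (hf : f = fun x => x ^ q ^ 4 + w * x ^ q ^ 3 + w * x ^ q + x) :
    Nat.log q (Nat.card {x : K // f x = 0}) = 3 ∧
    (∀ m : K, m ≠ 0 → Nat.log q (Nat.card {x : K // f x = m * x}) ≤ 1) ∧
    Nat.card {m : K // 1 < Nat.log q (Nat.card {x : K // f x = m * x})} = 1 ∧
    (∃ m : K, 1 < Nat.log q (Nat.card {x : K // f x = m * x}) ∧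
      Nat.log q (Nat.card {x : K // f x = m * x}) = 3) ∧
    (∀ m : K, 1 < Nat.log q (Nat.card {x : K // f x = m * x}) →
      Nat.log q (Nat.card {x : K // f x = m * x}) ≤ 3) := by


  have hq1 : 1 < q := by
    rw [hq]; exact Nat.one_lt_pow (by omega) (by norm_num)
  have hcard : Fintype.card K = 2 ^ (2 * s * 5) := by rw [hK, hq, ← pow_mul]
  haveI : Fact (Nat.Prime 2) := ⟨Nat.prime_two⟩
  haveI hchar : CharP K 2 := charP_of_card_eq_prime_pow hcard
  have h2 : (2 : K) = 0 := by exact_mod_cast CharP.cast_eq_zero K 2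
  have hadd : ∀ x y : K, (x + y) ^ q = x ^ q + y ^ q := by
    intro x y; rw [hq]; exact add_pow_char_pow x y 2 (2 * s)
  have e2 : ∀ x : K, x ^ q ^ 2 = (x ^ q) ^ q := fun x => by rw [← pow_mul]; ring_nf
  have e3 : ∀ x : K, x ^ q ^ 3 = ((x ^ q) ^ q) ^ q := fun x => by
    rw [← pow_mul, ← pow_mul]; ring_nf
  have e4 : ∀ x : K, x ^ q ^ 4 = (((x ^ q) ^ q) ^ q) ^ q := fun x => by
    rw [← pow_mul, ← pow_mul, ← pow_mul]; ring_nf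
  have e5 : ∀ x : K, ((((x ^ q) ^ q) ^ q) ^ q) ^ q = x := fun x => by
    have := FiniteField.pow_card x
    rw [hK] at this
    conv_rhs => rw [← this]
    rw [← pow_mul, ← pow_mul, ← pow_mul, ← pow_mul]; ring_nf
  have hf' : ∀ x, f x = (((x ^ q) ^ q) ^ q) ^ q + w * ((x ^ q) ^ q) ^ q + w * x ^ q + x := by
    intro x; rw [hf]; simp only [e3, e4]
  have hq0 : q ≠ 0 := by omega
  let F : K →+ K :=
    { toFun := f
      map_zero' := by rw [hf']; simp [hq0]
      map_add' := by intro x y; simp only [hf', hadd]; ring }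
  have hFf : ∀ x, F x = f x := fun x => rfl
  -- image
  have hV : ∀ x, (f x ^ q) ^ q + w ^ 2 * f x ^ q + f x = 0 := by
    intro x
    simp only [hf', hadd, mul_pow, hw, e5]
    generalize (((x ^ q) ^ q) ^ q) ^ q = x4
    generalize ((x ^ q) ^ q) ^ q = x3
    generalize (x ^ q) ^ q = x2
    generalize x ^ q = x1
    grind
  have hg : ∀ x, f x = 0 → x ^ q ^ 3 + w ^ 2 * x ^ q ^ 2 + w ^ 2 * x ^ q + x = 0 := by
    intro x hx
    have hx1 : f x ^ q = 0 := by rw [hx]; simp [hq0]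
    rw [e2, e3]
    simp only [hf', hadd, mul_pow, hw, e5] at hx hx1
    revert hx hx1
    generalize (((x ^ q) ^ q) ^ q) ^ q = x4
    generalize ((x ^ q) ^ q) ^ q = x3
    generalize (x ^ q) ^ q = x2
    generalize x ^ q = x1
    intro hx hx1
    grind
  have hlt12 : q < q ^ 2 := by nlinarith
  have hlt13 : q ^ 2 < q ^ 3 := Nat.pow_lt_pow_right hq1 (by norm_num)
  have hVcard : Nat.card {y : K // y ^ q ^ 2 + w ^ 2 * y ^ q + y = 0} ≤ q ^ 2 := by
    have hdeg : (C (w ^ 2) * X ^ q + X : K[X]).degree < (q ^ 2 : ℕ) := by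
      refine lt_of_le_of_lt (degree_add_le _ _) (max_lt ?_ ?_)
      · exact lt_of_le_of_lt (degree_C_mul_X_pow_le _ _) (by exact_mod_cast hlt12)
      · rw [degree_X]; exact_mod_cast hq1.trans hlt12
    refine aux_card (X ^ q ^ 2 + (C (w ^ 2) * X ^ q + X)) (monic_X_pow_add hdeg).ne_zero _ ?_ _ ?_
    · exact natDegree_le_of_degree_le ((degree_add_le _ _).trans (max_le (degree_X_pow_le _) hdeg.le))
    · intro x hx; simp only [eval_add, eval_mul, eval_pow, eval_C, eval_X]; rw [← hx]; ring
  have hker_le : Nat.card {x : K // f x = 0} ≤ q ^ 3 := by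
    have hdeg : (C (w ^ 2) * X ^ q ^ 2 + (C (w ^ 2) * X ^ q + X) : K[X]).degree < (q ^ 3 : ℕ) := by
      refine lt_of_le_of_lt (degree_add_le _ _) (max_lt ?_ ?_)
      · exact lt_of_le_of_lt (degree_C_mul_X_pow_le _ _) (by exact_mod_cast hlt13)
      refine lt_of_le_of_lt (degree_add_le _ _) (max_lt ?_ ?_)
      · exact lt_of_le_of_lt (degree_C_mul_X_pow_le _ _) (by exact_mod_cast hlt12.trans hlt13)
      · rw [degree_X]; exact_mod_cast hq1.trans (hlt12.trans hlt13)
    refine aux_card (X ^ q ^ 3 + (C (w ^ 2) * X ^ q ^ 2 + (C (w ^ 2) * X ^ q + X)))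
      (monic_X_pow_add hdeg).ne_zero _ ?_ _ ?_
    · exact natDegree_le_of_degree_le ((degree_add_le _ _).trans (max_le (degree_X_pow_le _) hdeg.le))
    · intro x hx
      have := hg x hx
      simp only [eval_add, eval_mul, eval_pow, eval_C, eval_X]; rw [← this]; ring
  have hker_ge : q ^ 3 ≤ Nat.card {x : K // f x = 0} := by
    have h := aux_hom F (fun y => y ^ q ^ 2 + w ^ 2 * y ^ q + y = 0)
      (fun x => by simp only [e2]; exact hV x)
    simp only [hFf] at h
    rw [hK] at h
    have h' := h.trans (Nat.mul_le_mul_left _ hVcard)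
    rw [show q ^ 5 = q ^ 3 * q ^ 2 by ring] at h'
    exact Nat.le_of_mul_le_mul_right h' (by positivity)
  have hlog0 : Nat.log q (Nat.card {x : K // f x = 0}) = 3 := by
    rw [le_antisymm hker_le hker_ge, Nat.log_pow hq1]
  have hm : ∀ m : K, m ≠ 0 → Nat.log q (Nat.card {x : K // f x = m * x}) ≤ 1 := by
    intro m hm0
    suffices hs : Nat.card {x : K // f x = m * x} ≤ q by
      calc _ ≤ Nat.log q q := Nat.log_mono_right hs
        _ ≤ 1 := by simpa using (Nat.log_pow hq1 1).le
    obtain ⟨a, ha⟩ : ∃ a, a = m⁻¹ := ⟨_, rfl⟩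
    let α : K := a ^ q ^ 4 + a ^ q ^ 3 + w * a ^ q
    let β : K := w ^ 2 * a ^ q ^ 4 + a ^ q ^ 3 + a + 1
    have hne : ¬ (α = 0 ∧ β = 0) := by
      rintro ⟨h1, h3⟩
      have h4 : α ^ q = 0 := by rw [h1]; simp [hq0]
      have h5 : (α ^ q) ^ q = 0 := by rw [h4]; simp [hq0]
      have h6 : ((α ^ q) ^ q) ^ q = 0 := by rw [h5]; simp [hq0]
      have h7 : (((α ^ q) ^ q) ^ q) ^ q = 0 := by rw [h6]; simp [hq0]
      simp only [α, β, e4, e3, hadd, mul_pow, hw, e5] at h3 h4 h7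
      revert h3 h4 h7
      generalize (((a ^ q) ^ q) ^ q) ^ q = x4
      generalize ((a ^ q) ^ q) ^ q = x3
      generalize (a ^ q) ^ q = x2
      generalize a ^ q = x1
      intro h3 h4 h7
      have : (1 : K) = 0 := by grind
      exact one_ne_zero this
    have hinj : Nat.card {x : K // f x = m * x} ≤ Nat.card {y : K // α * y ^ q + β * y = 0} := by
      refine Nat.card_le_card_of_injective (fun x => ⟨m * x.1, ?_⟩) ?_
      · obtain ⟨x, hx⟩ := x
        show α * (m * x) ^ q + β * (m * x) = 0
        obtain ⟨y, hy⟩ : ∃ y, y = m * x := ⟨_, rfl⟩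
        have hxy : x = a * y := by rw [hy, ha]; field_simp
        have hVy := hV x
        rw [hx, ← hy] at hVy
        rw [← hy] at hx ⊢
        rw [hf', hxy] at hx
        have hVy1 : ((y ^ q) ^ q + w ^ 2 * y ^ q + y) ^ q = 0 := by rw [hVy]; simp [hq0]
        have hVy2 : (((y ^ q) ^ q + w ^ 2 * y ^ q + y) ^ q) ^ q = 0 := by rw [hVy1]; simp [hq0]
        have hww : (w ^ 2) ^ q = w ^ 2 := by rw [← pow_mul, mul_comm, pow_mul, hw]
        simp only [hadd, mul_pow, hww] at hVy1 hVy2 hx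
        simp only [α, β, e4, e3]
        clear hxy hy
        revert hVy hVy1 hVy2 hx
        generalize (((a ^ q) ^ q) ^ q) ^ q = a4
        generalize ((a ^ q) ^ q) ^ q = a3
        generalize (a ^ q) ^ q = a2
        generalize a ^ q = a1
        generalize (((y ^ q) ^ q) ^ q) ^ q = y4
        generalize ((y ^ q) ^ q) ^ q = y3
        generalize (y ^ q) ^ q = y2
        generalize y ^ q = y1
        intro k0 k1 k2 k3
        have r2 : y2 = w ^ 2 * y1 + y := by grind
        have r3 : y3 = w ^ 2 * y1 + w ^ 2 * y := by grind
        have r4 : y4 = y1 + w ^ 2 * y := by grind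
        subst r2 r3 r4
        grind
      · intro x y hxy
        simpa [Subtype.ext_iff, hm0] using hxy
    refine hinj.trans ?_
    refine aux_card (C α * X ^ q + C β * X) ?_ _ ?_ _ ?_
    · intro h0
      apply hne
      have c1 := congrArg (fun P => coeff P q) h0
      have c2 := congrArg (fun P => coeff P 1) h0
      simp [coeff_X, hq1.ne, coeff_X_pow, hq1.ne'] at c1 c2
      exact ⟨c1, c2⟩
    · refine natDegree_add_le_of_degree_le (natDegree_C_mul_X_pow_le _ _) ?_
      exact (natDegree_C_mul_le _ _).trans (by rw [natDegree_X]; exact hq1.le)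
    · intro x hx; simpa using hx
  have hzero : Nat.log q (Nat.card {x : K // f x = 0 * x}) = 3 := by
    simpa only [zero_mul] using hlog0
  have hiff : ∀ m : K, 1 < Nat.log q (Nat.card {x : K // f x = m * x}) → m = 0 := by
    intro m h
    by_contra h0
    exact absurd (hm m h0) (by omega)
  refine ⟨hlog0, hm, ?_, ⟨0, by rw [hzero]; norm_num, hzero⟩, ?_⟩
  · rw [Nat.card_eq_one_iff_exists]
    refine ⟨⟨0, by rw [hzero]; norm_num⟩, ?_⟩
    rintro ⟨m, h⟩
    exact Subtype.ext (hiff m h)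
  · intro m h
    rw [hiff m h, hzero]
end
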